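/- Suppose 0 < 1/n < 1/q ≪ ε ≪ ε' ≪ 1/t, 1/k and k ∈ ℕ∖{1}. Suppose P = P(k−1, a) is an (ε, a, d_{a,k})-equitable partition of a k-graph H on a vertex set V with |V| = n and a ∈ [t]^{k−1}. Then, for a set Q chosen uniformly at random from the q-element subsets of V, with probability at least 1 − e^{−ε³q} there exists an (ε', a, d_{a,k})-equitable family of partitions of the induced k-graph H[Q]. -/

import Mathlib

namespace HypReg

open Finset

attribute [local instance 10] Classical.propDecidable

noncomputable section

variable {V : Type*} [DecidableEq V]

/-- Representation of a 1-graph: the set of singletons of `U`. -/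
def sing (U : Finset V) : Finset (Finset V) :=
  U.image fun v => ({v} : Finset V)

/-- `Kset W j i B`: the i-element subsets of `W` all of whose j-element subsets lie in `B`. -/
def Kset (W : Finset V) (j i : ℕ) (B : Finset (Finset V)) : Finset (Finset V) :=
  (W.powersetCard i).filter fun S => ∀ T ∈ S.powersetCard j, T ∈ B

/-- Clique operator which, at level 1, uses the ambient family `cr` of crossing i-sets. -/
def KsetC (W : Finset V) (cr : Finset (Finset V)) (j i : ℕ) (B : Finset (Finset V)) :
    Finset (Finset V) :=
  if j = 1 then cr.filter fun S => ∀ v ∈ S, ({v} : Finset V) ∈ B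
  else Kset W j i B

/-- `A` (a (j+1)-graph) is (ε,d)-regular with respect to the j-graph `B` (plain clique sets). -/
def RegPair (W : Finset V) (j : ℕ) (ε d : ℝ) (A B : Finset (Finset V)) : Prop :=
  ∀ Q ⊆ B, ε * ((Kset W j (j+1) B).card : ℝ) ≤ ((Kset W j (j+1) Q).card : ℝ) →
    |((A ∩ Kset W j (j+1) Q).card : ℝ) - d * ((Kset W j (j+1) Q).card : ℝ)|
      ≤ ε * ((Kset W j (j+1) Q).card : ℝ)

/-- (ε,d)-regularity with crossing-aware clique sets. -/
def RegPairC (W : Finset V) (cr : Finset (Finset V)) (j : ℕ) (ε d : ℝ)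
    (A B : Finset (Finset V)) : Prop :=
  ∀ Q ⊆ B, ε * ((KsetC W cr j (j+1) B).card : ℝ) ≤ ((KsetC W cr j (j+1) Q).card : ℝ) →
    |((A ∩ KsetC W cr j (j+1) Q).card : ℝ) - d * ((KsetC W cr j (j+1) Q).card : ℝ)|
      ≤ ε * ((KsetC W cr j (j+1) Q).card : ℝ)

/-- Relative density `d(A | B)` of the (j+1)-graph `A` w.r.t. the j-graph `B`. -/
def dens (W : Finset V) (cr : Finset (Finset V)) (j : ℕ) (A B : Finset (Finset V)) : ℝ :=
  if (KsetC W cr j (j+1) B).card = 0 then 0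
  else ((A ∩ KsetC W cr j (j+1) B).card : ℝ) / ((KsetC W cr j (j+1) B).card : ℝ)

/-- `H` is a k-graph on the vertex set `W`. -/
def IsKGraph (W : Finset V) (k : ℕ) (H : Finset (Finset V)) : Prop :=
  ∀ e ∈ H, e ⊆ W ∧ e.card = k

/-- symmetric difference of two hypergraphs -/
def sd (A B : Finset (Finset V)) : Finset (Finset V) := (A \ B) ∪ (B \ A)

/-- A (candidate) family of partitions: the ground set, the class of each vertex and,
for each level `j ≥ 2`, the class of each crossing j-set. -/
structure PartFam (V : Type*) [DecidableEq V] where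
  gnd : Finset V
  vClass : V → Finset V
  cls : ℕ → Finset V → Finset (Finset V)

namespace PartFam

variable (F : PartFam V)

/-- crossing i-sets -/
def cross (i : ℕ) : Finset (Finset V) :=
  (F.gnd.powersetCard i).filter fun S =>
    ∀ u ∈ S, ∀ v ∈ S, u ≠ v → F.vClass u ≠ F.vClass v

/-- the level-j polyad of a vertex set `J` -/
def polyad (j : ℕ) (J : Finset V) : Finset (Finset V) :=
  if j = 1 then sing (J.sup F.vClass) else (J.powersetCard j).sup (F.cls j)

/-- the clique set `K_j(P̂^{(j-1)}(J))` of the (j−1)-polyad of a crossing j-set `J` -/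
def polyCliques (j : ℕ) (J : Finset V) : Finset (Finset V) :=
  KsetC F.gnd (F.cross j) (j-1) j (F.polyad (j-1) J)

/-- `F` is a family of partitions `P(k−1, a)`. -/
def IsFamily (k : ℕ) (a : ℕ → ℕ) : Prop :=
  (∀ v ∈ F.gnd, v ∈ F.vClass v) ∧
  (∀ v ∈ F.gnd, F.vClass v ⊆ F.gnd) ∧
  (∀ u ∈ F.gnd, ∀ v ∈ F.gnd, u ∈ F.vClass v → F.vClass u = F.vClass v) ∧
  (F.gnd.image F.vClass).card = a 1 ∧ k ≤ a 1 ∧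
  ∀ j, 2 ≤ j → j ≤ k - 1 →
    (∀ J ∈ F.cross j, J ∈ F.cls j J) ∧
    (∀ J ∈ F.cross j, ∀ I ∈ F.cls j J, F.cls j I = F.cls j J) ∧
    (∀ J ∈ F.cross j, F.cls j J ⊆ F.polyCliques j J) ∧
    (∀ J ∈ F.cross j, F.polyCliques j J ⊆ F.cross j) ∧
    (∀ J ∈ F.cross j, ((F.polyCliques j J).image (F.cls j)).card = a j)

/-- the regularity condition in the definition of an equitable family of partitions:
all polyad complexes of crossing k-sets are (ε, (1/a_2, …, 1/a_{k−1}))-regular. -/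
def PolyadReg (k : ℕ) (a : ℕ → ℕ) (ε : ℝ) : Prop :=
  ∀ K ∈ F.cross k, ∀ j, 2 ≤ j → j ≤ k - 1 → ∀ J ∈ K.powersetCard j,
    RegPairC F.gnd (F.cross j) (j-1) ε (1 / (a j : ℝ)) (F.polyad j K) (F.polyad (j-1) J)

/-- `(η, ε, a, λ)`-equitable family of partitions -/
def IsEquitable (k : ℕ) (a : ℕ → ℕ) (η ε lam : ℝ) : Prop :=
  1 ≤ η * (a 1 : ℝ) ∧
  (∀ v ∈ F.gnd, |((F.vClass v).card : ℝ) - (F.gnd.card : ℝ) / (a 1 : ℝ)|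
      ≤ lam * (F.gnd.card : ℝ) / (a 1 : ℝ)) ∧
  F.PolyadReg k a ε

/-- `(η, ε, a)`-equitable family of partitions (classes of size ⌊n/a₁⌋ or ⌊n/a₁⌋+1) -/
def IsEquitableE (k : ℕ) (a : ℕ → ℕ) (η ε : ℝ) : Prop :=
  1 ≤ η * (a 1 : ℝ) ∧
  (∀ v ∈ F.gnd, (F.vClass v).card = F.gnd.card / a 1 ∨
      (F.vClass v).card = F.gnd.card / a 1 + 1) ∧
  F.PolyadReg k a ε

/-- `G` is perfectly ε-regular with respect to `F`. -/
def PerfectlyRegular (k : ℕ) (ε : ℝ) (G : Finset (Finset V)) : Prop :=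
  ∀ K ∈ F.cross k, ∃ d : ℝ, 0 ≤ d ∧
    RegPairC F.gnd (F.cross k) (k-1) ε d G (F.polyad (k-1) K)

end PartFam

/-- `a` is a T-bounded vector of length k−1. -/
def BoundedVec (k T : ℕ) (a : ℕ → ℕ) : Prop := ∀ j, 1 ≤ j → j ≤ k - 1 → a j ≤ T

/-- level-j refinement `F^{(j)} ≺ P^{(j)}` between two families of partitions -/
def RefinesAt (F P : PartFam V) (j : ℕ) : Prop :=
  if j = 1 then ∀ v ∈ F.gnd, F.vClass v ⊆ P.vClass v
  else ∀ I ∈ F.cross j,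
    (∃ J ∈ P.cross j, F.cls j I ⊆ P.cls j J) ∨ ∀ S ∈ F.cls j I, S ∉ P.cross j

/-- level-j approximate refinement `F^{(j)} ≺_ν P^{(j)}` -/
def RefinesApproxAt (F P : PartFam V) (j : ℕ) (ν : ℝ) : Prop :=
  if j = 1 then
    ∃ f : Finset V → Finset V,
      (∀ v ∈ F.gnd, f (F.vClass v) ∈ F.gnd.image P.vClass) ∧
      ∑ C ∈ F.gnd.image F.vClass, ((C \ f C).card : ℝ) ≤ ν * (F.gnd.card : ℝ)
  else
    ∃ f : Finset (Finset V) → Finset (Finset V),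
      (∀ I ∈ F.cross j,
        f (F.cls j I) ∈ ((P.cross j).image (P.cls j)) ∪ {F.cross j \ P.cross j}) ∧
      ∑ C ∈ (F.cross j).image (F.cls j), ((C \ f C).card : ℝ) ≤ ν * ((F.cross j).card : ℝ)

/-- The address space: a base set (of class indices) together with a labelling of its subsets. -/
abbrev Addr := Finset ℕ × (Finset ℕ → ℕ)

/-- `x` is an element of the address space `Â(l, j, a)`. -/
def IsAddress (l j : ℕ) (a : ℕ → ℕ) (x : Addr) : Prop :=
  x.1.card = l ∧ (∀ i ∈ x.1, 1 ≤ i ∧ i ≤ a 1) ∧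
  (∀ L : Finset ℕ, L ⊆ x.1 → 2 ≤ L.card → L.card ≤ j → 1 ≤ x.2 L ∧ x.2 L ≤ a L.card) ∧
  (∀ L : Finset ℕ, ¬(L ⊆ x.1 ∧ 2 ≤ L.card ∧ L.card ≤ j) → x.2 L = 0)

/-- restriction `ŷ ≤ x̂` of an address to the base `B`, keeping levels up to `j`. -/
def restrictA (x : Addr) (j : ℕ) (B : Finset ℕ) : Addr :=
  (B, fun L => if L ⊆ B ∧ 2 ≤ L.card ∧ L.card ≤ j then x.2 L else 0)

/-- `d` is a density function of `Â(k, k−1, a)`. -/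
def DensityFun (k : ℕ) (a : ℕ → ℕ) (d : Addr → ℝ) : Prop :=
  ∀ x : Addr, IsAddress k (k-1) a x → 0 ≤ d x ∧ d x ≤ 1

/-- A family of partitions together with an `a`-labelling. -/
structure LabFam (V : Type*) [DecidableEq V] extends PartFam V where
  vIdx : V → ℕ
  lbl : ℕ → Finset V → ℕ

namespace LabFam

variable (F : LabFam V)

/-- `F` is a family of partitions with a legitimate `a`-labelling. -/
def IsLabeled (k : ℕ) (a : ℕ → ℕ) : Prop :=
  F.toPartFam.IsFamily k a ∧
  (∀ v ∈ F.gnd, 1 ≤ F.vIdx v ∧ F.vIdx v ≤ a 1) ∧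
  (∀ u ∈ F.gnd, ∀ v ∈ F.gnd, (F.vIdx u = F.vIdx v ↔ F.vClass u = F.vClass v)) ∧
  ∀ j, 2 ≤ j → j ≤ k - 1 →
    (∀ I ∈ F.toPartFam.cross j, 1 ≤ F.lbl j I ∧ F.lbl j I ≤ a j) ∧
    (∀ I ∈ F.toPartFam.cross j, ∀ I' ∈ F.cls j I, F.lbl j I' = F.lbl j I) ∧
    (∀ I ∈ F.toPartFam.cross j, ∀ I' ∈ F.toPartFam.cross j,
      F.toPartFam.polyad (j-1) I = F.toPartFam.polyad (j-1) I' →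
      F.lbl j I = F.lbl j I' → F.cls j I = F.cls j I')

/-- the address `x̂(L)` (up to level j) of a crossing set `L` -/
def addrOf (j : ℕ) (L : Finset V) : Addr :=
  (L.image F.vIdx,
   fun M => if M ⊆ L.image F.vIdx ∧ 2 ≤ M.card ∧ M.card ≤ j
     then F.lbl M.card (L.filter fun v => F.vIdx v ∈ M) else 0)

/-- the part `P^{(j)}(x̂, b)` -/
def partAt (j : ℕ) (x : Addr) (b : ℕ) : Finset (Finset V) :=
  if j ≤ 1 then (if x.1 = {b} then sing (F.gnd.filter fun v => F.vIdx v = b) else ∅)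
  else (F.toPartFam.cross j).filter fun I => F.addrOf (j-1) I = x ∧ F.lbl j I = b

/-- the polyad `P̂^{(j)}(x̂)` -/
def polyAt (j : ℕ) (x : Addr) : Finset (Finset V) :=
  if j = 1 then sing (F.gnd.filter fun v => F.vIdx v ∈ x.1)
  else (x.1.powersetCard j).sup fun B => F.partAt j (restrictA x (j-1) B) (x.2 B)

/-- `F` is an `(ε, d)`-partition of `H`. -/
def IsDensPartition (k : ℕ) (a : ℕ → ℕ) (ε : ℝ) (d : Addr → ℝ)
    (H : Finset (Finset V)) : Prop :=
  ∀ x : Addr, IsAddress k (k-1) a x →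
    RegPairC F.gnd (F.toPartFam.cross k) (k-1) ε (d x) H (F.polyAt (k-1) x)

/-- `F` is an `(ε, a, d)`-equitable partition of `H`. -/
def IsEquitPartition (k : ℕ) (a : ℕ → ℕ) (ε : ℝ) (d : Addr → ℝ)
    (H : Finset (Finset V)) : Prop :=
  F.IsLabeled k a ∧ F.toPartFam.IsEquitableE k a (1 / (a 1 : ℝ)) ε ∧
  F.IsDensPartition k a ε d H

end LabFam

/-- An ℓ-partite complex: vertex classes and, for each level, a partite graph. -/
structure Cx (V : Type*) [DecidableEq V] (l : ℕ) where
  C : Fin l → Finset V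
  G : ℕ → Finset (Finset V)

namespace Cx

variable {l : ℕ} (X : Cx V l)

def gnd : Finset V := Finset.univ.sup X.C

/-- crossing i-sets with respect to the classes of `X` -/
def cross (i : ℕ) : Finset (Finset V) :=
  (X.gnd.powersetCard i).filter fun S => ∀ t : Fin l, (S ∩ X.C t).card ≤ 1

/-- restriction of the level-j graph to the classes indexed by `L` -/
def restr (j : ℕ) (L : Finset (Fin l)) : Finset (Finset V) :=
  if j = 1 then sing (L.sup X.C) else (X.G j).filter fun e => e ⊆ L.sup X.C

/-- `X` is a complex with levels up to `k`. -/
def IsComplex (k : ℕ) : Prop :=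
  (∀ s t : Fin l, s ≠ t → Disjoint (X.C s) (X.C t)) ∧
  (∀ j, 2 ≤ j → j ≤ k → X.G j ⊆ X.cross j) ∧
  (∀ j, 3 ≤ j → j ≤ k → X.G j ⊆ Kset X.gnd (j-1) j (X.G (j-1)))

/-- `X` is an (ε, (d_2, …, d_k))-regular complex. -/
def IsRegular (k : ℕ) (ε : ℝ) (d : ℕ → ℝ) : Prop :=
  ∀ j, 2 ≤ j → j ≤ k → ∀ L ∈ (Finset.univ : Finset (Fin l)).powersetCard j,
    RegPairC X.gnd (X.cross j) (j-1) ε (d j) (X.G j) (X.restr (j-1) L)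

/-- The restricted complex `X[L]` is (ε, (d_2, …, d_{k−1}, p))-regular. -/
def RestrRegular (k : ℕ) (ε : ℝ) (d : ℕ → ℝ) (L : Finset (Fin l)) (p : ℝ) : Prop :=
  ∀ j, 2 ≤ j → j ≤ k → ∀ L' ∈ L.powersetCard j,
    RegPairC X.gnd (X.cross j) (j-1) ε (if j = k then p else d j)
      (X.restr j L) (X.restr (j-1) L')

/-- clique set `K_i` of the level-j graph of the complex (level 1: crossing sets). -/
def KsetLvl (j i : ℕ) : Finset (Finset V) :=
  if j ≤ 1 then X.cross i else Kset X.gnd j i (X.G j)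

end Cx

/-- `eCL`, `mCL` satisfy the counting lemma of Kohayakawa–Rödl–Skokan. -/
def CountingProp (eCL : ℝ → ℝ → ℕ → ℕ → ℝ) (mCL : ℝ → ℝ → ℕ → ℕ → ℕ) : Prop :=
  ∀ γ d₀ : ℝ, 0 < γ → 0 < d₀ → ∀ k l : ℕ, 2 ≤ k → k ≤ l →
    (0 < eCL γ d₀ k l ∧ eCL γ d₀ k l ≤ 1) ∧
    ∀ (V₀ : Type) [DecidableEq V₀], ∀ (X : Cx V₀ l) (m : ℕ) (lam ε : ℝ) (d : ℕ → ℝ),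
      0 ≤ lam → lam < 1/4 → 0 < ε → ε ≤ eCL γ d₀ k l → mCL γ d₀ k l ≤ m →
      (∀ j, 2 ≤ j → j ≤ k → d₀ ≤ d j) →
      X.IsComplex k →
      (∀ i, |((X.C i).card : ℝ) - (m : ℝ)| ≤ lam * m) →
      X.IsRegular k ε d →
      |((Kset X.gnd k l (X.G k)).card : ℝ) -
        (∏ j ∈ Finset.Icc 2 k, d j ^ (l.choose j)) * ∏ i, ((X.C i).card : ℝ)|
        ≤ γ * ((∏ j ∈ Finset.Icc 2 k, d j ^ (l.choose j)) * ∏ i, ((X.C i).card : ℝ))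

/-- `eRI` is a legitimate function for defining regularity instances. -/
def GoodERI (eRI : ℕ → ℕ → ℝ) : Prop :=
  (∀ t k : ℕ, 1 ≤ t → 2 ≤ k → 0 < eRI t k ∧ eRI t k ≤ 1) ∧
  (∀ k t t' : ℕ, 1 ≤ t → t ≤ t' → eRI t' k ≤ eRI t k) ∧
  (∀ t k k' : ℕ, 2 ≤ k → k ≤ k' → eRI t k' ≤ eRI t k) ∧
  (∀ k : ℕ, Filter.Tendsto (fun t => eRI t k) Filter.atTop (nhds 0)) ∧
  ∃ (eCL : ℝ → ℝ → ℕ → ℕ → ℝ) (mCL : ℝ → ℝ → ℕ → ℕ → ℕ),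
    CountingProp eCL mCL ∧
    ∀ t k : ℕ, 1 ≤ t → 2 ≤ k →
      eRI t k < eCL (1/(t:ℝ)) (1/(t:ℝ)) (k-1) k / (4 * (t:ℝ) ^ (4^k))

/-- `max_i a_i` over `i ∈ [k−1]` -/
def maxA (k : ℕ) (a : ℕ → ℕ) : ℕ := (Finset.Icc 1 (k-1)).sup a

/-- `(ε, a, d)` is a regularity instance. -/
def RegInstance (eRI : ℕ → ℕ → ℝ) (k : ℕ) (ε : ℝ) (a : ℕ → ℕ) (d : Addr → ℝ) : Prop :=
  2 ≤ k ∧ (∀ j, 1 ≤ j → j ≤ k - 1 → 1 ≤ a j) ∧ 0 < ε ∧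
  ε ≤ eRI (maxA k a) k ∧ DensityFun k a d

section Counting

variable {W : Type} [Fintype W] [DecidableEq W]

/-- `S` spans an induced copy of `Fg` in `H` (both k-graphs). -/
def InducedCopy (Fg : Finset (Finset W)) (H : Finset (Finset V)) (k : ℕ) (S : Finset V) :
    Prop :=
  ∃ e : W → V, Function.Injective e ∧ Finset.univ.image e = S ∧
    ∀ A : Finset W, A.card = k → (A.image e ∈ H ↔ A ∈ Fg)

/-- the size of the automorphism group of `Fg` -/
def AutCount (Fg : Finset (Finset W)) : ℕ :=
  Nat.card {π : W ≃ W // ∀ A : Finset W, A.image π ∈ Fg ↔ A ∈ Fg}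

/-- the number `IC_σ(F, H)` of σ-induced copies of `Fg` in the complex `X` -/
def ICosig {l : ℕ} (X : Cx V l) (k : ℕ) (Fg : Finset (Finset W)) (σ : W ≃ Fin l) : ℕ :=
  Set.ncard {e : W → V |
    (∀ v, e v ∈ X.C (σ v)) ∧
    Finset.univ.image e ∈ X.KsetLvl (k-1) l ∧
    ∀ A : Finset W, A.card = k → (A.image e ∈ X.G k ↔ A ∈ Fg)}

/-- `IC(F, d, x̂, σ)` -/
def ICs (Fg : Finset (Finset W)) (k l : ℕ) (a : ℕ → ℕ) (d : Addr → ℝ)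
    (x : Addr) (σ : W → ℕ) : ℝ :=
  (∏ B ∈ x.1.powersetCard k,
    if ∃ A ∈ Fg, A.image σ = B then d (restrictA x (k-1) B)
    else 1 - d (restrictA x (k-1) B)) *
  ∏ j ∈ Finset.Icc 2 (k-1), ((a j : ℝ) ^ (l.choose j))⁻¹

/-- `IC(F, d, x̂)` -/
def ICa (Fg : Finset (Finset W)) (k l : ℕ) (a : ℕ → ℕ) (d : Addr → ℝ) (x : Addr) : ℝ :=
  (AutCount Fg : ℝ)⁻¹ *
    ∑ᶠ σ ∈ {σ : W → ℕ | Set.BijOn σ Set.univ ↑x.1}, ICs Fg k l a d x σ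

/-- `IC(F, d)` -/
def IC (Fg : Finset (Finset W)) (k l : ℕ) (a : ℕ → ℕ) (d : Addr → ℝ) : ℝ :=
  (((a 1).choose l : ℝ))⁻¹ * ∑ᶠ x ∈ {x : Addr | IsAddress l (k-1) a x}, ICa Fg k l a d x

end Counting

end

end HypReg

namespace HypReg

open Finset
open scoped BigOperators

attribute [local instance 10] Classical.propDecidable

section Box

variable {V ι : Type*} [Fintype ι] [DecidableEq ι]

/-- All functions `ι → V` with values in `U`. -/
def tuples (ι : Type*) [Fintype ι] [DecidableEq ι] (U : Finset V) : Finset (ι → V) :=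
  Fintype.piFinset fun _ => U

lemma mem_tuples {U : Finset V} {y : ι → V} : y ∈ tuples ι U ↔ ∀ i, y i ∈ U :=
  Fintype.mem_piFinset

lemma tuples_nonempty {U : Finset V} (h : U.Nonempty) : (tuples ι U).Nonempty :=
  Fintype.piFinset_nonempty.2 fun _ => h

lemma card_tuples (U : Finset V) : (tuples ι U).card = U.card ^ Fintype.card ι := by
  simp [tuples]

lemma expect_tuples_succ {k : ℕ} (U : Finset V) (g : (Fin (k + 1) → V) → ℝ) :
    𝔼 y ∈ tuples (Fin (k + 1)) U, g y =
      𝔼 x ∈ U, 𝔼 y ∈ tuples (Fin k) U, g (Fin.cons x y) := by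
  rw [← expect_product' U (tuples (Fin k) U) fun x y => g (Fin.cons x y)]
  refine expect_nbij' (fun y => (y 0, Fin.tail y)) (fun p => Fin.cons p.1 p.2) ?_ ?_ ?_ ?_ ?_
  · intro y hy
    rw [mem_tuples] at hy
    simp only [mem_product, mem_tuples]
    exact ⟨hy 0, fun i => hy i.succ⟩
  · intro p hp
    simp only [mem_product, mem_tuples] at hp
    rw [mem_tuples]
    intro i
    refine Fin.cases ?_ ?_ i
    · simpa using hp.1
    · intro i; simpa using hp.2 i
  · intro y _; simp
  · intro p _; simp
  · intro y _; simp

lemma sq_expect_le {α : Type*} (s : Finset α) (f : α → ℝ) :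
    (𝔼 i ∈ s, f i) ^ 2 ≤ 𝔼 i ∈ s, f i ^ 2 := by
  have h := expect_mul_sq_le_sq_mul_sq s f (fun _ => 1)
  rcases s.eq_empty_or_nonempty with rfl | hs
  · simp
  · simpa [expect_const hs] using h

lemma expect_pow_two_pow_le {α : Type*} (s : Finset α) (k : ℕ) (f : α → ℝ) :
    (𝔼 i ∈ s, f i) ^ (2 ^ k) ≤ 𝔼 i ∈ s, f i ^ (2 ^ k) := by
  induction k generalizing f with
  | zero => simp
  | succ k ih =>
    simp only [pow_succ' 2 k, pow_mul]
    exact (pow_le_pow_left₀ (sq_nonneg _) (sq_expect_le s f) _).trans (ih _)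

/-- The product of `f` over the `2 ^ k` vertices of the box spanned by `x` and `z`. -/
def boxF : (k : ℕ) → ((Fin k → V) → ℝ) → (Fin k → V) → (Fin k → V) → ℝ
  | 0, f, x, _ => f x
  | k + 1, f, x, z =>
    boxF k (fun y => f (Fin.cons (x 0) y) * f (Fin.cons (z 0) y)) (Fin.tail x) (Fin.tail z)

lemma abs_boxF_le {k : ℕ} {f : (Fin k → V) → ℝ} (hf : ∀ y, |f y| ≤ 1) (x z : Fin k → V) :
    |boxF k f x z| ≤ 1 := by
  induction k with
  | zero => exact hf x
  | succ k ih =>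
    refine ih (fun y => ?_) _ _
    rw [abs_mul]
    exact mul_le_one₀ (hf _) (abs_nonneg _) (hf _)

lemma expect_mul_prod_pow_le (U : Finset V) {k : ℕ} (f : (Fin k → V) → ℝ)
    (u : Fin k → (Fin k → V) → ℝ) (hu : ∀ i, DependsOn (u i) {i}ᶜ) (hu1 : ∀ i y, |u i y| ≤ 1) :
    (𝔼 y ∈ tuples (Fin k) U, f y * ∏ i, u i y) ^ (2 ^ k) ≤
      𝔼 x ∈ tuples (Fin k) U, 𝔼 z ∈ tuples (Fin k) U, boxF k f x z := by
  induction k with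
  | zero =>
    have h : tuples (Fin 0) U = {Fin.elim0} := by
      ext y
      simp [mem_tuples, Subsingleton.elim y Fin.elim0]
    simp [boxF, h]
  | succ k ih =>
    rcases U.eq_empty_or_nonempty with rfl | ⟨x₀, hx₀⟩
    · have h : tuples (Fin (k + 1)) (∅ : Finset V) = ∅ := by
        ext y; simp [mem_tuples]
      simp [h]
    set T := tuples (Fin k) U
    set g : V → (Fin k → V) → ℝ := fun x y =>
      f (Fin.cons x y) * ∏ i : Fin k, u i.succ (Fin.cons x y) with hg
    have h0 : ∀ x y, u 0 (Fin.cons x y) = u 0 (Fin.cons x₀ y) := by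
      intro x y
      refine hu 0 fun i hi => ?_
      obtain ⟨j, rfl⟩ := Fin.exists_succ_eq.2 (show i ≠ 0 from hi)
      simp
    have e1 : 𝔼 y ∈ tuples (Fin (k + 1)) U, f y * ∏ i, u i y =
        𝔼 y ∈ T, u 0 (Fin.cons x₀ y) * 𝔼 x ∈ U, g x y := by
      rw [expect_tuples_succ, expect_comm]
      refine expect_congr rfl fun y _ => ?_
      rw [mul_expect]
      refine expect_congr rfl fun x _ => ?_
      rw [Fin.prod_univ_succ, h0, hg]; ring
    have e2 : (𝔼 y ∈ T, u 0 (Fin.cons x₀ y) * 𝔼 x ∈ U, g x y) ^ 2 ≤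
        𝔼 x ∈ U, 𝔼 x' ∈ U, 𝔼 y ∈ T, g x y * g x' y := by
      calc _ ≤ 𝔼 y ∈ T, (u 0 (Fin.cons x₀ y) * 𝔼 x ∈ U, g x y) ^ 2 := sq_expect_le _ _
        _ ≤ 𝔼 y ∈ T, (𝔼 x ∈ U, g x y) ^ 2 := by
          refine expect_le_expect fun y _ => ?_
          rw [mul_pow]
          refine mul_le_of_le_one_left (sq_nonneg _) ?_
          rw [← sq_abs]
          exact pow_le_one₀ (abs_nonneg _) (hu1 _ _)
        _ = _ := by
          simp_rw [sq, expect_mul_expect]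
          rw [expect_comm]
          refine expect_congr rfl fun x _ => ?_
          rw [expect_comm]
    have e3 : 0 ≤ (𝔼 y ∈ T, u 0 (Fin.cons x₀ y) * 𝔼 x ∈ U, g x y) ^ 2 := sq_nonneg _
    rw [e1, pow_succ' 2 k, pow_mul]
    refine (pow_le_pow_left₀ e3 e2 _).trans ?_
    refine (expect_pow_two_pow_le _ _ _).trans ?_
    rw [expect_tuples_succ]
    refine expect_le_expect fun x _ => ?_
    refine (expect_pow_two_pow_le _ _ _).trans ?_
    simp_rw [expect_tuples_succ (k := k) U (fun z => boxF _ f _ z)]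
    rw [expect_comm]
    refine expect_le_expect fun x' _ => ?_
    have key := ih (fun y => f (Fin.cons x y) * f (Fin.cons x' y))
      (fun i y => u i.succ (Fin.cons x y) * u i.succ (Fin.cons x' y)) ?_ ?_
    · refine le_trans (le_of_eq ?_) key
      congr 1
      refine expect_congr rfl fun y _ => ?_
      rw [hg, prod_mul_distrib]; ring
    · intro i y y' h
      have : ∀ x : V, u i.succ (Fin.cons x y) = u i.succ (Fin.cons x y') := by
        intro x
        refine hu _ fun j hj => ?_
        refine Fin.cases (fun _ => by simp) (fun j hj => ?_) j hj
        simpa using h j (fun h' => hj (congrArg Fin.succ h'))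
      simp only [this]
    · intro i y
      rw [abs_mul]
      exact mul_le_one₀ (hu1 _ _) (abs_nonneg _) (hu1 _ _)

lemma exists_boxF_eq_mul_prod {k : ℕ} (f : (Fin k → V) → ℝ) (hf : ∀ y, |f y| ≤ 1)
    (z : Fin k → V) :
    ∃ u : Fin k → (Fin k → V) → ℝ, (∀ i, DependsOn (u i) {i}ᶜ) ∧ (∀ i y, |u i y| ≤ 1) ∧
      ∀ x, boxF k f x z = f x * ∏ i, u i x := by
  induction k with
  | zero => exact ⟨fun i => i.elim0, fun i => i.elim0, fun i => i.elim0, fun x => by simp [boxF]⟩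
  | succ k ih =>
    have h1 : ∀ x₀ y, |f (Fin.cons x₀ y) * f (Fin.cons (z 0) y)| ≤ 1 := by
      intro x₀ y
      rw [abs_mul]
      exact mul_le_one₀ (hf _) (abs_nonneg _) (hf _)
    choose w hw hw1 hwe using fun x₀ : V => ih _ (h1 x₀) (Fin.tail z)
    refine ⟨Fin.cons (fun x => f (Fin.cons (z 0) (Fin.tail x)))
      (fun i x => w (x 0) i (Fin.tail x)), ?_, ?_, ?_⟩
    · intro i
      refine Fin.cases ?_ (fun i => ?_) i
      · intro x y h
        have : Fin.tail x = Fin.tail y := funext fun j => h j.succ (Fin.succ_ne_zero j)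
        simp [this]
      · intro x y h
        have h0 : x 0 = y 0 := h 0 (Fin.succ_ne_zero i).symm
        simp only [Fin.cons_succ, h0]
        exact hw _ i fun j hj => h j.succ fun h' => hj (Fin.succ_injective _ h')
    · intro i
      refine Fin.cases ?_ (fun i => ?_) i
      · intro x; simpa using hf _
      · intro x; simpa using hw1 _ _ _
    · intro x
      rw [boxF, hwe, Fin.prod_univ_succ]
      simp [mul_assoc]

lemma expect_boxF_le (U : Finset V) (hU : U.Nonempty) {k : ℕ} (f : (Fin k → V) → ℝ)
    (hf : ∀ y, |f y| ≤ 1) (δ : ℝ)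
    (h : ∀ u : Fin k → (Fin k → V) → ℝ, (∀ i, DependsOn (u i) {i}ᶜ) → (∀ i y, |u i y| ≤ 1) →
      |𝔼 y ∈ tuples (Fin k) U, f y * ∏ i, u i y| ≤ δ) :
    𝔼 x ∈ tuples (Fin k) U, 𝔼 z ∈ tuples (Fin k) U, boxF k f x z ≤ δ := by
  rw [expect_comm]
  refine expect_le (tuples_nonempty hU) fun z _ => ?_
  obtain ⟨u, hu, hu1, hue⟩ := exists_boxF_eq_mul_prod f hf z
  simp_rw [hue]
  exact (le_abs_self _).trans (h u hu hu1)

lemma intervalIntegrable_indicator_Iio (b : ℝ) :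
    IntervalIntegrable ((Set.Iio b).indicator fun _ => (1:ℝ)) MeasureTheory.volume 0 1 := by
  rw [intervalIntegrable_iff]
  refine MeasureTheory.IntegrableOn.indicator ?_ measurableSet_Iio
  exact MeasureTheory.integrableOn_const (by simp)

lemma integral_sub_indicator_Iio {c : ℝ} (hc : |c| ≤ 1) :
    ∫ θ in (0:ℝ)..1, ((Set.Iio c).indicator (fun _ => (1:ℝ)) θ -
      (Set.Iio (-c)).indicator (fun _ => (1:ℝ)) θ) = c := by
  have key : ∀ b : ℝ, b ≤ 1 →
      ∫ θ in (0:ℝ)..1, (Set.Iio b).indicator (fun _ => (1:ℝ)) θ = max b 0 := by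
    intro b hb
    have : Set.Iio b ∩ Set.Ioc 0 1 = Set.Ioo 0 b := by
      ext x
      simp only [Set.mem_inter_iff, Set.mem_Iio, Set.mem_Ioc, Set.mem_Ioo]
      constructor
      · rintro ⟨h1, h2, -⟩; exact ⟨h2, h1⟩
      · rintro ⟨h1, h2⟩; exact ⟨h2, h1, h2.le.trans hb⟩
    rw [intervalIntegral.integral_of_le zero_le_one,
      MeasureTheory.integral_indicator measurableSet_Iio, MeasureTheory.setIntegral_const,
      MeasureTheory.measureReal_restrict_apply measurableSet_Iio, this]
    simp [Real.volume_real_Ioo]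
  rw [intervalIntegral.integral_sub (intervalIntegrable_indicator_Iio _)
    (intervalIntegrable_indicator_Iio _), key _ (abs_le.1 hc).2,
    key _ (by linarith [(abs_le.1 hc).1])]
  rcases le_total c 0 with h | h
  · rw [max_eq_right h, max_eq_left (by linarith)]; ring
  · rw [max_eq_left h, max_eq_right (by linarith)]; ring

/-- A bound for `{0, 1}`-valued test functions gives one for `[-1, 1]`-valued ones. -/
lemma abs_expect_mul_prod_le_of_indicator (U : Finset V) (f : (ι → V) → ℝ) (δ : ℝ)
    (h : ∀ u : ι → (ι → V) → ℝ, (∀ i, DependsOn (u i) {i}ᶜ) →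
      (∀ i y, u i y = 0 ∨ u i y = 1) → |𝔼 y ∈ tuples ι U, f y * ∏ i, u i y| ≤ δ)
    (u : ι → (ι → V) → ℝ) (hu : ∀ i, DependsOn (u i) {i}ᶜ) (hu1 : ∀ i y, |u i y| ≤ 1) :
    |𝔼 y ∈ tuples ι U, f y * ∏ i, u i y| ≤ 2 ^ Fintype.card ι * δ := by
  suffices H : ∀ s : Finset ι, ∀ u : ι → (ι → V) → ℝ, (∀ i, DependsOn (u i) {i}ᶜ) →
      (∀ i y, |u i y| ≤ 1) → (∀ i ∉ s, ∀ y, u i y = 0 ∨ u i y = 1) →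
      |𝔼 y ∈ tuples ι U, f y * ∏ i, u i y| ≤ 2 ^ s.card * δ from
    H univ u hu hu1 fun i hi => absurd (mem_univ i) hi
  intro s
  induction s using Finset.induction_on with
  | empty =>
    intro u hu _ h01
    simpa using h u hu fun i y => h01 i (notMem_empty i) y
  | insert i s his ih =>
    intro u hu hu1 h01
    set w : ℝ → ℝ → ι → (ι → V) → ℝ := fun σ θ =>
      Function.update u i fun y => (Set.Iio (σ * u i y)).indicator (fun _ => (1:ℝ)) θ with hw
    have hbd : ∀ σ θ, |𝔼 y ∈ tuples ι U, f y * ∏ j, w σ θ j y| ≤ 2 ^ s.card * δ := by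
      intro σ θ
      have hi01 : ∀ y, w σ θ i y = 0 ∨ w σ θ i y = 1 := by
        intro y
        simp only [hw, Function.update_self, Set.indicator_apply]
        split_ifs <;> simp
      refine ih _ ?_ ?_ ?_
      · intro j
        rcases eq_or_ne j i with rfl | hj
        · intro x y hxy
          simp only [hw, Function.update_self, hu j hxy]
        · simp only [hw, Function.update_of_ne hj]; exact hu j
      · intro j y
        rcases eq_or_ne j i with rfl | hj
        · rcases hi01 y with h0 | h0 <;> rw [h0] <;> norm_num
        · simp only [hw, Function.update_of_ne hj]; exact hu1 j y
      · intro j hjs y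
        rcases eq_or_ne j i with rfl | hj
        · exact hi01 y
        · simp only [hw, Function.update_of_ne hj]
          exact h01 j (by simp [hj, hjs]) y
    have hprod : ∀ σ θ y, ∏ j, w σ θ j y =
        (Set.Iio (σ * u i y)).indicator (fun _ => (1:ℝ)) θ * ∏ j ∈ univ.erase i, u j y := by
      intro σ θ y
      rw [← mul_prod_erase univ (fun j => w σ θ j y) (mem_univ i)]
      congr 1
      · simp [hw]
      · refine prod_congr rfl fun j hj => ?_
        simp [hw, Function.update_of_ne (ne_of_mem_erase hj)]
    have h_integral : 𝔼 y ∈ tuples ι U, f y * ∏ j, u j y = ∫ θ in (0:ℝ)..1,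
        (𝔼 y ∈ tuples ι U, f y * ∏ j, w 1 θ j y - 𝔼 y ∈ tuples ι U, f y * ∏ j, w (-1) θ j y) := by
      simp_rw [← expect_sub_distrib, expect_eq_sum_div_card]
      rw [intervalIntegral.integral_div, intervalIntegral.integral_finsetSum]
      · congr 1
        refine sum_congr rfl fun y _ => ?_
        rw [← mul_prod_erase univ (fun j => u j y) (mem_univ i)]
        conv_lhs => rw [← integral_sub_indicator_Iio (hu1 i y)]
        rw [mul_comm, mul_assoc, ← intervalIntegral.integral_mul_const]
        refine intervalIntegral.integral_congr fun θ _ => ?_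
        simp only [hprod, one_mul, neg_one_mul]
        ring
      · intro y _
        have e : (fun θ => f y * ∏ j, w 1 θ j y - f y * ∏ j, w (-1) θ j y) = fun θ =>
            f y * (((Set.Iio (1 * u i y)).indicator (fun _ => (1:ℝ)) θ -
              (Set.Iio (-1 * u i y)).indicator (fun _ => (1:ℝ)) θ) *
              ∏ j ∈ univ.erase i, u j y) := by
          funext θ
          rw [hprod, hprod]; ring
        rw [e]
        exact (((intervalIntegrable_indicator_Iio _).sub
          (intervalIntegrable_indicator_Iio _)).mul_const _).const_mul _
    rw [h_integral, card_insert_of_notMem his, pow_succ', mul_assoc, two_mul]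
    have := intervalIntegral.norm_integral_le_of_norm_le_const (a := 0) (b := 1)
      (f := fun θ => 𝔼 y ∈ tuples ι U, f y * ∏ j, w 1 θ j y -
        𝔼 y ∈ tuples ι U, f y * ∏ j, w (-1) θ j y) (C := 2 ^ s.card * δ + 2 ^ s.card * δ)
      fun θ _ => (abs_sub _ _).trans (add_le_add (hbd 1 θ) (hbd (-1) θ))
    simpa using this

end Box

section Sampling

variable {V ι : Type*} [Fintype ι] [DecidableEq ι]

lemma expect_tuples_extend {κ : Type*} [Fintype κ] [DecidableEq κ] (U : Finset V) {e : κ → ι}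
    (he : Function.Injective e) (g : (ι → V) → ℝ) :
    𝔼 y ∈ tuples ι U, g y =
      𝔼 y ∈ tuples ι U, 𝔼 w ∈ tuples κ U, g (Function.extend e w y) := by
  rcases (tuples κ U).eq_empty_or_nonempty with h | h
  · have : tuples ι U = ∅ := by
      by_contra hne
      obtain ⟨y, hy⟩ := nonempty_iff_ne_empty.2 hne
      have : y ∘ e ∈ tuples κ U := mem_tuples.2 fun i => mem_tuples.1 hy _
      simp [h] at this
    simp [this]
  · have e1 : 𝔼 y ∈ tuples ι U, g y = 𝔼 y ∈ tuples ι U, 𝔼 _w ∈ tuples κ U, g y := by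
      simp_rw [expect_const h]
    rw [e1, ← expect_product', ← expect_product']
    have hm : ∀ p ∈ tuples ι U ×ˢ tuples κ U,
        (Function.extend e p.2 p.1, p.1 ∘ e) ∈ tuples ι U ×ˢ tuples κ U := by
      rintro ⟨y, w⟩ hp
      simp only [mem_product, mem_tuples] at hp ⊢
      refine ⟨fun i => ?_, fun a => hp.1 _⟩
      by_cases hi : ∃ a, e a = i
      · obtain ⟨a, rfl⟩ := hi
        rw [he.extend_apply]; exact hp.2 a
      · rw [Function.extend_apply' _ _ _ hi]; exact hp.1 i
    have hinv : ∀ p ∈ tuples ι U ×ˢ tuples κ U,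
        (Function.extend e (p.1 ∘ e) (Function.extend e p.2 p.1),
          Function.extend e p.2 p.1 ∘ e) = p := by
      rintro ⟨y, w⟩ _
      refine Prod.ext (funext fun i => ?_) (funext fun a => he.extend_apply _ _ a)
      by_cases hi : ∃ a, e a = i
      · obtain ⟨a, rfl⟩ := hi
        exact he.extend_apply _ _ a
      · simp only [Function.extend_apply' _ _ _ hi]
    refine expect_nbij' (fun p => (Function.extend e p.2 p.1, p.1 ∘ e))
      (fun p => (Function.extend e p.2 p.1, p.1 ∘ e)) ?_ ?_ ?_ ?_ ?_
    · exact hm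
    · exact hm
    · exact hinv
    · exact hinv
    · rintro ⟨y, w⟩ _
      simp only
      congr 1
      ext i
      by_cases hi : ∃ a, e a = i
      · obtain ⟨a, rfl⟩ := hi
        rw [he.extend_apply, Function.comp_apply]
      · simp only [Function.extend_apply' _ _ _ hi]

lemma expect_tuples_update (U : Finset V) (i : ι) (g : (ι → V) → ℝ) :
    𝔼 y ∈ tuples ι U, g y = 𝔼 y ∈ tuples ι U, 𝔼 v ∈ U, g (Function.update y i v) := by
  rcases U.eq_empty_or_nonempty with rfl | h
  · have : tuples ι (∅ : Finset V) = ∅ := by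
      ext y; simp only [mem_tuples, notMem_empty, iff_false]; exact fun h => h i
    simp [this]
  · have e1 : 𝔼 y ∈ tuples ι U, g y = 𝔼 y ∈ tuples ι U, 𝔼 _v ∈ U, g y := by
      simp_rw [expect_const h]
    rw [e1, ← expect_product', ← expect_product']
    have hm : ∀ p ∈ tuples ι U ×ˢ U, (Function.update p.1 i p.2, p.1 i) ∈ tuples ι U ×ˢ U := by
      rintro ⟨y, v⟩ hp
      simp only [mem_product, mem_tuples] at hp ⊢
      refine ⟨fun j => ?_, hp.1 i⟩
      rcases eq_or_ne j i with rfl | hj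
      · simpa using hp.2
      · simpa [hj] using hp.1 j
    refine expect_nbij' (fun p => (Function.update p.1 i p.2, p.1 i))
      (fun p => (Function.update p.1 i p.2, p.1 i)) hm hm ?_ ?_ ?_
    · rintro ⟨y, v⟩ _; simp
    · rintro ⟨y, v⟩ _; simp
    · rintro ⟨y, v⟩ _; simp

lemma expect_boole_mem_le (U A : Finset V) :
    𝔼 v ∈ U, (if v ∈ A then (1:ℝ) else 0) ≤ A.card / U.card := by
  rw [expect_eq_sum_div_card, sum_boole]
  gcongr
  exact fun v hv => (mem_filter.1 hv).2

lemma expect_hit_le (U A : Finset V) :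
    𝔼 y ∈ tuples ι U, (if ∃ i, y i ∈ A then (1:ℝ) else 0) ≤
      Fintype.card ι * (A.card / U.card) := by
  calc _ ≤ 𝔼 y ∈ tuples ι U, ∑ i, (if y i ∈ A then (1:ℝ) else 0) := by
        refine expect_le_expect fun y _ => ?_
        split_ifs with h
        · obtain ⟨i, hi⟩ := h
          refine le_trans ?_ (single_le_sum (f := fun i => if y i ∈ A then (1:ℝ) else 0)
            (fun j _ => by positivity) (mem_univ i))
          simp [hi]
        · exact sum_nonneg fun j _ => by positivity
    _ = ∑ i : ι, 𝔼 y ∈ tuples ι U, (if y i ∈ A then (1:ℝ) else 0) := expect_sum_comm _ _ _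
    _ ≤ ∑ _i : ι, (A.card / U.card : ℝ) := by
        refine sum_le_sum fun i _ => ?_
        rw [expect_tuples_update U i]
        simp only [Function.update_self]
        rcases (tuples ι U).eq_empty_or_nonempty with h | h
        · rw [h, expect_empty]; positivity
        · rw [expect_const h]; exact expect_boole_mem_le U A
    _ = _ := by simp

lemma expect_not_injective_le (U : Finset V) :
    𝔼 y ∈ tuples ι U, (if Function.Injective y then (0:ℝ) else 1) ≤
      (Fintype.card ι : ℝ) ^ 2 / U.card := by
  calc _ ≤ 𝔼 y ∈ tuples ι U, ∑ i, ∑ j, (if i ≠ j ∧ y i = y j then (1:ℝ) else 0) := by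
        refine expect_le_expect fun y _ => ?_
        split_ifs with h
        · exact sum_nonneg fun i _ => sum_nonneg fun j _ => by positivity
        · obtain ⟨i, j, hij, hne⟩ : ∃ i j, y i = y j ∧ i ≠ j := by
            simpa [Function.Injective] using h
          refine le_trans ?_ (single_le_sum (f := fun i => ∑ j,
            if i ≠ j ∧ y i = y j then (1:ℝ) else 0)
            (fun i _ => sum_nonneg fun j _ => by positivity) (mem_univ i))
          refine le_trans ?_ (single_le_sum (f := fun j =>
            if i ≠ j ∧ y i = y j then (1:ℝ) else 0)
            (fun j _ => by positivity) (mem_univ j))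
          simp [hij, hne]
    _ = ∑ i : ι, ∑ j : ι, 𝔼 y ∈ tuples ι U, (if i ≠ j ∧ y i = y j then (1:ℝ) else 0) := by
        rw [expect_sum_comm]
        exact sum_congr rfl fun i _ => expect_sum_comm _ _ _
    _ ≤ ∑ _i : ι, ∑ _j : ι, (1 / U.card : ℝ) := by
        refine sum_le_sum fun i _ => sum_le_sum fun j _ => ?_
        rcases eq_or_ne i j with hij | hij
        · simp [hij]
        rw [expect_tuples_update U i]
        simp only [Function.update_self, Function.update_of_ne hij.symm, ne_eq, hij,
          not_false_eq_true, true_and]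
        rcases (tuples ι U).eq_empty_or_nonempty with h | h
        · rw [h, expect_empty]; positivity
        · refine expect_le h fun y _ => ?_
          simpa using expect_boole_mem_le U {y j}
    _ = _ := by simp; ring

lemma card_filter_subset_le {W A : Finset V} (hA : A ⊆ W) {q : ℕ} (hq : q ≤ W.card)
    (hW : W.Nonempty) :
    (((W.powersetCard q).filter fun Q => A ⊆ Q).card : ℝ) ≤
      (q / W.card : ℝ) ^ A.card * (W.card.choose q : ℝ) := by
  have hn : (0:ℝ) < W.card := by exact_mod_cast hW.card_pos
  by_cases hs : A.card ≤ q
  · have h1 : ((W.powersetCard q).filter fun Q => A ⊆ Q).card ≤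
        (W.card - A.card).choose (q - A.card) := by
      have : ((W.powersetCard q).filter fun Q => A ⊆ Q) ⊆
          ((W \ A).powersetCard (q - A.card)).image (A ∪ ·) := by
        intro Q hQ
        simp only [mem_filter, mem_powersetCard] at hQ
        refine mem_image.2 ⟨Q \ A, mem_powersetCard.2 ⟨sdiff_subset_sdiff hQ.1.1 le_rfl, ?_⟩,
          union_sdiff_of_subset hQ.2⟩
        rw [card_sdiff_of_subset hQ.2, hQ.1.2]
      refine (card_le_card this).trans (card_image_le.trans ?_)
      rw [card_powersetCard, card_sdiff_of_subset hA]
    have h2 : ∀ s ≤ q, (((W.card - s).choose (q - s) : ℕ) : ℝ) ≤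
        (q / W.card : ℝ) ^ s * (W.card.choose q : ℝ) := by
      intro s
      induction s with
      | zero => simp
      | succ s ih =>
        intro hs
        have ih := ih (by omega)
        obtain ⟨n', hn'⟩ : ∃ n', W.card - s = n' + 1 := ⟨W.card - s - 1, by omega⟩
        obtain ⟨q', hq'⟩ : ∃ q', q - s = q' + 1 := ⟨q - s - 1, by omega⟩
        have e1 : W.card - (s + 1) = n' := by omega
        have e2 : q - (s + 1) = q' := by omega
        rw [e1, e2]
        rw [hn', hq'] at ih
        have h3 := Nat.add_one_mul_choose_eq n' q'
        have h3' : ((n' : ℝ) + 1) * (n'.choose q' : ℝ) =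
          ((n' + 1).choose (q' + 1) : ℝ) * (q' + 1) := by exact_mod_cast h3
        have h4 : ((q' : ℝ) + 1) * W.card ≤ q * (n' + 1) := by
          have : (q' + 1) * W.card ≤ q * (n' + 1) := by
            rw [← hq', ← hn', Nat.sub_mul, Nat.mul_sub]
            have : q * s ≤ s * W.card := by rw [mul_comm]; exact Nat.mul_le_mul_left _ hq
            omega
          exact_mod_cast this
        have hn0 : (0:ℝ) < n' + 1 := by positivity
        have h5 : (n'.choose q' : ℝ) = ((n' + 1).choose (q' + 1) : ℝ) * ((q' + 1) / (n' + 1)) := by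
          field_simp; linarith
        have h6 : ((q' : ℝ) + 1) / (n' + 1) ≤ q / W.card := by
          rw [div_le_div_iff₀ hn0 hn]; exact h4
        rw [h5, pow_succ, mul_right_comm]
        exact mul_le_mul ih h6 (by positivity) (by positivity)
    exact (Nat.cast_le.2 h1).trans (h2 _ hs)
  · have : ((W.powersetCard q).filter fun Q => A ⊆ Q) = ∅ := by
      ext Q
      simp only [mem_filter, mem_powersetCard, notMem_empty, iff_false]
      rintro ⟨⟨-, h⟩, h'⟩
      exact hs (h ▸ card_le_card h')
    rw [this, card_empty, Nat.cast_zero]; positivity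

/-- The sum of `∏ G` over sequences of `r` disjoint injective tuples in `Q` avoiding `A`. -/
noncomputable def disjSum (G : (ι → V) → ℝ) (Q : Finset V) : ℕ → Finset V → ℝ
  | 0, _ => 1
  | r + 1, A => ∑ y ∈ (tuples ι Q).filter fun y => Function.Injective y ∧ ∀ i, y i ∉ A,
      G y * disjSum G Q r (A ∪ univ.image y)

lemma disjSum_nonneg {G : (ι → V) → ℝ} (hG : ∀ y, 0 ≤ G y) (Q : Finset V) (r : ℕ)
    (A : Finset V) : 0 ≤ disjSum G Q r A := by
  induction r generalizing A with
  | zero => exact zero_le_one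
  | succ r ih => exact sum_nonneg fun y _ => mul_nonneg (hG y) (ih _)

lemma le_disjSum {G : (ι → V) → ℝ} (hG : ∀ y, 0 ≤ G y) (hG2 : ∀ y, G y ≤ 2) {Q : Finset V}
    (hQ : Q.Nonempty) {κ : ℝ} (hκ : 0 ≤ κ) {s : ℕ}
    (h : κ + 2 * (Fintype.card ι * (s / Q.card) + (Fintype.card ι : ℝ) ^ 2 / Q.card) ≤
      𝔼 y ∈ tuples ι Q, G y) (r : ℕ) (A : Finset V) (hA : A.card + r * Fintype.card ι ≤ s) :
    (κ * (Q.card : ℝ) ^ Fintype.card ι) ^ r ≤ disjSum G Q r A := by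
  induction r generalizing A with
  | zero => simp [disjSum]
  | succ r ih =>
    have hq : (0:ℝ) < Q.card := by exact_mod_cast hQ.card_pos
    have hm : (0:ℝ) < (Q.card : ℝ) ^ Fintype.card ι := by positivity
    have h1 : κ ≤ 𝔼 y ∈ tuples ι Q,
        (if Function.Injective y ∧ ∀ i, y i ∉ A then G y else 0) := by
      have h2 : 𝔼 y ∈ tuples ι Q, G y ≤ 𝔼 y ∈ tuples ι Q,
          ((if Function.Injective y ∧ ∀ i, y i ∉ A then G y else 0) +
            2 * ((if ∃ i, y i ∈ A then (1:ℝ) else 0) +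
              (if Function.Injective y then (0:ℝ) else 1))) := by
        refine expect_le_expect fun y _ => ?_
        have := hG2 y
        by_cases ha : Function.Injective y <;> by_cases hb : ∃ i, y i ∈ A
        · have : ¬ ∀ i, y i ∉ A := by simpa using hb
          simp [ha, hb, this]; linarith
        · have : ∀ i, y i ∉ A := by simpa using hb
          simp [ha, this]
        · simp [ha, hb]; linarith
        · simp [ha, hb]; linarith
      rw [expect_add_distrib, ← mul_expect, expect_add_distrib] at h2
      have h3 := expect_hit_le (ι := ι) Q A
      have h4 := expect_not_injective_le (ι := ι) Q
      have h5 : (Fintype.card ι * (A.card / Q.card) : ℝ) ≤ Fintype.card ι * (s / Q.card) := by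
        gcongr
        exact (Nat.le_add_right _ _).trans hA
      linarith
    rw [expect_eq_sum_div_card, le_div_iff₀ (by simpa [card_tuples] using hm),
      ← sum_filter, card_tuples] at h1
    push_cast at h1
    rw [disjSum, pow_succ']
    have h0 : 0 ≤ (κ * (Q.card : ℝ) ^ Fintype.card ι) ^ r := by positivity
    refine (mul_le_mul_of_nonneg_right h1 h0).trans ?_
    rw [sum_mul]
    refine sum_le_sum fun y hy => mul_le_mul_of_nonneg_left (ih _ ?_) (hG y)
    refine le_trans ?_ hA
    have := card_union_le A (univ.image y)
    have := card_image_le (s := (univ : Finset ι)) (f := y)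
    rw [card_univ] at this
    rw [add_mul, one_mul]; omega

lemma sum_disjSum_le {G : (ι → V) → ℝ} (hG : ∀ y, 0 ≤ G y) {W : Finset V} {q : ℕ}
    (hq : q ≤ W.card) (hW : W.Nonempty) (r : ℕ) (A : Finset V) (hA : A ⊆ W) :
    ∑ Q ∈ (W.powersetCard q).filter (A ⊆ ·), disjSum G Q r A ≤
      (∑ y ∈ tuples ι W, G y) ^ r *
        ((q / W.card : ℝ) ^ (A.card + r * Fintype.card ι) * (W.card.choose q : ℝ)) := by
  induction r generalizing A with
  | zero => simpa [disjSum] using card_filter_subset_le hA hq hW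
  | succ r ih =>
    set X := ∑ y ∈ tuples ι W, G y with hX
    have hX0 : 0 ≤ X := sum_nonneg fun y _ => hG y
    set T := (tuples ι W).filter fun y => Function.Injective y ∧ ∀ i, y i ∉ A
    have h1 : ∀ Q ∈ (W.powersetCard q).filter (A ⊆ ·), disjSum G Q (r + 1) A ≤
        ∑ y ∈ T, if A ∪ univ.image y ⊆ Q then G y * disjSum G Q r (A ∪ univ.image y) else 0 := by
      intro Q hQ
      simp only [mem_filter, mem_powersetCard] at hQ
      rw [disjSum, ← sum_filter]
      refine sum_le_sum_of_subset_of_nonneg ?_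
        fun y _ _ => mul_nonneg (hG y) (disjSum_nonneg hG _ _ _)
      intro y hy
      simp only [mem_filter, mem_tuples, T] at hy ⊢
      refine ⟨⟨fun i => hQ.1.1 (hy.1 i), hy.2⟩, union_subset hQ.2 ?_⟩
      intro v hv
      obtain ⟨i, -, rfl⟩ := mem_image.1 hv
      exact hy.1 i
    refine (sum_le_sum h1).trans ?_
    rw [sum_comm]
    have h2 : ∀ y ∈ T, ∑ Q ∈ (W.powersetCard q).filter (A ⊆ ·),
        (if A ∪ univ.image y ⊆ Q then G y * disjSum G Q r (A ∪ univ.image y) else 0) ≤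
        G y * (X ^ r * ((q / W.card : ℝ) ^ (A.card + (r + 1) * Fintype.card ι) *
          (W.card.choose q : ℝ))) := by
      intro y hy
      simp only [mem_filter, mem_tuples, T] at hy
      have hc : (A ∪ univ.image y).card = A.card + Fintype.card ι := by
        rw [card_union_of_disjoint, card_image_of_injective _ hy.2.1, card_univ]
        rw [disjoint_right]
        intro v hv
        obtain ⟨i, -, rfl⟩ := mem_image.1 hv
        exact hy.2.2 i
      rw [← sum_filter, filter_filter, ← mul_sum]
      refine mul_le_mul_of_nonneg_left ?_ (hG y)
      have := ih (A ∪ univ.image y) (union_subset hA ?_)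
      · rw [hc] at this
        have hf : (W.powersetCard q).filter (fun Q => A ⊆ Q ∧ A ∪ univ.image y ⊆ Q) =
            (W.powersetCard q).filter (A ∪ univ.image y ⊆ ·) := by
          ext Q
          simp only [mem_filter]
          exact ⟨fun h => ⟨h.1, h.2.2⟩, fun h => ⟨h.1, subset_union_left.trans h.2, h.2⟩⟩
        have he : A.card + (r + 1) * Fintype.card ι =
          A.card + Fintype.card ι + r * Fintype.card ι := by ring
        rw [hf, he]
        exact this
      · intro v hv
        obtain ⟨i, -, rfl⟩ := mem_image.1 hv
        exact hy.1 i
    refine (sum_le_sum h2).trans ?_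
    rw [← sum_mul, pow_succ' X r, mul_assoc]
    refine mul_le_mul_of_nonneg_right ?_ (by positivity)
    exact sum_le_sum_of_subset_of_nonneg (filter_subset _ _) fun y _ _ => hG y

end Sampling

section SamplingTail

variable {ι : Type*} [Fintype ι] [DecidableEq ι]

lemma card_filter_lt_expect_le {V : Type*} {W : Finset V} {q : ℕ} {δ : ℝ} (hδ : 0 < δ)
    (hδ1 : δ ≤ 1) (hq : q ≤ W.card) {F : (ι → V) → ℝ} (hF : ∀ y, |F y| ≤ 1)
    (hF0 : 𝔼 y ∈ tuples ι W, F y ≤ δ / 8)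
    (hq0 : 16 * ((Fintype.card ι : ℝ) + 1) ^ 2 / δ ≤ q) :
    (((W.powersetCard q).filter fun Q => δ < 𝔼 y ∈ tuples ι Q, F y).card : ℝ) ≤
      Real.exp (-(δ ^ 2 / (128 * ((Fintype.card ι : ℝ) + 1) ^ 2)) * q) *
        ((W.powersetCard q).card : ℝ) := by
  set m := Fintype.card ι with hm
  set M : ℝ := ((m : ℝ) + 1) ^ 2 with hM
  have hM1 : 1 ≤ M := by rw [hM]; nlinarith [(Nat.cast_nonneg m : (0:ℝ) ≤ m)]
  have hmM : (m : ℝ) ^ 2 ≤ M := by rw [hM]; nlinarith [(Nat.cast_nonneg m : (0:ℝ) ≤ m)]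
  have hqM : 16 * M ≤ δ * q := by rw [div_le_iff₀ hδ] at hq0; linarith
  have hq1 : (0:ℝ) < q := by
    have : 0 < δ * q := by linarith
    exact pos_of_mul_pos_right this hδ.le
  have hW : W.Nonempty := by
    rw [← card_pos]; exact lt_of_lt_of_le (by exact_mod_cast hq1) hq
  have hn : (0:ℝ) < W.card := by exact_mod_cast hW.card_pos
  set r := ⌊δ * q / (8 * M)⌋₊ with hr
  have hr1 : (r : ℝ) ≤ δ * q / (8 * M) := Nat.floor_le (by positivity)
  have hr2 : δ * q / (16 * M) ≤ r := by
    have h1 := Nat.lt_floor_add_one (δ * q / (8 * M))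
    have h2 : δ * q / (8 * M) = 2 * (δ * q / (16 * M)) := by field_simp; norm_num
    have h3 : 1 ≤ δ * q / (16 * M) := by rw [le_div_iff₀ (by positivity)]; linarith
    linarith
  have hrM : (r : ℝ) * (8 * M) ≤ δ * q := by rwa [le_div_iff₀ (by positivity)] at hr1
  set G : (ι → V) → ℝ := fun y => 1 + F y with hGd
  have hG : ∀ y, 0 ≤ G y := fun y => by have := abs_le.1 (hF y); simp only [hGd]; linarith
  have hG2 : ∀ y, G y ≤ 2 := fun y => by have := abs_le.1 (hF y); simp only [hGd]; linarith
  set B := (W.powersetCard q).filter fun Q => δ < 𝔼 y ∈ tuples ι Q, F y with hB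
  have hmul : ∀ U : Finset V, U.Nonempty → 𝔼 y ∈ tuples ι U, G y = 1 + 𝔼 y ∈ tuples ι U, F y := by
    intro U hU
    rw [hGd, expect_add_distrib, expect_const (tuples_nonempty hU)]
  have hlow : ∀ Q ∈ B, ((1 + δ / 2) * (q : ℝ) ^ m) ^ r ≤ disjSum G Q r ∅ := by
    intro Q hQ
    simp only [hB, mem_filter, mem_powersetCard] at hQ
    have hQc : Q.card = q := hQ.1.2
    have hQn : Q.Nonempty := by rw [← card_pos, hQc]; exact_mod_cast hq1
    have := le_disjSum (ι := ι) hG hG2 hQn (κ := 1 + δ / 2) (by positivity) (s := r * m) ?_ r ∅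
      (by simp [hm])
    · rwa [hQc] at this
    · rw [hmul Q hQn, hQc, ← hm]
      push_cast
      have : (m * ((r : ℝ) * m / q) + (m : ℝ) ^ 2 / q) ≤ δ / 4 := by
        rw [← mul_div_assoc, ← add_div, div_le_iff₀ hq1]
        have h1 : (r : ℝ) * (m : ℝ) ^ 2 ≤ r * M := by gcongr
        nlinarith
      linarith [hQ.2]
  have hup := sum_disjSum_le (ι := ι) hG hq hW r ∅ (empty_subset _)
  have hEG : ∑ y ∈ tuples ι W, G y ≤ (1 + δ / 8) * (W.card : ℝ) ^ m := by
    have h1 := hmul W hW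
    rw [expect_eq_sum_div_card, div_eq_iff (by rw [card_tuples]; positivity), card_tuples] at h1
    rw [h1]
    push_cast
    gcongr
  have hpq : (0:ℝ) < ((q : ℝ) ^ m) ^ r := by positivity
  have h1 : (B.card : ℝ) * ((1 + δ / 2) * (q : ℝ) ^ m) ^ r ≤
      ((1 + δ / 8) * (W.card : ℝ) ^ m) ^ r *
        ((q / W.card : ℝ) ^ (r * m) * (W.card.choose q : ℝ)) := by
    calc _ = ∑ Q ∈ B, ((1 + δ / 2) * (q : ℝ) ^ m) ^ r := by rw [sum_const, nsmul_eq_mul]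
      _ ≤ ∑ Q ∈ B, disjSum G Q r ∅ := sum_le_sum hlow
      _ ≤ ∑ Q ∈ (W.powersetCard q).filter (∅ ⊆ ·), disjSum G Q r ∅ := by
          refine sum_le_sum_of_subset_of_nonneg ?_ fun Q _ _ => disjSum_nonneg hG _ _ _
          intro Q hQ
          exact mem_filter.2 ⟨(mem_filter.1 hQ).1, empty_subset _⟩
      _ ≤ _ := hup
      _ ≤ _ := by
          rw [card_empty, zero_add]
          gcongr
          exact sum_nonneg fun y _ => hG y
  have h2 : ((1 + δ / 8) * (W.card : ℝ) ^ m) ^ r *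
        ((q / W.card : ℝ) ^ (r * m) * (W.card.choose q : ℝ)) =
      (1 + δ / 8) ^ r * ((q : ℝ) ^ m) ^ r * (W.card.choose q : ℝ) := by
    rw [mul_comm r m, pow_mul, div_pow, mul_pow, div_pow]
    field_simp
  rw [h2, mul_pow] at h1
  have h3 : (B.card : ℝ) * (1 + δ / 2) ^ r ≤ (1 + δ / 8) ^ r * (W.card.choose q : ℝ) := by
    refine le_of_mul_le_mul_right ?_ hpq
    linarith
  have h4 : (1 + δ / 8) ^ r ≤ Real.exp (-(δ / 8) * r) * (1 + δ / 2) ^ r := by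
    rw [mul_comm _ (r : ℝ), Real.exp_nat_mul, ← mul_pow]
    refine pow_le_pow_left₀ (by positivity) ?_ r
    have := Real.add_one_le_exp (-(δ / 8))
    nlinarith [this]
  have h5 : (B.card : ℝ) ≤ Real.exp (-(δ / 8) * r) * (W.card.choose q : ℝ) := by
    have hp : (0:ℝ) < (1 + δ / 2) ^ r := by positivity
    refine le_of_mul_le_mul_right (h3.trans ?_) hp
    calc _ ≤ Real.exp (-(δ / 8) * r) * (1 + δ / 2) ^ r * (W.card.choose q : ℝ) := by gcongr
      _ = _ := by ring
  rw [card_powersetCard]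
  refine h5.trans ?_
  refine mul_le_mul_of_nonneg_right (Real.exp_le_exp.2 ?_) (Nat.cast_nonneg _)
  have : δ / 8 * (δ * q / (16 * M)) = δ ^ 2 / (128 * M) * q := by field_simp; norm_num
  have := mul_le_mul_of_nonneg_left hr2 (by positivity : 0 ≤ δ / 8)
  linarith

lemma expect_tuples_sum {V : Type*} {κ : Type*} [Fintype κ] [DecidableEq κ] (U : Finset V)
    (g : (ι → V) → (κ → V) → ℝ) :
    𝔼 w ∈ tuples (ι ⊕ κ) U, g (w ∘ Sum.inl) (w ∘ Sum.inr) =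
      𝔼 x ∈ tuples ι U, 𝔼 z ∈ tuples κ U, g x z := by
  rw [← expect_product']
  refine expect_nbij' (fun w => (w ∘ Sum.inl, w ∘ Sum.inr)) (fun p => Sum.elim p.1 p.2)
    ?_ ?_ ?_ ?_ ?_
  · intro w hw
    simp only [mem_product, mem_tuples] at hw ⊢
    exact ⟨fun i => hw _, fun i => hw _⟩
  · rintro ⟨x, z⟩ h
    simp only [mem_product, mem_tuples] at h ⊢
    rintro (i | i)
    · exact h.1 i
    · exact h.2 i
  · intro w _; ext (i | i) <;> rfl
  · rintro ⟨x, z⟩ _; rfl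
  · intro w _; rfl

end SamplingTail

section Patterns

variable {V : Type*} [DecidableEq V]

namespace LabFam

variable (F : LabFam V)

/-- `T` is a crossing set over the index set `X` whose labels up to level `m` are given by `ℓ`. -/
def Match (m : ℕ) (X : Finset ℕ) (ℓ : Finset ℕ → ℕ) (T : Finset V) : Prop :=
  T ⊆ F.gnd ∧ Set.InjOn F.vIdx T ∧ T.image F.vIdx ⊆ X ∧
    ∀ R ⊆ T, 2 ≤ R.card → R.card ≤ m → F.lbl R.card R = ℓ (R.image F.vIdx)

/-- The `j`-sets with index set inside `X` and labels `ℓ` up to level `m`. -/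
noncomputable def matchSet (j m : ℕ) (X : Finset ℕ) (ℓ : Finset ℕ → ℕ) : Finset (Finset V) :=
  (F.gnd.powersetCard j).filter (F.Match m X ℓ)

/-- The labels of the subsets of `J`, as a function of their index sets. -/
def lab (J : Finset V) (M : Finset ℕ) : ℕ := F.lbl M.card (J.filter fun v => F.vIdx v ∈ M)

/-- The vertex classes are the fibres of the index function. -/
structure VStd : Prop where
  vClass_eq : ∀ v ∈ F.gnd, F.vClass v = F.gnd.filter fun u => F.vIdx u = F.vIdx v

/-- The level-`j` class of a crossing set consists of the sets with the same indices and labels. -/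
def ClsStd (j : ℕ) : Prop :=
  ∀ J ∈ F.toPartFam.cross j, F.cls j J = F.matchSet j j (J.image F.vIdx) (F.lab J)

variable {F}

lemma mem_matchSet {j m : ℕ} {X : Finset ℕ} {ℓ : Finset ℕ → ℕ} {T : Finset V} :
    T ∈ F.matchSet j m X ℓ ↔ T.card = j ∧ F.Match m X ℓ T := by
  simp only [matchSet, mem_filter, mem_powersetCard, Match]
  tauto

lemma Match.mono {m m' : ℕ} {X : Finset ℕ} {ℓ : Finset ℕ → ℕ} {T : Finset V}
    (h : F.Match m X ℓ T) (hm : m' ≤ m) : F.Match m' X ℓ T :=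
  ⟨h.1, h.2.1, h.2.2.1, fun R hR h2 hR' => h.2.2.2 R hR h2 (hR'.trans hm)⟩

lemma Match.subset {m : ℕ} {X : Finset ℕ} {ℓ : Finset ℕ → ℕ} {T T' : Finset V}
    (h : F.Match m X ℓ T) (hT : T' ⊆ T) : F.Match m X ℓ T' :=
  ⟨hT.trans h.1, h.2.1.mono (by exact_mod_cast hT), (image_subset_image hT).trans h.2.2.1,
    fun R hR => h.2.2.2 R (hR.trans hT)⟩

lemma Match.congr {m : ℕ} {X : Finset ℕ} {ℓ ℓ' : Finset ℕ → ℕ} {T : Finset V}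
    (h : F.Match m X ℓ T) (hl : ∀ M ⊆ X, 2 ≤ M.card → M.card ≤ m → ℓ M = ℓ' M) :
    F.Match m X ℓ' T := by
  refine ⟨h.1, h.2.1, h.2.2.1, fun R hR h2 hm => ?_⟩
  have hc : (R.image F.vIdx).card = R.card :=
    card_image_of_injOn (h.2.1.mono (by exact_mod_cast hR))
  rw [h.2.2.2 R hR h2 hm, hl _ ((image_subset_image hR).trans h.2.2.1) (by omega) (by omega)]

lemma matchSet_congr {j m : ℕ} {X : Finset ℕ} {ℓ ℓ' : Finset ℕ → ℕ}
    (hl : ∀ M ⊆ X, 2 ≤ M.card → M.card ≤ m → ℓ M = ℓ' M) :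
    F.matchSet j m X ℓ = F.matchSet j m X ℓ' := by
  ext T
  rw [mem_matchSet, mem_matchSet]
  exact and_congr_right fun _ => ⟨fun h => h.congr hl,
    fun h => h.congr fun M hM h2 hm => (hl M hM h2 hm).symm⟩

lemma filter_mem_image_eq {J R : Finset V} (hJ : Set.InjOn F.vIdx J) (hR : R ⊆ J) :
    J.filter (fun v => F.vIdx v ∈ R.image F.vIdx) = R := by
  ext v
  simp only [mem_filter, mem_image]
  constructor
  · rintro ⟨hv, u, hu, huv⟩
    rwa [← hJ (hR hu) hv huv]
  · exact fun hv => ⟨hR hv, v, hv, rfl⟩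

lemma lab_image {J R : Finset V} (hJ : Set.InjOn F.vIdx J) (hR : R ⊆ J) :
    F.lab J (R.image F.vIdx) = F.lbl R.card R := by
  rw [lab, filter_mem_image_eq hJ hR, card_image_of_injOn (hJ.mono (by exact_mod_cast hR))]

lemma match_lab {J : Finset V} (hJg : J ⊆ F.gnd) (hJ : Set.InjOn F.vIdx J) (m : ℕ) :
    F.Match m (J.image F.vIdx) (F.lab J) J :=
  ⟨hJg, hJ, subset_rfl, fun _ hR _ _ => (lab_image hJ hR).symm⟩

lemma exists_subset_image_eq {J : Finset V} {M : Finset ℕ} (hM : M ⊆ J.image F.vIdx) :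
    (J.filter fun v => F.vIdx v ∈ M).image F.vIdx = M := by
  ext i
  simp only [mem_image, mem_filter]
  constructor
  · rintro ⟨v, ⟨-, hv⟩, rfl⟩; exact hv
  · intro hi
    obtain ⟨v, hv, rfl⟩ := mem_image.1 (hM hi)
    exact ⟨v, ⟨hv, hi⟩, rfl⟩

lemma lab_eq_of_match {m : ℕ} {X : Finset ℕ} {ℓ : Finset ℕ → ℕ} {T : Finset V}
    (h : F.Match m X ℓ T) {M : Finset ℕ} (hM : M ⊆ T.image F.vIdx) (h2 : 2 ≤ M.card)
    (hm : M.card ≤ m) : F.lab T M = ℓ M := by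
  obtain ⟨R, hR, rfl⟩ : ∃ R ⊆ T, R.image F.vIdx = M :=
    ⟨_, filter_subset _ _, exists_subset_image_eq hM⟩
  have hc : (R.image F.vIdx).card = R.card :=
    card_image_of_injOn (h.2.1.mono (by exact_mod_cast hR))
  rw [lab_image h.2.1 hR]
  exact h.2.2.2 R hR (by omega) (by omega)

lemma lab_subset {J J' : Finset V} (hJ : Set.InjOn F.vIdx J) (hJ' : J' ⊆ J) {M : Finset ℕ}
    (hM : M ⊆ J'.image F.vIdx) : F.lab J' M = F.lab J M := by
  obtain ⟨R, hR, rfl⟩ : ∃ R ⊆ J', R.image F.vIdx = M :=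
    ⟨_, filter_subset _ _, exists_subset_image_eq hM⟩
  rw [lab_image hJ (hR.trans hJ'), lab_image (hJ.mono (by exact_mod_cast hJ')) hR]

lemma VStd.vClass_eq_iff (hF : F.VStd) {u v : V} (hu : u ∈ F.gnd) (hv : v ∈ F.gnd) :
    F.vClass u = F.vClass v ↔ F.vIdx u = F.vIdx v := by
  rw [hF.vClass_eq u hu, hF.vClass_eq v hv]
  constructor
  · intro h
    have : u ∈ F.gnd.filter fun w => F.vIdx w = F.vIdx v := by rw [← h]; simp [hu]
    exact (mem_filter.1 this).2
  · intro h; rw [h]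

lemma VStd.mem_cross (hF : F.VStd) {i : ℕ} {I : Finset V} :
    I ∈ F.toPartFam.cross i ↔ I ⊆ F.gnd ∧ I.card = i ∧ Set.InjOn F.vIdx I := by
  simp only [PartFam.cross, mem_filter, mem_powersetCard, and_assoc]
  refine and_congr_right fun hI => and_congr_right fun _ => ?_
  constructor
  · intro h u hu v hv huv
    by_contra hne
    exact h u hu v hv hne ((hF.vClass_eq_iff (hI hu) (hI hv)).2 huv)
  · intro h u hu v hv hne huv
    exact hne (h hu hv ((hF.vClass_eq_iff (hI hu) (hI hv)).1 huv))

lemma VStd.polyad_eq (hF : F.VStd) {m j : ℕ} (hm : 1 ≤ m) (hcl : 2 ≤ m → F.ClsStd m)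
    {J : Finset V} (hJ : J ∈ F.toPartFam.cross j) :
    F.toPartFam.polyad m J = F.matchSet m m (J.image F.vIdx) (F.lab J) := by
  obtain ⟨hJg, hJc, hJi⟩ := hF.mem_cross.1 hJ
  rcases hm.eq_or_lt with rfl | hm2
  · ext T
    simp only [PartFam.polyad, if_true, sing, mem_image, mem_sup, mem_matchSet, Match]
    constructor
    · rintro ⟨v, ⟨u, hu, hv⟩, rfl⟩
      rw [hF.vClass_eq u (hJg hu), mem_filter] at hv
      refine ⟨card_singleton v, singleton_subset_iff.2 hv.1, by simp, ?_, ?_⟩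
      · rw [image_singleton, singleton_subset_iff, hv.2]
        exact mem_image_of_mem _ hu
      · intro R hR h2 h1; omega
    · rintro ⟨hc, hg, -, hX, -⟩
      obtain ⟨v, rfl⟩ := card_eq_one.1 hc
      rw [image_singleton, singleton_subset_iff] at hX
      obtain ⟨u, hu, huv⟩ := mem_image.1 hX
      refine ⟨v, ⟨u, hu, ?_⟩, rfl⟩
      rw [hF.vClass_eq u (hJg hu), mem_filter]
      exact ⟨singleton_subset_iff.1 hg, huv.symm⟩
  · ext T
    rw [PartFam.polyad, if_neg (by omega), mem_sup]
    constructor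
    · rintro ⟨J', hJ', hT⟩
      rw [mem_powersetCard] at hJ'
      have hi' : Set.InjOn F.vIdx J' := hJi.mono (by exact_mod_cast hJ'.1)
      rw [hcl hm2 J' (hF.mem_cross.2 ⟨hJ'.1.trans hJg, hJ'.2, hi'⟩), mem_matchSet] at hT
      refine mem_matchSet.2 ⟨hT.1, ?_⟩
      have := hT.2.congr (fun M hM _ _ => lab_subset hJi hJ'.1 hM)
      exact ⟨this.1, this.2.1, this.2.2.1.trans (image_subset_image hJ'.1), this.2.2.2⟩
    · intro hT
      rw [mem_matchSet] at hT
      obtain ⟨J', hJ', hJT⟩ : ∃ R ⊆ J, R.image F.vIdx = T.image F.vIdx :=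
        ⟨_, filter_subset _ _, exists_subset_image_eq hT.2.2.2.1⟩
      have hi' : Set.InjOn F.vIdx J' := hJi.mono (by exact_mod_cast hJ')
      have hc' : J'.card = m := by
        rw [← card_image_of_injOn hi', hJT, card_image_of_injOn hT.2.2.1, hT.1]
      refine ⟨J', mem_powersetCard.2 ⟨hJ', hc'⟩, ?_⟩
      rw [hcl hm2 J' (hF.mem_cross.2 ⟨hJ'.trans hJg, hc', hi'⟩), mem_matchSet]
      refine ⟨hT.1, ?_⟩
      have h1 : F.Match m (J'.image F.vIdx) (F.lab J) T :=
        ⟨hT.2.1, hT.2.2.1, hJT ▸ subset_rfl, hT.2.2.2.2⟩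
      exact h1.congr fun M hM _ _ => (lab_subset hJi hJ' hM).symm

lemma VStd.mem_KsetC (hF : F.VStd) {j : ℕ} (hj : 2 ≤ j) {X : Finset ℕ} {ℓ : Finset ℕ → ℕ}
    {S : Finset (Finset V)} (hS : S ⊆ F.matchSet (j - 1) (j - 1) X ℓ) {I : Finset V} :
    I ∈ KsetC F.gnd (F.toPartFam.cross j) (j - 1) j S ↔
      F.Match (j - 1) X ℓ I ∧ I.card = j ∧ ∀ T ∈ I.powersetCard (j - 1), T ∈ S := by
  have key : (∀ T ∈ I.powersetCard (j - 1), T ∈ S) → I.card = j → I ⊆ F.gnd →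
      Set.InjOn F.vIdx I → F.Match (j - 1) X ℓ I := by
    intro h hc hg hi
    have hT : ∀ R ⊆ I, R.card ≤ j - 1 → ∃ T, R ⊆ T ∧ F.Match (j - 1) X ℓ T := by
      intro R hR hRc
      obtain ⟨T, hRT, hTI, hTc⟩ := exists_subsuperset_card_eq hR hRc (by omega)
      exact ⟨T, hRT, (mem_matchSet.1 (hS (h T (mem_powersetCard.2 ⟨hTI, hTc⟩)))).2⟩
    refine ⟨hg, hi, ?_, ?_⟩
    · intro i hi
      obtain ⟨v, hv, rfl⟩ := mem_image.1 hi
      obtain ⟨T, hRT, hT⟩ := hT {v} (singleton_subset_iff.2 hv) (by simp; omega)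
      exact hT.2.2.1 (mem_image_of_mem _ (singleton_subset_iff.1 hRT))
    · intro R hR h2 hm
      obtain ⟨T, hRT, hT⟩ := hT R hR hm
      exact hT.2.2.2 R hRT h2 hm
  rw [KsetC]
  split_ifs with h1
  · rw [mem_filter, hF.mem_cross]
    have e : (∀ T ∈ I.powersetCard (j - 1), T ∈ S) ↔ ∀ v ∈ I, {v} ∈ S := by
      rw [h1]; simp [powersetCard_one]
    rw [← e]
    constructor
    · rintro ⟨⟨hg, hc, hi⟩, h⟩
      exact ⟨key h hc hg hi, hc, h⟩
    · rintro ⟨hm, hc, h⟩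
      exact ⟨⟨hm.1, hc, hm.2.1⟩, h⟩
  · rw [Kset, mem_filter, mem_powersetCard (t := F.gnd)]
    constructor
    · rintro ⟨⟨hg, hc⟩, h⟩
      refine ⟨key h hc hg ?_, hc, h⟩
      intro u hu v hv huv
      have hR : ({u, v} : Finset V) ⊆ I := by
        intro x hx
        rcases mem_insert.1 hx with rfl | hx
        · exact hu
        · rw [mem_singleton.1 hx]; exact hv
      obtain ⟨T, hRT, hTI, hTc⟩ := exists_subsuperset_card_eq hR
        (card_le_two.trans (by omega : 2 ≤ j - 1)) (by omega)
      have := (mem_matchSet.1 (hS (h T (mem_powersetCard.2 ⟨hTI, hTc⟩)))).2.2.1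
      exact this (hRT (by simp)) (hRT (by simp)) huv
    · rintro ⟨hm, hc, h⟩
      exact ⟨⟨hm.1, hc⟩, h⟩

lemma VStd.KsetC_matchSet (hF : F.VStd) {j : ℕ} (hj : 2 ≤ j) {X : Finset ℕ}
    {ℓ : Finset ℕ → ℕ} :
    KsetC F.gnd (F.toPartFam.cross j) (j - 1) j (F.matchSet (j - 1) (j - 1) X ℓ) =
      F.matchSet j (j - 1) X ℓ := by
  ext I
  rw [hF.mem_KsetC hj subset_rfl, mem_matchSet]
  constructor
  · exact fun h => ⟨h.2.1, h.1⟩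
  · refine fun h => ⟨h.2, h.1, fun T hT => ?_⟩
    rw [mem_powersetCard] at hT
    exact mem_matchSet.2 ⟨hT.2, h.2.subset hT.1⟩

lemma VStd.polyCliques_eq (hF : F.VStd) {j : ℕ} (hj : 2 ≤ j)
    (hcl : 2 ≤ j - 1 → F.ClsStd (j - 1)) {J : Finset V} (hJ : J ∈ F.toPartFam.cross j) :
    F.toPartFam.polyCliques j J = F.matchSet j (j - 1) (J.image F.vIdx) (F.lab J) := by
  rw [PartFam.polyCliques, hF.polyad_eq (by omega) hcl hJ, hF.KsetC_matchSet hj]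

lemma IsLabeled.vStd {k : ℕ} {a : ℕ → ℕ} (hF : F.IsLabeled k a) : F.VStd := by
  obtain ⟨⟨h1, h2, h3, -⟩, -, hidx, -⟩ := hF
  refine ⟨fun v hv => ?_⟩
  ext u
  rw [mem_filter]
  constructor
  · intro hu
    exact ⟨h2 v hv hu, (hidx u (h2 v hv hu) v hv).2 (h3 u (h2 v hv hu) v hv hu)⟩
  · rintro ⟨hu, huv⟩
    rw [← (hidx u hu v hv).1 huv]
    exact h1 u hu

/-- two crossing sets with equal index sets and equal labels below level `j` -/
lemma image_eq_of_match {j m : ℕ} {J I : Finset V} {ℓ : Finset ℕ → ℕ} (hJ : J.card = j)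
    (hI : I.card = j) (h : F.Match m (J.image F.vIdx) ℓ I) : I.image F.vIdx = J.image F.vIdx := by
  refine eq_of_subset_of_card_le h.2.2.1 ?_
  rw [card_image_of_injOn h.2.1, hI, ← hJ]
  exact card_image_le

lemma IsLabeled.clsStd {k : ℕ} {a : ℕ → ℕ} (hF : F.IsLabeled k a) :
    ∀ j, 2 ≤ j → j ≤ k - 1 → F.ClsStd j := by
  intro j
  induction j using Nat.strong_induction_on with
  | _ j ih =>
    intro hj hjk J hJ
    have hV := hF.vStd
    have hcl : 2 ≤ j - 1 → F.ClsStd (j - 1) := fun h => ih (j - 1) (by omega) h (by omega)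
    obtain ⟨hfam, -, -, hlab⟩ := hF
    obtain ⟨hs, he, hsub, -, -⟩ := hfam.2.2.2.2.2 j hj hjk
    obtain ⟨-, hconst, hdet⟩ := hlab j hj hjk
    obtain ⟨hJg, hJc, hJi⟩ := hV.mem_cross.1 hJ
    ext I
    rw [mem_matchSet]
    constructor
    · intro hI
      have hI' := hsub J hJ hI
      rw [hV.polyCliques_eq hj hcl hJ, mem_matchSet] at hI'
      refine ⟨hI'.1, hI'.2.1, hI'.2.2.1, hI'.2.2.2.1, fun R hR h2 hm => ?_⟩
      rcases hm.eq_or_lt with hm | hm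
      · obtain rfl := eq_of_subset_of_card_le hR (by omega)
        rw [image_eq_of_match hJc hI'.1 hI'.2, lab_image hJi subset_rfl, hI'.1, hJc]
        exact hconst J hJ _ hI
      · exact hI'.2.2.2.2 R hR h2 (by omega)
    · rintro ⟨hIc, hI⟩
      have hIcr : I ∈ F.toPartFam.cross j := hV.mem_cross.2 ⟨hI.1, hIc, hI.2.1⟩
      have himg := image_eq_of_match hJc hIc hI
      have h1 : F.toPartFam.polyad (j - 1) I = F.toPartFam.polyad (j - 1) J := by
        rw [hV.polyad_eq (by omega) hcl hIcr, hV.polyad_eq (by omega) hcl hJ, himg]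
        refine matchSet_congr fun M hM h2 hm => ?_
        exact lab_eq_of_match hI (himg ▸ hM) h2 (by omega)
      have h2 : F.lbl j I = F.lbl j J := by
        have := hI.2.2.2 I subset_rfl (by omega) (by omega)
        rwa [himg, lab_image hJi subset_rfl, hIc, hJc] at this
      rw [← hdet I hIcr J hJ h1 h2]
      exact hs I hIcr

lemma VStd.polyAt_eq (hF : F.VStd) {k : ℕ} (hk : 2 ≤ k) (x : Addr) :
    F.polyAt (k - 1) x = F.matchSet (k - 1) (k - 1) x.1 x.2 := by
  rw [polyAt]
  split_ifs with h1
  · ext T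
    rw [h1]
    simp only [sing, mem_image, mem_filter, mem_matchSet, Match]
    constructor
    · rintro ⟨v, ⟨hv, hvx⟩, rfl⟩
      refine ⟨card_singleton v, singleton_subset_iff.2 hv, by simp, by simpa using hvx, ?_⟩
      intro R hR h2 h1; omega
    · rintro ⟨hc, hg, -, hX, -⟩
      obtain ⟨v, rfl⟩ := card_eq_one.1 hc
      exact ⟨v, ⟨singleton_subset_iff.1 hg, by simpa using hX⟩, rfl⟩
  · ext T
    rw [mem_sup, mem_matchSet]
    have hpart : ∀ B, T ∈ F.partAt (k - 1) (restrictA x (k - 1 - 1) B) (x.2 B) ↔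
        (T ⊆ F.gnd ∧ T.card = k - 1 ∧ Set.InjOn F.vIdx T) ∧
          F.addrOf (k - 1 - 1) T = restrictA x (k - 1 - 1) B ∧ F.lbl (k - 1) T = x.2 B := by
      intro B
      rw [partAt, if_neg (show ¬ k - 1 ≤ 1 by omega), mem_filter, hF.mem_cross]
    simp only [hpart, mem_powersetCard]
    simp only [addrOf, restrictA]
    constructor
    · rintro ⟨B, ⟨hB, hBc⟩, ⟨hg, hc, hi⟩, hadr, hl⟩
      obtain ⟨himg, hfun⟩ := Prod.ext_iff.1 hadr
      dsimp only at himg hfun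
      refine ⟨hc, hg, hi, himg ▸ hB, fun R hR h2 hm => ?_⟩
      rcases hm.eq_or_lt with hm | hm
      · obtain rfl := eq_of_subset_of_card_le hR (by omega)
        rw [himg, hm, hl]
      · have hRc : (R.image F.vIdx).card = R.card :=
          card_image_of_injOn (hi.mono (by exact_mod_cast hR))
        have h3 := congrFun hfun (R.image F.vIdx)
        have hs : R.image F.vIdx ⊆ T.image F.vIdx := image_subset_image hR
        rw [if_pos ⟨hs, by omega, by omega⟩, if_pos ⟨himg ▸ hs, by omega, by omega⟩] at h3
        rw [← h3]
        exact (lab_image hi hR).symm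
    · rintro ⟨hc, h⟩
      have hTc : (T.image F.vIdx).card = k - 1 := by rw [card_image_of_injOn h.2.1, hc]
      refine ⟨T.image F.vIdx, ⟨h.2.2.1, hTc⟩, ⟨h.1, hc, h.2.1⟩, ?_, ?_⟩
      · refine Prod.ext rfl (funext fun M => ?_)
        dsimp only
        split_ifs with hM
        · exact lab_eq_of_match h hM.1 hM.2.1 (by omega)
        · rfl
      · have := h.2.2.2 T subset_rfl (by omega) (by omega)
        rwa [hc] at this

end LabFam
end Patterns

section Follow

variable {V : Type*} [DecidableEq V]

namespace LabFam

variable (F : LabFam V)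

/-- `y` is a tuple with index pattern `c` whose sub-tuples indexed by `𝓛` have labels `ℓ`. -/
def Follows {j : ℕ} (c : Fin j → ℕ) (ℓ : Finset ℕ → ℕ) (𝓛 : Finset (Finset (Fin j)))
    (y : Fin j → V) : Prop :=
  (∀ i, y i ∈ F.gnd ∧ F.vIdx (y i) = c i) ∧
    ∀ L ∈ 𝓛, F.lbl L.card (L.image y) = ℓ (L.image c)

/-- The subsets of `Fin j` of size between `2` and `m`. -/
def midSets (j m : ℕ) : Finset (Finset (Fin j)) := univ.filter fun L => 2 ≤ L.card ∧ L.card ≤ m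

/-- The indicator of `A` on the tuples following the pattern `c, ℓ`, centred at `d`. -/
noncomputable def patF {j : ℕ} (c : Fin j → ℕ) (ℓ : Finset ℕ → ℕ) (A : Finset V → Prop) (d : ℝ)
    (y : Fin j → V) : ℝ :=
  if F.Follows c ℓ (midSets j (j - 1)) y then (if A (univ.image y) then 1 else 0) - d else 0

variable {F}

lemma abs_patF_le {j : ℕ} (c : Fin j → ℕ) (ℓ : Finset ℕ → ℕ) (A : Finset V → Prop) {d : ℝ}
    (hd : 0 ≤ d) (hd1 : d ≤ 1) (y : Fin j → V) : |F.patF c ℓ A d y| ≤ 1 := by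
  rw [patF]
  split_ifs <;> rw [abs_le] <;> constructor <;> linarith

section

variable {j : ℕ} {c : Fin j → ℕ} {ℓ : Finset ℕ → ℕ} {𝓛 : Finset (Finset (Fin j))}
  {y : Fin j → V}

lemma Follows.injective (hc : Function.Injective c) (h : F.Follows c ℓ 𝓛 y) :
    Function.Injective y := by
  intro i i' hii
  exact hc (by rw [← (h.1 i).2, ← (h.1 i').2, hii])

lemma Follows.injOn (hc : Function.Injective c) (h : F.Follows c ℓ 𝓛 y) :
    Set.InjOn F.vIdx (univ.image y : Finset V) := by
  intro u hu v hv huv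
  simp only [coe_image, coe_univ, Set.image_univ, Set.mem_range] at hu hv
  obtain ⟨i, rfl⟩ := hu
  obtain ⟨i', rfl⟩ := hv
  rw [(h.1 i).2, (h.1 i').2] at huv
  rw [hc huv]

lemma Follows.image_image (h : F.Follows c ℓ 𝓛 y) (L : Finset (Fin j)) :
    (L.image y).image F.vIdx = L.image c := by
  rw [Finset.image_image]
  exact image_congr fun i _ => (h.1 i).2

lemma Follows.match {m : ℕ} (hc : Function.Injective c) (h : F.Follows c ℓ (midSets j m) y) :
    F.Match m (univ.image c) ℓ (univ.image y) := by
  refine ⟨?_, h.injOn hc, (h.image_image univ).subset, fun R hR h2 hm => ?_⟩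
  · intro v hv
    obtain ⟨i, -, rfl⟩ := mem_image.1 hv
    exact (h.1 i).1
  · obtain ⟨L, -, rfl⟩ := subset_image_iff.1 hR
    have hLc : (L.image y).card = L.card := card_image_of_injective _ (h.injective hc)
    rw [h.image_image L, hLc]
    exact h.2 L (by simp only [midSets, mem_filter, mem_univ, true_and]; omega)

lemma exists_follows {m : ℕ} (hc : Function.Injective c) {I : Finset V}
    (h : F.Match m (univ.image c) ℓ I) (hI : I.card = j) :
    ∃ y, F.Follows c ℓ (midSets j m) y ∧ univ.image y = I := by
  have himg : I.image F.vIdx = univ.image c := by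
    refine eq_of_subset_of_card_le h.2.2.1 ?_
    rw [card_image_of_injOn h.2.1, hI]
    exact card_image_le.trans (by simp)
  have hex : ∀ i, ∃ v ∈ I, F.vIdx v = c i := fun i =>
    mem_image.1 (himg ▸ mem_image_of_mem c (mem_univ i))
  choose y hy hyc using hex
  have hinj : Function.Injective y := fun i i' hii => hc (by rw [← hyc, ← hyc, hii])
  have hyI : univ.image y = I := by
    refine eq_of_subset_of_card_le ?_ ?_
    · intro v hv
      obtain ⟨i, -, rfl⟩ := mem_image.1 hv
      exact hy i
    · rw [card_image_of_injective _ hinj, hI]; simp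
  refine ⟨y, ⟨fun i => ⟨h.1 (hy i), hyc i⟩, fun L hL => ?_⟩, hyI⟩
  simp only [midSets, mem_filter, mem_univ, true_and] at hL
  have hLc : (L.image y).card = L.card := card_image_of_injective _ hinj
  have hsub : L.image y ⊆ I := hyI ▸ image_subset_image (subset_univ L)
  have := h.2.2.2 (L.image y) hsub (by omega) (by omega)
  rw [hLc, Finset.image_image] at this
  rw [this]
  congr 1
  exact image_congr fun i _ => hyc i

lemma sum_KsetC_eq (hF : F.VStd) (hj : 2 ≤ j) (hc : Function.Injective c)
    {S : Finset (Finset V)} (hS : S ⊆ F.matchSet (j - 1) (j - 1) (univ.image c) ℓ)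
    (g : Finset V → ℝ) :
    ∑ I ∈ KsetC F.gnd (F.toPartFam.cross j) (j - 1) j S, g I =
      ∑ y ∈ (tuples (Fin j) F.gnd).filter fun y => F.Follows c ℓ (midSets j (j - 1)) y ∧
        ∀ i, (univ.erase i).image y ∈ S, g (univ.image y) := by
  symm
  refine sum_bij (fun y _ => univ.image y) ?_ ?_ ?_ ?_
  · intro y hy
    simp only [mem_filter] at hy
    obtain ⟨-, hy, hyS⟩ := hy
    have hinj := hy.injective hc
    rw [hF.mem_KsetC hj hS]
    have hcard : (univ.image y).card = j := by rw [card_image_of_injective _ hinj]; simp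
    refine ⟨hy.match hc, hcard, fun T hT => ?_⟩
    rw [mem_powersetCard] at hT
    obtain ⟨L, -, rfl⟩ := subset_image_iff.1 hT.1
    rw [card_image_of_injective _ hinj] at hT
    have : (Lᶜ).card = 1 := by rw [card_compl, hT.2]; simp; omega
    obtain ⟨i, hi⟩ := card_eq_one.1 this
    have : L = univ.erase i := by
      rw [← compl_compl L, hi]; ext; simp
    rw [this]
    exact hyS i
  · intro y hy y' hy' hyy
    simp only [mem_filter] at hy hy'
    funext i
    have : y i ∈ univ.image y' := hyy ▸ mem_image_of_mem y (mem_univ i)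
    obtain ⟨i', -, hi'⟩ := mem_image.1 this
    have : i' = i := hc (by rw [← (hy.2.1.1 i).2, ← (hy'.2.1.1 i').2, hi'])
    rw [← hi', this]
  · intro I hI
    rw [hF.mem_KsetC hj hS] at hI
    obtain ⟨y, hy, rfl⟩ := exists_follows hc hI.1 hI.2.1
    refine ⟨y, mem_filter.2 ⟨mem_tuples.2 fun i => (hy.1 i).1, hy, fun i => hI.2.2 _ ?_⟩, rfl⟩
    rw [mem_powersetCard]
    refine ⟨image_subset_image (subset_univ _), ?_⟩
    rw [card_image_of_injective _ (hy.injective hc)]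
    simp
  · intro y _; rfl

lemma card_KsetC_eq (hF : F.VStd) (hj : 2 ≤ j) (hc : Function.Injective c)
    {S : Finset (Finset V)} (hS : S ⊆ F.matchSet (j - 1) (j - 1) (univ.image c) ℓ) :
    (KsetC F.gnd (F.toPartFam.cross j) (j - 1) j S).card =
      ((tuples (Fin j) F.gnd).filter fun y => F.Follows c ℓ (midSets j (j - 1)) y ∧
        ∀ i, (univ.erase i).image y ∈ S).card := by
  have := sum_KsetC_eq hF hj hc hS (fun _ => 1)
  simpa using this

lemma card_inter_KsetC_sub (hF : F.VStd) (hj : 2 ≤ j) (hc : Function.Injective c)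
    {S : Finset (Finset V)} (hS : S ⊆ F.matchSet (j - 1) (j - 1) (univ.image c) ℓ)
    (A : Finset (Finset V)) (d : ℝ) :
    ((A ∩ KsetC F.gnd (F.toPartFam.cross j) (j - 1) j S).card : ℝ) -
      d * ((KsetC F.gnd (F.toPartFam.cross j) (j - 1) j S).card : ℝ) =
    ∑ y ∈ tuples (Fin j) F.gnd, F.patF c ℓ (· ∈ A) d y *
      ∏ i, (if (univ.erase i).image y ∈ S then (1:ℝ) else 0) := by
  have h := sum_KsetC_eq hF hj hc hS (fun I => (if I ∈ A then (1:ℝ) else 0) - d)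
  rw [sum_sub_distrib, sum_const, sum_boole, nsmul_eq_mul, mul_comm _ d, filter_mem_eq_inter,
    inter_comm] at h
  rw [h, sum_filter]
  refine sum_congr rfl fun y _ => ?_
  rw [prod_boole, patF]
  by_cases h1 : F.Follows c ℓ (midSets j (j - 1)) y <;>
    by_cases h2 : ∀ i, (univ.erase i).image y ∈ S <;> simp [h1, h2]

/-- Regularity with respect to a polyad bounds the correlation with functions of fewer variables. -/
lemma abs_expect_patF_le (hF : F.VStd) (hg : F.gnd.Nonempty) (hj : 2 ≤ j)
    (hc : Function.Injective c)
    {A : Finset (Finset V)} {d ε : ℝ} (hε : 0 ≤ ε) (hd : 0 ≤ d) (hd1 : d ≤ 1)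
    (hreg : RegPairC F.gnd (F.toPartFam.cross j) (j - 1) ε d A
      (F.matchSet (j - 1) (j - 1) (univ.image c) ℓ))
    (u : Fin j → (Fin j → V) → ℝ) (hu : ∀ i, DependsOn (u i) {i}ᶜ)
    (hu1 : ∀ i y, u i y = 0 ∨ u i y = 1) :
    |𝔼 y ∈ tuples (Fin j) F.gnd, F.patF c ℓ (· ∈ A) d y * ∏ i, u i y| ≤ ε := by
  set S := (F.matchSet (j - 1) (j - 1) (univ.image c) ℓ).filter fun T =>
    ∃ i y, (∀ b, F.vIdx (y b) = c b) ∧ T = (univ.erase i).image y ∧ u i y = 1 with hSd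
  have hS : S ⊆ F.matchSet (j - 1) (j - 1) (univ.image c) ℓ := filter_subset _ _
  have key : ∀ y, F.Follows c ℓ (midSets j (j - 1)) y → ∀ i,
      u i y = if (univ.erase i).image y ∈ S then (1:ℝ) else 0 := by
    intro y hy i
    split_ifs with h
    · obtain ⟨i', y', hy', hT, hu'⟩ := (mem_filter.1 h).2
      have himg : ∀ (z : Fin j → V) b, (∀ b, F.vIdx (z b) = c b) →
          ((univ.erase b).image z).image F.vIdx = (univ.erase b).image c := by
        intro z b hz
        rw [Finset.image_image]
        exact image_congr fun i _ => hz i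
      have hii : i = i' := by
        have h1 := himg y i fun b => (hy.1 b).2
        rw [hT, himg y' i' hy'] at h1
        have h2 := image_injective hc h1
        by_contra hne
        have : i ∈ univ.erase i' := by simp [hne]
        rw [h2] at this
        simp at this
      subst hii
      rw [← hu']
      refine hu i fun b hb => ?_
      have : y b ∈ (univ.erase i).image y' :=
        hT ▸ mem_image_of_mem y (by simpa using hb)
      obtain ⟨b', -, hb'⟩ := mem_image.1 this
      have : b' = b := hc (by rw [← hy', hb', (hy.1 b).2])
      rw [← hb', this]
    · rcases hu1 i y with h0 | h1
      · exact h0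
      · refine absurd (mem_filter.2 ⟨?_, i, y, fun b => (hy.1 b).2, rfl, h1⟩) h
        rw [mem_matchSet]
        refine ⟨?_, (hy.match hc).subset (image_subset_image (subset_univ _))⟩
        rw [card_image_of_injective _ (hy.injective hc)]
        simp
  have hsum : ∑ y ∈ tuples (Fin j) F.gnd, F.patF c ℓ (· ∈ A) d y * ∏ i, u i y =
      ∑ y ∈ tuples (Fin j) F.gnd, F.patF c ℓ (· ∈ A) d y *
        ∏ i, (if (univ.erase i).image y ∈ S then (1:ℝ) else 0) := by
    refine sum_congr rfl fun y _ => ?_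
    by_cases hy : F.Follows c ℓ (midSets j (j - 1)) y
    · rw [prod_congr rfl fun i _ => key y hy i]
    · simp [patF, hy]
  have hn : (0:ℝ) < (tuples (Fin j) F.gnd).card := by
    exact_mod_cast (tuples_nonempty hg).card_pos
  rw [expect_eq_sum_div_card, abs_div, abs_of_pos hn, div_le_iff₀ hn, hsum,
    ← card_inter_KsetC_sub hF hj hc hS]
  have hj1 : j - 1 + 1 = j := by omega
  have hle : ∀ S ⊆ F.matchSet (j - 1) (j - 1) (univ.image c) ℓ,
      ((KsetC F.gnd (F.toPartFam.cross j) (j - 1) j S).card : ℝ) ≤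
        (tuples (Fin j) F.gnd).card := by
    intro S hS
    rw [card_KsetC_eq hF hj hc hS]
    exact_mod_cast card_filter_le _ _
  have hreg := hreg S hS
  rw [hj1] at hreg
  rcases le_or_gt (ε * ((KsetC F.gnd (F.toPartFam.cross j) (j - 1) j
    (F.matchSet (j - 1) (j - 1) (univ.image c) ℓ)).card : ℝ))
    ((KsetC F.gnd (F.toPartFam.cross j) (j - 1) j S).card : ℝ) with h | h
  · exact (hreg h).trans (mul_le_mul_of_nonneg_left (hle S hS) hε)
  · have h1 : ((A ∩ KsetC F.gnd (F.toPartFam.cross j) (j - 1) j S).card : ℝ) ≤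
        (KsetC F.gnd (F.toPartFam.cross j) (j - 1) j S).card := by
      exact_mod_cast card_le_card inter_subset_right
    have h2 := mul_le_mul_of_nonneg_left (hle _ subset_rfl) hε
    have h3 : (0:ℝ) ≤ (KsetC F.gnd (F.toPartFam.cross j) (j - 1) j S).card := by positivity
    have h4 : (0:ℝ) ≤ (A ∩ KsetC F.gnd (F.toPartFam.cross j) (j - 1) j S).card := by positivity
    rw [abs_le]
    constructor <;> nlinarith

/-- Small correlation with functions of fewer variables gives regularity, provided the polyad
has sufficiently many cliques. -/
lemma regPairC_of_abs_expect_le (hF : F.VStd) (hg : F.gnd.Nonempty) (hj : 2 ≤ j)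
    (hc : Function.Injective c)
    {A : Finset (Finset V)} {d ε η γ : ℝ} (hε : 0 < ε) (hη : η ≤ ε ^ 2 * γ)
    (hγ : γ ≤ 𝔼 y ∈ tuples (Fin j) F.gnd,
      (if F.Follows c ℓ (midSets j (j - 1)) y then (1:ℝ) else 0))
    (h : ∀ u : Fin j → (Fin j → V) → ℝ, (∀ i, DependsOn (u i) {i}ᶜ) → (∀ i y, |u i y| ≤ 1) →
      |𝔼 y ∈ tuples (Fin j) F.gnd, F.patF c ℓ (· ∈ A) d y * ∏ i, u i y| ≤ η) :
    RegPairC F.gnd (F.toPartFam.cross j) (j - 1) ε d A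
      (F.matchSet (j - 1) (j - 1) (univ.image c) ℓ) := by
  have hj1 : j - 1 + 1 = j := by omega
  intro S hS hSc
  rw [hj1] at hSc ⊢
  have hn : (0:ℝ) < (tuples (Fin j) F.gnd).card := by
    exact_mod_cast (tuples_nonempty hg).card_pos
  rw [card_inter_KsetC_sub hF hj hc hS]
  have h1 := h (fun i y => if (univ.erase i).image y ∈ S then (1:ℝ) else 0) ?_ ?_
  · rw [expect_eq_sum_div_card, abs_div, abs_of_pos hn, div_le_iff₀ hn] at h1
    rw [expect_eq_sum_div_card, le_div_iff₀ hn, sum_boole] at hγ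
    have h2 : ((KsetC F.gnd (F.toPartFam.cross j) (j - 1) j
        (F.matchSet (j - 1) (j - 1) (univ.image c) ℓ)).card : ℝ) =
        ((tuples (Fin j) F.gnd).filter fun y => F.Follows c ℓ (midSets j (j - 1)) y).card := by
      rw [card_KsetC_eq hF hj hc subset_rfl]
      congr 2
      refine filter_congr fun y _ => ⟨fun h => h.1, fun h => ⟨h, fun i => ?_⟩⟩
      rw [mem_matchSet]
      refine ⟨?_, (h.match hc).subset (image_subset_image (subset_univ _))⟩
      rw [card_image_of_injective _ (h.injective hc)]
      simp
    rw [← h2] at hγ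
    calc _ ≤ η * (tuples (Fin j) F.gnd).card := h1
      _ ≤ ε ^ 2 * γ * (tuples (Fin j) F.gnd).card := by gcongr
      _ = ε * (ε * (γ * (tuples (Fin j) F.gnd).card)) := by ring
      _ ≤ ε * (ε * ((KsetC F.gnd (F.toPartFam.cross j) (j - 1) j
        (F.matchSet (j - 1) (j - 1) (univ.image c) ℓ)).card : ℝ)) := by gcongr
      _ ≤ _ := by gcongr
  · intro i y z hyz
    have : (univ.erase i).image y = (univ.erase i).image z :=
      image_congr fun b hb => hyz b (by simpa using hb)
    simp only [this]
  · intro i y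
    split_ifs <;> simp

end

end LabFam
end Follow

section Transfer

variable {V : Type*} [DecidableEq V]

namespace LabFam

variable (F : LabFam V)

/-- The `j`-sets with label `b`. -/
noncomputable def labSet (j b : ℕ) : Finset (Finset V) :=
  (F.gnd.powersetCard j).filter fun I => F.lbl j I = b

variable {F}

lemma patF_congr {j : ℕ} {c : Fin j → ℕ} {ℓ : Finset ℕ → ℕ} {A A' : Finset V → Prop} {d : ℝ}
    {y : Fin j → V}
    (h : F.Follows c ℓ (midSets j (j - 1)) y → (A (univ.image y) ↔ A' (univ.image y))) :
    F.patF c ℓ A d y = F.patF c ℓ A' d y := by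
  by_cases h1 : F.Follows c ℓ (midSets j (j - 1)) y
  · rw [patF, patF, if_pos h1, if_pos h1]
    simp only [h h1]
  · rw [patF, patF, if_neg h1, if_neg h1]

lemma patF_labSet {j : ℕ} {c : Fin j → ℕ} (hc : Function.Injective c) {ℓ : Finset ℕ → ℕ} {b : ℕ}
    {d : ℝ} {y : Fin j → V} :
    F.patF c ℓ (· ∈ F.labSet j b) d y = F.patF c ℓ (fun I => F.lbl j I = b) d y := by
  refine patF_congr fun h => ?_
  simp only [labSet, mem_filter, mem_powersetCard]
  refine ⟨fun h => h.2, fun h' => ⟨⟨(h.match hc).1, ?_⟩, h'⟩⟩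
  rw [card_image_of_injective _ (h.injective hc)]; simp

lemma VStd.regPairC_congr (hF : F.VStd) {j : ℕ} (hj : 2 ≤ j) {X : Finset ℕ} {ℓ : Finset ℕ → ℕ}
    {A A' : Finset (Finset V)} {ε d : ℝ} (h : ∀ I ∈ F.matchSet j (j - 1) X ℓ, I ∈ A ↔ I ∈ A')
    (hA : RegPairC F.gnd (F.toPartFam.cross j) (j - 1) ε d A
      (F.matchSet (j - 1) (j - 1) X ℓ)) :
    RegPairC F.gnd (F.toPartFam.cross j) (j - 1) ε d A' (F.matchSet (j - 1) (j - 1) X ℓ) := by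
  intro S hS hSc
  have := hA S hS hSc
  have hj1 : j - 1 + 1 = j := by omega
  rw [hj1] at this ⊢
  have e : A' ∩ KsetC F.gnd (F.toPartFam.cross j) (j - 1) j S =
      A ∩ KsetC F.gnd (F.toPartFam.cross j) (j - 1) j S := by
    ext I
    rw [mem_inter, mem_inter]
    refine and_congr_left fun hI => ?_
    rw [hF.mem_KsetC hj hS] at hI
    exact (h I (mem_matchSet.2 ⟨hI.2.1, hI.1⟩)).symm
  rwa [e]

/-- Membership in the polyad of `K` is determined by the label, for cliques over `J ⊆ K`. -/
lemma VStd.mem_polyad_iff (hF : F.VStd) {k j : ℕ} (hj : 2 ≤ j) (hcl : F.ClsStd j)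
    {K J : Finset V} (hK : K ∈ F.toPartFam.cross k) (hJ : J ⊆ K) (hJc : J.card = j)
    {I : Finset V} (hI : I ∈ F.matchSet j (j - 1) (J.image F.vIdx) (F.lab J)) :
    I ∈ F.toPartFam.polyad j K ↔ I ∈ F.labSet j (F.lbl j J) := by
  obtain ⟨hKg, -, hKi⟩ := hF.mem_cross.1 hK
  have hJi : Set.InjOn F.vIdx J := hKi.mono (by exact_mod_cast hJ)
  rw [mem_matchSet] at hI
  rw [hF.polyad_eq (by omega) (fun _ => hcl) hK, mem_matchSet, labSet, mem_filter,
    mem_powersetCard]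
  have himg := image_eq_of_match hJc hI.1 hI.2
  have hlab : F.lab K (J.image F.vIdx) = F.lbl j J := by rw [lab_image hKi hJ, hJc]
  constructor
  · rintro ⟨-, h⟩
    refine ⟨⟨hI.2.1, hI.1⟩, ?_⟩
    have := h.2.2.2 I subset_rfl (by omega) (by omega)
    rwa [himg, hlab, hI.1] at this
  · rintro ⟨-, h⟩
    refine ⟨hI.1, hI.2.1, hI.2.2.1, hI.2.2.2.1.trans (image_subset_image hJ), ?_⟩
    intro R hR h2 hm
    rcases hm.eq_or_lt with hm | hm
    · obtain rfl := eq_of_subset_of_card_le hR (by omega)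
      rw [himg, hlab, hm, h]
    · rw [hI.2.2.2.2 R hR h2 (by omega)]
      refine lab_subset hKi hJ ?_
      rw [← himg]; exact image_subset_image hR

lemma polyadReg_of_labSet (hF : F.VStd) {k : ℕ} {a : ℕ → ℕ} {ε : ℝ}
    (hcl : ∀ j, 2 ≤ j → j ≤ k - 1 → F.ClsStd j)
    (h : ∀ K ∈ F.toPartFam.cross k, ∀ j, 2 ≤ j → j ≤ k - 1 → ∀ J ⊆ K, J.card = j →
      RegPairC F.gnd (F.toPartFam.cross j) (j - 1) ε (1 / (a j : ℝ)) (F.labSet j (F.lbl j J))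
        (F.matchSet (j - 1) (j - 1) (J.image F.vIdx) (F.lab J))) :
    F.toPartFam.PolyadReg k a ε := by
  intro K hK j hj hjk J hJ
  rw [mem_powersetCard] at hJ
  obtain ⟨hKg, -, hKi⟩ := hF.mem_cross.1 hK
  have hJcr : J ∈ F.toPartFam.cross j :=
    hF.mem_cross.2 ⟨hJ.1.trans hKg, hJ.2, hKi.mono (by exact_mod_cast hJ.1)⟩
  rw [hF.polyad_eq (by omega) (fun h2 => hcl _ h2 (by omega)) hJcr]
  refine hF.regPairC_congr hj (fun I hI => ?_) (h K hK j hj hjk J hJ.1 hJ.2)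
  exact (hF.mem_polyad_iff hj (hcl j hj hjk) hK hJ.1 hJ.2 hI).symm

lemma IsLabeled.image_vIdx {k : ℕ} {a : ℕ → ℕ} (hF : F.IsLabeled k a) :
    F.gnd.image F.vIdx = Icc 1 (a 1) := by
  have hV := hF.vStd
  obtain ⟨hfam, hr, hidx, -⟩ := hF
  refine eq_of_subset_of_card_le ?_ ?_
  · intro i hi
    obtain ⟨v, hv, rfl⟩ := mem_image.1 hi
    exact mem_Icc.2 (hr v hv)
  · rw [Nat.card_Icc, Nat.add_sub_cancel, ← hfam.2.2.2.1]
    have : F.gnd.image F.vClass =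
        (F.gnd.image F.vIdx).image fun i => F.gnd.filter fun u => F.vIdx u = i := by
      rw [Finset.image_image]
      exact image_congr fun v hv => hV.vClass_eq v hv
    rw [this]
    exact card_image_le

lemma IsLabeled.exists_lbl_eq {k : ℕ} {a : ℕ → ℕ} (hF : F.IsLabeled k a) {j : ℕ} (hj : 2 ≤ j)
    (hjk : j ≤ k - 1) {I : Finset V} (hI : I ∈ F.toPartFam.cross j) {b : ℕ} (hb : 1 ≤ b)
    (hba : b ≤ a j) : ∃ J ∈ F.matchSet j (j - 1) (I.image F.vIdx) (F.lab I), F.lbl j J = b := by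
  have hV := hF.vStd
  have hcl : 2 ≤ j - 1 → F.ClsStd (j - 1) := fun h => hF.clsStd _ h (by omega)
  have hpc := hV.polyCliques_eq hj hcl hI
  obtain ⟨hfam, -, -, hlab⟩ := hF
  obtain ⟨-, -, -, hcr, hcard⟩ := hfam.2.2.2.2.2 j hj hjk
  obtain ⟨hr, -, hdet⟩ := hlab j hj hjk
  have hcrI := hcr I hI
  have hcard := hcard I hI
  rw [hpc] at hcrI hcard
  set C := F.matchSet j (j - 1) (I.image F.vIdx) (F.lab I)
  have hpoly : ∀ J ∈ C, F.toPartFam.polyad (j - 1) J =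
      F.matchSet (j - 1) (j - 1) (I.image F.vIdx) (F.lab I) := by
    intro J hJ
    have hJ' := mem_matchSet.1 hJ
    have himg := image_eq_of_match (hV.mem_cross.1 hI).2.1 hJ'.1 hJ'.2
    rw [hV.polyad_eq (by omega) hcl (hcrI hJ), himg]
    exact matchSet_congr fun M hM h2 hm => lab_eq_of_match hJ'.2 (himg ▸ hM) h2 hm
  have himg : C.image (F.lbl j) = Icc 1 (a j) := by
    refine eq_of_subset_of_card_le ?_ ?_
    · intro i hi
      obtain ⟨J, hJ, rfl⟩ := mem_image.1 hi
      exact mem_Icc.2 (hr J (hcrI hJ))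
    · rw [Nat.card_Icc, Nat.add_sub_cancel, ← hcard]
      refine card_le_card_of_forall_subsingleton
        (fun D i => ∃ J ∈ C, F.cls j J = D ∧ F.lbl j J = i) ?_ ?_
      · intro D hD
        obtain ⟨J, hJ, rfl⟩ := mem_image.1 hD
        exact ⟨F.lbl j J, mem_image_of_mem _ hJ, J, hJ, rfl, rfl⟩
      · rintro i - D ⟨-, J, hJ, rfl, hJi⟩ D' ⟨-, J', hJ', rfl, hJi'⟩
        exact hdet J (hcrI hJ) J' (hcrI hJ') (by rw [hpoly J hJ, hpoly J' hJ'])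
          (hJi.trans hJi'.symm)
  have : b ∈ C.image (F.lbl j) := himg ▸ mem_Icc.2 ⟨hb, hba⟩
  simpa using this

lemma IsLabeled.exists_cross_superset {k : ℕ} {a : ℕ → ℕ} (hF : F.IsLabeled k a) {j : ℕ}
    (hjk : j ≤ k) {J : Finset V} (hJ : J ∈ F.toPartFam.cross j) :
    ∃ K ∈ F.toPartFam.cross k, J ⊆ K := by
  have hV := hF.vStd
  have himg := hF.image_vIdx
  have hka : k ≤ a 1 := hF.1.2.2.2.2.1
  obtain ⟨hJg, hJc, hJi⟩ := hV.mem_cross.1 hJ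
  obtain ⟨X, hJX, hX, hXc⟩ := exists_subsuperset_card_eq
    (image_subset_image (f := F.vIdx) hJg) (n := k) (by rw [card_image_of_injOn hJi]; omega)
    (by rw [himg]; simpa using hka)
  have hex : ∀ i ∈ X, ∃ v ∈ F.gnd, F.vIdx v = i ∧ (i ∈ J.image F.vIdx → v ∈ J) := by
    intro i hiX
    by_cases hi : i ∈ J.image F.vIdx
    · obtain ⟨v, hv, rfl⟩ := mem_image.1 hi
      exact ⟨v, hJg hv, rfl, fun _ => hv⟩
    · obtain ⟨v, hv, rfl⟩ := mem_image.1 (hX hiX)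
      exact ⟨v, hv, rfl, fun h => absurd h hi⟩
  choose f hfg hfi hfJ using hex
  refine ⟨X.attach.image fun i : {i // i ∈ X} => f i i.2, hV.mem_cross.2 ⟨?_, ?_, ?_⟩, ?_⟩
  · intro v hv
    obtain ⟨i, -, rfl⟩ := mem_image.1 hv
    exact hfg _ _
  · rw [card_image_of_injective, card_attach, hXc]
    intro i i' h
    have := congrArg F.vIdx h
    simp only [hfi] at this
    exact Subtype.ext this
  · intro v hv w hw hvw
    obtain ⟨i, -, rfl⟩ := mem_image.1 (mem_coe.1 hv)
    obtain ⟨i', -, rfl⟩ := mem_image.1 (mem_coe.1 hw)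
    have h : (i : ℕ) = i' := by rwa [hfi, hfi] at hvw
    rw [Subtype.ext h]
  · intro v hv
    have hi : F.vIdx v ∈ J.image F.vIdx := mem_image_of_mem _ hv
    have : f _ (hJX hi) = v := hJi (hfJ _ _ hi) hv (hfi _ _)
    rw [← this]
    exact mem_image.2 ⟨⟨_, hJX hi⟩, mem_attach _ _, rfl⟩

/-- The labelled parts of an equitable family have small correlation with functions of fewer
variables. -/
lemma IsLabeled.abs_expect_patF_labSet_le {k : ℕ} {a : ℕ → ℕ} {ε : ℝ} (hε : 0 ≤ ε)
    (hF : F.IsLabeled k a)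
    (hreg : F.toPartFam.PolyadReg k a ε) (hg : F.gnd.Nonempty) {j : ℕ} (hj : 2 ≤ j)
    (hjk : j ≤ k - 1) {c : Fin j → ℕ} (hc : Function.Injective c) (ℓ : Finset ℕ → ℕ) {b : ℕ}
    (hb : 1 ≤ b) (hba : b ≤ a j)
    (u : Fin j → (Fin j → V) → ℝ) (hu : ∀ i, DependsOn (u i) {i}ᶜ)
    (hu1 : ∀ i y, u i y = 0 ∨ u i y = 1) :
    |𝔼 y ∈ tuples (Fin j) F.gnd,
      F.patF c ℓ (· ∈ F.labSet j b) (1 / (a j : ℝ)) y * ∏ i, u i y| ≤ ε := by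
  have hV := hF.vStd
  have hcl : 2 ≤ j - 1 → F.ClsStd (j - 1) := fun h => hF.clsStd _ h (by omega)
  have ha1 : (1:ℝ) ≤ a j := by exact_mod_cast hb.trans hba
  by_cases hne : ∃ y, F.Follows c ℓ (midSets j (j - 1)) y
  · obtain ⟨y, hy⟩ := hne
    have hIm := hy.match hc
    have hIc : (univ.image y).card = j := by
      rw [card_image_of_injective _ (hy.injective hc)]; simp
    have hI : univ.image y ∈ F.toPartFam.cross j := hV.mem_cross.2 ⟨hIm.1, hIc, hIm.2.1⟩
    obtain ⟨J, hJm, hJb⟩ := hF.exists_lbl_eq hj hjk hI hb hba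
    rw [mem_matchSet] at hJm
    have himg := image_eq_of_match hIc hJm.1 hJm.2
    have himg' : J.image F.vIdx = univ.image c := himg.trans (hy.image_image univ)
    have hJ : J ∈ F.toPartFam.cross j := hV.mem_cross.2 ⟨hJm.2.1, hJm.1, hJm.2.2.1⟩
    obtain ⟨K, hK, hJK⟩ := hF.exists_cross_superset (by omega) hJ
    have hpoly : F.toPartFam.polyad (j - 1) J =
        F.matchSet (j - 1) (j - 1) (univ.image c) ℓ := by
      rw [hV.polyad_eq (by omega) hcl hJ, himg']
      refine matchSet_congr fun M hM h2 hm => ?_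
      rw [lab_eq_of_match hJm.2 (himg' ▸ hM) h2 hm]
      exact lab_eq_of_match hIm (hy.image_image univ ▸ hM) h2 hm
    refine abs_expect_patF_le hV hg hj hc hε (by positivity) ?_ ?_ u hu hu1
    · rw [div_le_one (by linarith)]; exact ha1
    · have h1 := hreg K hK j hj hjk J (mem_powersetCard.2 ⟨hJK, hJm.1⟩)
      have h2 : F.matchSet (j - 1) (j - 1) (univ.image c) ℓ =
          F.matchSet (j - 1) (j - 1) (J.image F.vIdx) (F.lab J) := by
        rw [← hpoly, hV.polyad_eq (by omega) hcl hJ]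
      rw [hpoly, h2] at h1
      rw [h2]
      refine hV.regPairC_congr hj (fun I hI => ?_) h1
      rw [← hJb]
      exact hV.mem_polyad_iff hj (hF.clsStd j hj hjk) hK hJK hJm.1 hI
  · have : ∀ y, F.patF c ℓ (· ∈ F.labSet j b) (1 / (a j : ℝ)) y = 0 := fun y => by
      rw [patF, if_neg fun h => hne ⟨y, h⟩]
    simp only [this, zero_mul, expect_const_zero, abs_zero, hε]

end LabFam
end Transfer

section CountingPatterns

variable {V : Type*} [DecidableEq V]

namespace LabFam

/-- All relative label indicators have correlation at most `η` with functions of fewer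
variables. -/
def CutSmall (F : LabFam V) (k : ℕ) (a : ℕ → ℕ) (η : ℝ) : Prop :=
  ∀ s, 2 ≤ s → s ≤ k - 1 → ∀ c : Fin s → ℕ, Function.Injective c →
    (∀ i, 1 ≤ c i ∧ c i ≤ a 1) → ∀ ℓ : Finset ℕ → ℕ,
    (∀ M ⊆ univ.image c, 2 ≤ M.card → M.card ≤ s - 1 → 1 ≤ ℓ M ∧ ℓ M ≤ a M.card) →
    ∀ b, 1 ≤ b → b ≤ a s →
    ∀ u : Fin s → (Fin s → V) → ℝ, (∀ i, DependsOn (u i) {i}ᶜ) → (∀ i y, |u i y| ≤ 1) →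
      |𝔼 y ∈ tuples (Fin s) F.gnd,
        F.patF c ℓ (fun I => F.lbl s I = b) (1 / (a s : ℝ)) y * ∏ i, u i y| ≤ η

variable {F : LabFam V}

lemma abs_expect_follows_mul_le {k : ℕ} {a : ℕ → ℕ} {η : ℝ} (hη : 0 ≤ η)
    (hcut : F.CutSmall k a η) {j : ℕ} {c : Fin j → ℕ} (hc : Function.Injective c)
    (hcr : ∀ i, 1 ≤ c i ∧ c i ≤ a 1) {ℓ : Finset ℕ → ℕ}
    (hℓ : ∀ M ⊆ univ.image c, 2 ≤ M.card → M.card ≤ k - 1 → 1 ≤ ℓ M ∧ ℓ M ≤ a M.card)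
    {𝓛 : Finset (Finset (Fin j))} {L : Finset (Fin j)} (hL : L ∉ 𝓛)
    (hL2 : 2 ≤ L.card) (hLk : L.card ≤ k - 1) (hmax : ∀ L' ∈ 𝓛, L'.card ≤ L.card)
    (h2 : ∀ L' ∈ 𝓛, 2 ≤ L'.card)
    (hdown : ∀ L' ⊂ L, 2 ≤ L'.card → L' ∈ 𝓛) :
    |𝔼 y ∈ tuples (Fin j) F.gnd, (if F.Follows c ℓ 𝓛 y then (1:ℝ) else 0) *
      ((if F.lbl L.card (L.image y) = ℓ (L.image c) then 1 else 0) - 1 / (a L.card : ℝ))| ≤ η := by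
  set e := L.orderEmbOfFin rfl with he
  have hinj : Function.Injective e := e.injective
  have heL : univ.image e = L := by simp [he]
  have hemem : ∀ i, e i ∈ L := fun i => L.orderEmbOfFin_mem rfl i
  have hext : ∀ w y (N : Finset (Fin L.card)),
      (N.image e).image (Function.extend e w y : Fin j → V) = N.image w := by
    intro w y N
    rw [Finset.image_image]
    exact image_congr fun i _ => hinj.extend_apply w y i
  rw [expect_tuples_extend F.gnd hinj]
  refine (abs_expect_le _ _).trans ?_
  rcases (tuples (Fin j) F.gnd).eq_empty_or_nonempty with h0 | h0
  · rw [h0, expect_empty]; exact hη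
  refine expect_le h0 fun y hy => ?_
  set O : Prop := ∀ i ∉ L, y i ∈ F.gnd ∧ F.vIdx (y i) = c i with hO
  set z : (Fin L.card → V) → Fin j → V := fun w => Function.extend e w y with hz
  set u : Fin L.card → (Fin L.card → V) → ℝ := fun i w =>
    if O ∧ ∀ L' ∈ 𝓛, ¬ L' ⊆ L → e i ∉ L' → F.lbl L'.card (L'.image (z w)) = ℓ (L'.image c)
    then 1 else 0 with hu
  have hzL : ∀ w, L.image (z w) = univ.image w := fun w => by
    conv_lhs => rw [← heL]
    exact hext w y univ
  have hcL : (univ : Finset (Fin L.card)).image (c ∘ e) = L.image c := by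
    rw [← Finset.image_image, heL]
  have hfol : ∀ w, F.Follows c ℓ 𝓛 (z w) ↔
      F.Follows (c ∘ e) ℓ (midSets L.card (L.card - 1)) w ∧ ∀ i, O ∧
        ∀ L' ∈ 𝓛, ¬ L' ⊆ L → e i ∉ L' → F.lbl L'.card (L'.image (z w)) = ℓ (L'.image c) := by
    intro w
    have hze : ∀ i, z w (e i) = w i := fun i => hinj.extend_apply w y i
    have hzo : ∀ i ∉ L, z w i = y i := fun i hi =>
      Function.extend_apply' _ _ _ fun ⟨a, ha⟩ => hi (ha ▸ hemem a)
    constructor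
    · rintro ⟨h1, h3⟩
      refine ⟨⟨fun i => hze i ▸ h1 (e i), fun N hN => ?_⟩, fun i => ⟨fun i' hi' => ?_, ?_⟩⟩
      · simp only [midSets, mem_filter, mem_univ, true_and] at hN
        have hNc : (N.image e).card = N.card := card_image_of_injective _ hinj
        have hss : N.image e ⊂ L := by
          refine ssubset_of_subset_of_ne ?_ fun h => ?_
          · intro x hx
            obtain ⟨i, -, rfl⟩ := mem_image.1 hx
            exact hemem i
          · rw [h] at hNc; omega
        have := h3 (N.image e) (hdown _ hss (by omega))
        rwa [hext, hNc, Finset.image_image] at this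
      · rw [← hzo i' hi']; exact h1 i'
      · exact fun L' hL' _ _ => h3 L' hL'
    · rintro ⟨h1, h3⟩
      have hO' : O := (h3 ⟨0, by omega⟩).1
      refine ⟨fun i => ?_, fun L' hL' => ?_⟩
      · by_cases hi : i ∈ L
        · obtain ⟨i', -, rfl⟩ := mem_image.1 (heL.symm ▸ hi)
          rw [hze]; exact h1.1 i'
        · rw [hzo i hi]; exact hO' i hi
      · by_cases hs : L' ⊆ L
        · obtain ⟨N, -, rfl⟩ := subset_image_iff.1 (heL.symm ▸ hs)
          have hNc : (N.image e).card = N.card := card_image_of_injective _ hinj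
          have hlt : (N.image e).card < L.card :=
            card_lt_card (ssubset_of_subset_of_ne hs fun h => hL (h ▸ hL'))
          have := h2 _ hL'
          rw [hext, hNc, Finset.image_image]
          exact h1.2 N (by simp only [midSets, mem_filter, mem_univ, true_and]; omega)
        · obtain ⟨p, hp, hpL'⟩ : ∃ p ∈ L, p ∉ L' := by
            by_contra! hcon
            have : L = L' := eq_of_subset_of_card_le hcon (hmax L' hL')
            exact hL (this ▸ hL')
          obtain ⟨i', -, rfl⟩ := mem_image.1 (heL.symm ▸ hp)
          exact (h3 i').2 L' hL' hs hpL'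
  have hud : ∀ i, DependsOn (u i) {i}ᶜ := by
    intro i w w' hww
    have : ∀ L' : Finset (Fin j), e i ∉ L' → L'.image (z w) = L'.image (z w') := by
      intro L' hL'
      refine image_congr fun p hp => ?_
      by_cases hpL : ∃ i', e i' = p
      · obtain ⟨i', rfl⟩ := hpL
        simp only [hz]
        rw [hinj.extend_apply, hinj.extend_apply]
        refine hww i' ?_
        simp only [Set.mem_compl_iff, Set.mem_singleton_iff]
        rintro rfl
        exact hL' hp
      · simp only [hz]
        rw [Function.extend_apply' _ _ _ hpL, Function.extend_apply' _ _ _ hpL]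
    simp only [hu]
    congr 1
    refine propext (and_congr_right fun _ => forall₄_congr fun L' _ _ hi => ?_)
    rw [this L' hi]
  have hmain := hcut L.card hL2 hLk (c ∘ e) (hc.comp hinj) (fun i => hcr _) ℓ
    (fun M hM h2 hm => hℓ M (hM.trans (by rw [hcL]; exact image_subset_image (subset_univ _)))
      h2 (by omega))
    (ℓ (L.image c))
    (hℓ _ (image_subset_image (subset_univ _)) (by rw [card_image_of_injective _ hc]; exact hL2)
      (by rw [card_image_of_injective _ hc]; exact hLk)).1
    (by
      have := (hℓ _ (image_subset_image (subset_univ L))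
        (by rw [card_image_of_injective _ hc]; exact hL2)
        (by rw [card_image_of_injective _ hc]; exact hLk)).2
      rwa [card_image_of_injective _ hc] at this) u hud
    (fun i w => by simp only [hu]; split_ifs <;> simp)
  refine le_trans (le_of_eq ?_) hmain
  congr 1
  refine expect_congr rfl fun w _ => ?_
  simp only [hu]
  rw [prod_boole, patF]
  change (if F.Follows c ℓ 𝓛 (z w) then (1:ℝ) else 0) * ((if F.lbl L.card (L.image (z w)) =
    ℓ (L.image c) then 1 else 0) - 1 / (a L.card : ℝ)) = _
  rw [hzL]
  by_cases h3 : F.Follows c ℓ 𝓛 (z w)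
  · obtain ⟨h4, h5⟩ := (hfol w).1 h3
    rw [if_pos h3, if_pos h4, if_pos fun i _ => h5 i, one_mul, mul_one]
    congr
  · rw [if_neg h3, zero_mul]
    by_cases h4 : F.Follows (c ∘ e) ℓ (midSets L.card (L.card - 1)) w
    · rw [if_neg (show ¬ ∀ i ∈ univ, _ from
        fun h => h3 ((hfol w).2 ⟨h4, fun i => h i (mem_univ i)⟩)), mul_zero]
    · rw [if_neg h4, zero_mul]

lemma le_expect_follows {k t : ℕ} {a : ℕ → ℕ} {η β : ℝ} (hη : 0 ≤ η) (hβ : 0 ≤ β) (ht : 1 ≤ t)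
    (hat : ∀ i, 2 ≤ i → i ≤ k - 1 → 1 ≤ a i ∧ a i ≤ t)
    (hg : F.gnd.Nonempty)
    (hcls : ∀ i, 1 ≤ i → i ≤ a 1 → β ≤ 𝔼 v ∈ F.gnd, if F.vIdx v = i then (1:ℝ) else 0)
    (hcut : F.CutSmall k a η) {j : ℕ} {c : Fin j → ℕ} (hc : Function.Injective c)
    (hcr : ∀ i, 1 ≤ c i ∧ c i ≤ a 1) {ℓ : Finset ℕ → ℕ}
    (hℓ : ∀ M ⊆ univ.image c, 2 ≤ M.card → M.card ≤ k - 1 → 1 ≤ ℓ M ∧ ℓ M ≤ a M.card) :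
    ∀ (r : ℕ) (𝓛 : Finset (Finset (Fin j))), 𝓛.card = r →
    (∀ L ∈ 𝓛, 2 ≤ L.card ∧ L.card ≤ k - 1) →
    (∀ L ∈ 𝓛, ∀ L' ⊆ L, 2 ≤ L'.card → L' ∈ 𝓛) →
    β ^ j * (1 / (t : ℝ)) ^ r - r * η ≤
      𝔼 y ∈ tuples (Fin j) F.gnd, if F.Follows c ℓ 𝓛 y then (1:ℝ) else 0 := by
  have ht' : (1:ℝ) ≤ t := by exact_mod_cast ht
  intro r
  induction r with
  | zero =>
    intro 𝓛 h𝓛 _ _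
    rw [card_eq_zero] at h𝓛
    subst h𝓛
    have hgc : (0:ℝ) < F.gnd.card := by exact_mod_cast hg.card_pos
    rw [expect_eq_sum_div_card, sum_boole, card_tuples, Fintype.card_fin, le_div_iff₀]
    swap
    · push_cast; positivity
    have : (tuples (Fin j) F.gnd).filter (fun y => F.Follows c ℓ ∅ y) =
        Fintype.piFinset fun i => F.gnd.filter fun v => F.vIdx v = c i := by
      ext y
      simp only [mem_filter, mem_tuples, Fintype.mem_piFinset, Follows, notMem_empty,
        false_imp_iff, implies_true, and_true]
      exact ⟨fun h => h.2, fun h => ⟨fun i => (h i).1, h⟩⟩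
    rw [this, Fintype.card_piFinset]
    push_cast
    have h1 : ∀ i, β * F.gnd.card ≤ ((F.gnd.filter fun v => F.vIdx v = c i).card : ℝ) := by
      intro i
      have := hcls (c i) (hcr i).1 (hcr i).2
      rwa [expect_eq_sum_div_card, sum_boole, le_div_iff₀ hgc] at this
    calc _ = ∏ _i : Fin j, (β * F.gnd.card) := by simp; ring
      _ ≤ _ := prod_le_prod (fun i _ => by positivity) fun i _ => h1 i
  | succ r ih =>
    intro 𝓛 h𝓛 hr hdown
    obtain ⟨L, hL, hmax⟩ := exists_max_image 𝓛 card (card_pos.1 (by omega))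
    have hLr := hr L hL
    have hsub := erase_subset L 𝓛
    have hIH := ih (𝓛.erase L) (by rw [card_erase_of_mem hL]; omega)
      (fun L' h => hr L' (hsub h)) (fun L₁ h₁ L₂ h₂ hc₂ => by
        refine mem_erase.2 ⟨?_, hdown L₁ (hsub h₁) L₂ h₂ hc₂⟩
        rintro rfl
        exact (mem_erase.1 h₁).1 (eq_of_subset_of_card_le h₂ (hmax L₁ (hsub h₁))).symm)
    have hstep := abs_expect_follows_mul_le hη hcut hc hcr hℓ (𝓛 := 𝓛.erase L) (L := L)
      (by simp) hLr.1 hLr.2 (fun L' h => hmax L' (hsub h)) (fun L' h => (hr L' (hsub h)).1)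
      (fun L' h h2 => mem_erase.2 ⟨h.ne, hdown L hL L' h.subset h2⟩)
    set X := 𝔼 y ∈ tuples (Fin j) F.gnd, if F.Follows c ℓ (𝓛.erase L) y then (1:ℝ) else 0
    have hX0 : 0 ≤ X := expect_nonneg fun y _ => by positivity
    have hsplit : 𝔼 y ∈ tuples (Fin j) F.gnd, (if F.Follows c ℓ (𝓛.erase L) y then (1:ℝ) else 0) *
        ((if F.lbl L.card (L.image y) = ℓ (L.image c) then 1 else 0) - 1 / (a L.card : ℝ)) =
        (𝔼 y ∈ tuples (Fin j) F.gnd, if F.Follows c ℓ 𝓛 y then (1:ℝ) else 0) -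
          X * (1 / (a L.card : ℝ)) := by
      rw [expect_mul, ← expect_sub_distrib]
      refine expect_congr rfl fun y _ => ?_
      rw [mul_sub]
      congr 1
      have : F.Follows c ℓ 𝓛 y ↔ F.Follows c ℓ (𝓛.erase L) y ∧
          F.lbl L.card (L.image y) = ℓ (L.image c) := by
        constructor
        · exact fun h => ⟨⟨h.1, fun L' hL' => h.2 L' (hsub hL')⟩, h.2 L hL⟩
        · rintro ⟨h, hl⟩
          refine ⟨h.1, fun L' hL' => ?_⟩
          rcases eq_or_ne L' L with rfl | hne
          · exact hl
          · exact h.2 L' (mem_erase.2 ⟨hne, hL'⟩)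
      by_cases h1 : F.Follows c ℓ (𝓛.erase L) y <;>
        by_cases h2 : F.lbl L.card (L.image y) = ℓ (L.image c) <;> simp [this, h1, h2]
    rw [hsplit] at hstep
    have hstep := (abs_le.1 hstep).1
    have haL := hat L.card hLr.1 hLr.2
    have haL1 : (1:ℝ) ≤ a L.card := by exact_mod_cast haL.1
    have hinv : 1 / (t : ℝ) ≤ 1 / (a L.card : ℝ) :=
      one_div_le_one_div_of_le (by linarith) (by exact_mod_cast haL.2)
    have h1 : X * (1 / (t : ℝ)) ≤ X * (1 / (a L.card : ℝ)) := mul_le_mul_of_nonneg_left hinv hX0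
    have ht0 : 0 ≤ 1 / (t : ℝ) := by positivity
    have ht1 : 1 / (t : ℝ) ≤ 1 := by rw [div_le_one (by linarith)]; exact ht'
    have h2 := mul_le_mul_of_nonneg_right hIH ht0
    have h3 : (r : ℝ) * η * (1 / t) ≤ r * η := mul_le_of_le_one_right (by positivity) ht1
    push_cast
    rw [pow_succ]
    linarith

end LabFam
end CountingPatterns

section FamilyOfCutSmall

variable {V : Type*} [DecidableEq V]

namespace LabFam

variable {F : LabFam V}

lemma VStd.card_image_vClass (hF : F.VStd) :
    (F.gnd.image F.vClass).card = (F.gnd.image F.vIdx).card := by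
  have : F.gnd.image F.vClass =
      (F.gnd.image F.vIdx).image fun i => F.gnd.filter fun u => F.vIdx u = i := by
    rw [Finset.image_image]
    exact image_congr fun v hv => hF.vClass_eq v hv
  rw [this]
  refine card_image_of_injOn fun i hi i' hi' h => ?_
  obtain ⟨v, hv, rfl⟩ := mem_image.1 hi
  have hv' : v ∈ F.gnd.filter fun u => F.vIdx u = F.vIdx v := mem_filter.2 ⟨hv, rfl⟩
  rw [h] at hv'
  exact (mem_filter.1 hv').2

lemma ClsStd.eq_of_mem (hF : F.VStd) {j : ℕ} (hcl : F.ClsStd j) {I J : Finset V}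
    (hJ : J ∈ F.toPartFam.cross j) (hI : I ∈ F.cls j J) : F.cls j I = F.cls j J := by
  have hJc := (hF.mem_cross.1 hJ).2.1
  rw [hcl J hJ, mem_matchSet] at hI
  rw [hcl J hJ, hcl I (hF.mem_cross.2 ⟨hI.2.1, hI.1, hI.2.2.1⟩), image_eq_of_match hJc hI.1 hI.2]
  refine matchSet_congr fun M hM h2 hm => lab_eq_of_match hI.2 ?_ h2 hm
  rwa [image_eq_of_match hJc hI.1 hI.2]

lemma ClsStd.mem_iff (hF : F.VStd) {j : ℕ} (hj : 2 ≤ j) (hcl : F.ClsStd j) {I J : Finset V}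
    (hJ : J ∈ F.toPartFam.cross j) :
    I ∈ F.cls j J ↔
      I ∈ F.matchSet j (j - 1) (J.image F.vIdx) (F.lab J) ∧ F.lbl j I = F.lbl j J := by
  obtain ⟨-, hJc, hJi⟩ := hF.mem_cross.1 hJ
  have hlab : F.lab J (J.image F.vIdx) = F.lbl j J := by rw [lab_image hJi subset_rfl, hJc]
  rw [hcl J hJ, mem_matchSet, mem_matchSet]
  constructor
  · rintro ⟨hIc, hI⟩
    refine ⟨⟨hIc, hI.mono (by omega)⟩, ?_⟩
    have := hI.2.2.2 I subset_rfl (by omega) (by omega)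
    rwa [image_eq_of_match hJc hIc hI, hlab, hIc] at this
  · rintro ⟨⟨hIc, hI⟩, hl⟩
    refine ⟨hIc, hI.1, hI.2.1, hI.2.2.1, fun R hR h2 hm => ?_⟩
    rcases hm.eq_or_lt with hm | hm
    · obtain rfl := eq_of_subset_of_card_le hR (by omega)
      rw [image_eq_of_match hJc hIc hI, hlab, hm, hl]
    · exact hI.2.2.2 R hR h2 (by omega)

lemma exists_enum_finset {X : Finset ℕ} {j : ℕ} (hX : X.card = j) :
    ∃ c : Fin j → ℕ, Function.Injective c ∧ univ.image c = X :=
  ⟨X.orderEmbOfFin hX, (X.orderEmbOfFin hX).injective, by simp⟩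

lemma ClsStd.card_image_cls (hF : F.VStd) {j : ℕ} (hj : 2 ≤ j) {a : ℕ → ℕ}
    (hcl : F.ClsStd j) (hcl' : 2 ≤ j - 1 → F.ClsStd (j - 1))
    (hlbl : ∀ I ∈ F.toPartFam.cross j, 1 ≤ F.lbl j I ∧ F.lbl j I ≤ a j)
    {J : Finset V} (hJ : J ∈ F.toPartFam.cross j)
    (hex : ∀ b, 1 ≤ b → b ≤ a j →
      ∃ I ∈ F.matchSet j (j - 1) (J.image F.vIdx) (F.lab J), F.lbl j I = b) :
    ((F.toPartFam.polyCliques j J).image (F.cls j)).card = a j := by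
  rw [hF.polyCliques_eq hj hcl' hJ]
  set C := F.matchSet j (j - 1) (J.image F.vIdx) (F.lab J) with hC
  have hJc := (hF.mem_cross.1 hJ).2.1
  have hCc : ∀ I ∈ C, I ∈ F.toPartFam.cross j := fun I hI => by
    rw [hC, mem_matchSet] at hI
    exact hF.mem_cross.2 ⟨hI.2.1, hI.1, hI.2.2.1⟩
  have hCI : ∀ I ∈ C, F.matchSet j (j - 1) (I.image F.vIdx) (F.lab I) = C := by
    intro I hI
    rw [hC, mem_matchSet] at hI
    rw [hC, image_eq_of_match hJc hI.1 hI.2]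
    refine matchSet_congr fun M hM h2 hm => lab_eq_of_match hI.2 ?_ h2 hm
    rwa [image_eq_of_match hJc hI.1 hI.2]
  have himg : C.image (F.lbl j) = Icc 1 (a j) := by
    ext b
    rw [mem_image, mem_Icc]
    constructor
    · rintro ⟨I, hI, rfl⟩; exact hlbl I (hCc I hI)
    · rintro ⟨h1, h2⟩; exact hex b h1 h2
  have hG : C.image (F.cls j) =
      (C.image (F.lbl j)).image fun b => C.filter fun I => F.lbl j I = b := by
    rw [Finset.image_image]
    refine image_congr fun I hI => ?_
    ext I'
    rw [hcl.mem_iff hF hj (hCc I hI), hCI I hI, Function.comp_apply, mem_filter]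
  rw [hG, card_image_of_injOn, himg, Nat.card_Icc, Nat.add_sub_cancel]
  intro b hb b' hb' h
  obtain ⟨I, hI, rfl⟩ := mem_image.1 hb
  have hv : I ∈ C.filter fun I' => F.lbl j I' = F.lbl j I := mem_filter.2 ⟨hI, rfl⟩
  dsimp only at h
  rw [h] at hv
  exact (mem_filter.1 hv).2

lemma isLabeled_of_std (hF : F.VStd) {k : ℕ} {a : ℕ → ℕ} (hka : k ≤ a 1)
    (hcl : ∀ j, 2 ≤ j → j ≤ k - 1 → F.ClsStd j) (himg : F.gnd.image F.vIdx = Icc 1 (a 1))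
    (hlbl : ∀ j, 2 ≤ j → j ≤ k - 1 →
      ∀ I ∈ F.toPartFam.cross j, 1 ≤ F.lbl j I ∧ F.lbl j I ≤ a j)
    (hex : ∀ j, 2 ≤ j → j ≤ k - 1 → ∀ J ∈ F.toPartFam.cross j, ∀ b, 1 ≤ b → b ≤ a j →
      ∃ I ∈ F.matchSet j (j - 1) (J.image F.vIdx) (F.lab J), F.lbl j I = b) :
    F.IsLabeled k a := by
  refine ⟨⟨?_, ?_, ?_, ?_, hka, ?_⟩, ?_, ?_, ?_⟩
  · intro v hv; rw [hF.vClass_eq v hv]; exact mem_filter.2 ⟨hv, rfl⟩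
  · intro v hv; rw [hF.vClass_eq v hv]; exact filter_subset _ _
  · intro u hu v hv huv
    rw [hF.vClass_eq_iff hu hv]
    rw [hF.vClass_eq v hv] at huv
    exact (mem_filter.1 huv).2
  · rw [hF.card_image_vClass, himg, Nat.card_Icc, Nat.add_sub_cancel]
  · intro j hj hjk
    have hclj := hcl j hj hjk
    have hcl' : 2 ≤ j - 1 → F.ClsStd (j - 1) := fun h => hcl _ h (by omega)
    refine ⟨fun J hJ => ?_, fun J hJ I hI => hclj.eq_of_mem hF hJ hI, fun J hJ I hI => ?_,
      fun J hJ I hI => ?_, fun J hJ => ?_⟩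
    · obtain ⟨hJg, hJc, hJi⟩ := hF.mem_cross.1 hJ
      rw [hclj J hJ, mem_matchSet]
      exact ⟨hJc, match_lab hJg hJi j⟩
    · rw [hF.polyCliques_eq hj hcl' hJ]
      exact ((hclj.mem_iff hF hj hJ).1 hI).1
    · rw [hF.polyCliques_eq hj hcl' hJ, mem_matchSet] at hI
      exact hF.mem_cross.2 ⟨hI.2.1, hI.1, hI.2.2.1⟩
    · exact hclj.card_image_cls hF hj hcl' (hlbl j hj hjk) hJ (hex j hj hjk J hJ)
  · intro v hv
    exact mem_Icc.1 (himg ▸ mem_image_of_mem _ hv)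
  · intro u hu v hv
    exact (hF.vClass_eq_iff hu hv).symm
  · intro j hj hjk
    have hclj := hcl j hj hjk
    have hcl' : 2 ≤ j - 1 → F.ClsStd (j - 1) := fun h => hcl _ h (by omega)
    refine ⟨hlbl j hj hjk, fun I hI I' hI' => ((hclj.mem_iff hF hj hI).1 hI').2,
      fun I hI I' hI' hp hl => hclj.eq_of_mem hF hI' ?_⟩
    rw [hclj.mem_iff hF hj hI']
    refine ⟨?_, hl⟩
    rw [← hF.polyCliques_eq hj hcl' hI', PartFam.polyCliques, ← hp]
    change I ∈ F.toPartFam.polyCliques j I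
    obtain ⟨hIg, hIc, hIi⟩ := hF.mem_cross.1 hI
    rw [hF.polyCliques_eq hj hcl' hI, mem_matchSet]
    exact ⟨hIc, match_lab hIg hIi _⟩

lemma exists_match_lbl_of_follows (hF : F.VStd) {k : ℕ} {a : ℕ → ℕ} {γ : ℝ} (hγ : 0 < γ)
    {j : ℕ} (hj : 2 ≤ j)
    (hidx : ∀ v ∈ F.gnd, 1 ≤ F.vIdx v ∧ F.vIdx v ≤ a 1)
    (hlbl : ∀ j, 2 ≤ j → j ≤ k - 1 →
      ∀ I ∈ F.toPartFam.cross j, 1 ≤ F.lbl j I ∧ F.lbl j I ≤ a j)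
    (hpos : ∀ c : Fin j → ℕ, Function.Injective c → (∀ i, 1 ≤ c i ∧ c i ≤ a 1) →
      ∀ ℓ : Finset ℕ → ℕ,
      (∀ M ⊆ univ.image c, 2 ≤ M.card → M.card ≤ k - 1 → 1 ≤ ℓ M ∧ ℓ M ≤ a M.card) →
      γ ≤ 𝔼 y ∈ tuples (Fin j) F.gnd, if F.Follows c ℓ (midSets j j) y then (1:ℝ) else 0)
    {J : Finset V} (hJ : J ∈ F.toPartFam.cross j) {b : ℕ} (hb : 1 ≤ b) (hba : b ≤ a j) :
    ∃ I ∈ F.matchSet j (j - 1) (J.image F.vIdx) (F.lab J), F.lbl j I = b := by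
  obtain ⟨hJg, hJc, hJi⟩ := hF.mem_cross.1 hJ
  obtain ⟨c, hc, hcX⟩ := exists_enum_finset ((card_image_of_injOn hJi).trans hJc)
  set ℓ : Finset ℕ → ℕ := fun M => if M = J.image F.vIdx then b else F.lab J M with hℓ
  have hpos := hpos c hc (fun i => by
    obtain ⟨v, hv, hvi⟩ := mem_image.1 (hcX ▸ mem_image_of_mem c (mem_univ i))
    rw [← hvi]
    exact hidx v (hJg hv)) ℓ (fun M hM h2 hm => by
      simp only [hℓ]
      split_ifs with h
      · rw [h, card_image_of_injOn hJi, hJc]; exact ⟨hb, hba⟩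
      · obtain ⟨R, hR, rfl⟩ : ∃ R ⊆ J, R.image F.vIdx = M :=
          ⟨_, filter_subset _ _, exists_subset_image_eq (hcX ▸ hM)⟩
        have hRi : Set.InjOn F.vIdx R := hJi.mono (by exact_mod_cast hR)
        rw [card_image_of_injOn hRi] at h2 hm ⊢
        rw [lab_image hJi hR]
        exact hlbl _ h2 hm _ (hF.mem_cross.2 ⟨hR.trans hJg, rfl, hRi⟩))
  obtain ⟨y, hy⟩ : ∃ y, F.Follows c ℓ (midSets j j) y := by
    by_contra! hcon
    simp only [hcon, if_false, expect_const_zero] at hpos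
    linarith
  have hm := hy.match hc
  rw [hcX] at hm
  have hyc : (univ.image y).card = j := by rw [card_image_of_injective _ (hy.injective hc)]; simp
  refine ⟨univ.image y, mem_matchSet.2 ⟨hyc, (hm.mono (by omega)).congr fun M hM h2 hm => ?_⟩, ?_⟩
  · simp only [hℓ]
    rw [if_neg]
    rintro rfl
    rw [card_image_of_injOn hJi] at hm
    omega
  · have := hm.2.2.2 _ subset_rfl (by omega) (by omega)
    rw [hyc, image_eq_of_match hJc hyc hm] at this
    simpa [hℓ] using this

/-- A family of partitions in standard form whose relative label indicators, and relative edge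
indicators of `H`, have small correlation with lower order functions is equitable. -/
lemma isEquitPartition_of_cutSmall (hF : F.VStd) {k t : ℕ} {a : ℕ → ℕ} {d : Addr → ℝ}
    {H : Finset (Finset V)} {ε η γ : ℝ} (hk : 2 ≤ k) (ht : 1 ≤ t) (hka : k ≤ a 1)
    (hat : ∀ i, 1 ≤ i → i ≤ k - 1 → 1 ≤ a i ∧ a i ≤ t)
    (hcl : ∀ j, 2 ≤ j → j ≤ k - 1 → F.ClsStd j)
    (hidx : ∀ v ∈ F.gnd, 1 ≤ F.vIdx v ∧ F.vIdx v ≤ a 1)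
    (hlbl : ∀ j, 2 ≤ j → j ≤ k - 1 →
      ∀ I ∈ F.toPartFam.cross j, 1 ≤ F.lbl j I ∧ F.lbl j I ≤ a j)
    (hsize : ∀ i, 1 ≤ i → i ≤ a 1 →
      (F.gnd.filter fun v => F.vIdx v = i).card = F.gnd.card / a 1 ∨
      (F.gnd.filter fun v => F.vIdx v = i).card = F.gnd.card / a 1 + 1)
    (hq : t ≤ F.gnd.card) (hη : 0 ≤ η) (hcut : F.CutSmall k a η)
    (hcutH : ∀ x, IsAddress k (k - 1) a x → ∀ c : Fin k → ℕ, Function.Injective c →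
      univ.image c = x.1 →
      ∀ u : Fin k → (Fin k → V) → ℝ, (∀ i, DependsOn (u i) {i}ᶜ) → (∀ i y, |u i y| ≤ 1) →
      |𝔼 y ∈ tuples (Fin k) F.gnd, F.patF c x.2 (· ∈ H) (d x) y * ∏ i, u i y| ≤ η)
    (hε : 0 < ε) (hγ0 : 0 < γ) (hηγ : η ≤ ε ^ 2 * γ)
    (hγ : γ ≤ (1 / (2 * t : ℝ)) ^ k * (1 / (t : ℝ)) ^ 2 ^ k - 2 ^ k * η) :
    F.IsEquitPartition k a ε d H := by
  have ht' : (1:ℝ) ≤ t := by exact_mod_cast ht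
  obtain ⟨ha1, hat1⟩ := hat 1 le_rfl (by omega)
  have hgn : F.gnd.Nonempty := card_pos.1 (by omega)
  have hgc : (0:ℝ) < F.gnd.card := by exact_mod_cast hgn.card_pos
  have hdiv : 1 ≤ F.gnd.card / a 1 := (Nat.one_le_div_iff ha1).2 (by omega)
  have hcls : ∀ i, 1 ≤ i → i ≤ a 1 →
      1 / (2 * t : ℝ) ≤ 𝔼 v ∈ F.gnd, if F.vIdx v = i then (1:ℝ) else 0 := by
    intro i h1 h2
    rw [expect_eq_sum_div_card, sum_boole, le_div_iff₀ hgc]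
    have h3 : F.gnd.card / a 1 ≤ (F.gnd.filter fun v => F.vIdx v = i).card := by
      rcases hsize i h1 h2 with h | h <;> omega
    have h4 : F.gnd.card ≤ 2 * t * (F.gnd.card / a 1) := by
      have := Nat.lt_mul_div_succ F.gnd.card ha1
      calc F.gnd.card ≤ a 1 * (F.gnd.card / a 1 + 1) := this.le
        _ ≤ t * (2 * (F.gnd.card / a 1)) := Nat.mul_le_mul hat1 (by omega)
        _ = _ := by ring
    have h5 : (F.gnd.card : ℝ) ≤ 2 * t * (F.gnd.filter fun v => F.vIdx v = i).card := by
      exact_mod_cast h4.trans (Nat.mul_le_mul_left _ h3)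
    rw [one_div, inv_mul_le_iff₀ (by linarith)]
    exact h5
  have hfol : ∀ (j m : ℕ), j ≤ k → m ≤ k - 1 → ∀ c : Fin j → ℕ, Function.Injective c →
      (∀ i, 1 ≤ c i ∧ c i ≤ a 1) → ∀ ℓ : Finset ℕ → ℕ,
      (∀ M ⊆ univ.image c, 2 ≤ M.card → M.card ≤ k - 1 → 1 ≤ ℓ M ∧ ℓ M ≤ a M.card) →
      γ ≤ 𝔼 y ∈ tuples (Fin j) F.gnd, if F.Follows c ℓ (midSets j m) y then (1:ℝ) else 0 := by
    intro j m hj hm c hc hcr ℓ hℓ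
    have h1 : 1 / (t : ℝ) ≤ 1 := by rw [div_le_one (by linarith)]; exact ht'
    have h2 : 1 / (2 * t : ℝ) ≤ 1 := by rw [div_le_one (by linarith)]; linarith
    refine hγ.trans (le_trans ?_ (le_expect_follows hη (β := 1 / (2 * t : ℝ)) (by positivity) ht
      (fun i hi => hat i (by omega)) hgn hcls hcut hc hcr hℓ _ (midSets j m) rfl ?_ ?_))
    · have h3 : (midSets j m).card ≤ 2 ^ k :=
        (card_le_univ _).trans (by simpa using Nat.pow_le_pow_right (by norm_num) hj)
      have h4 : (((midSets j m).card : ℕ) : ℝ) ≤ 2 ^ k := by exact_mod_cast h3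
      have h5 := mul_le_mul_of_nonneg_right h4 hη
      have h6 : (1 / (2 * t : ℝ)) ^ k * (1 / (t : ℝ)) ^ 2 ^ k ≤
          (1 / (2 * t : ℝ)) ^ j * (1 / (t : ℝ)) ^ (midSets j m).card :=
        mul_le_mul (pow_le_pow_of_le_one (by positivity) h2 hj)
          (pow_le_pow_of_le_one (by positivity) h1 h3) (by positivity) (by positivity)
      linarith
    · intro L hL
      simp only [midSets, mem_filter, mem_univ, true_and] at hL
      omega
    · intro L hL L' hL' h2
      simp only [midSets, mem_filter, mem_univ, true_and] at hL ⊢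
      have := card_le_card hL'
      omega
  have himg : F.gnd.image F.vIdx = Icc 1 (a 1) := by
    ext i
    rw [mem_image, mem_Icc]
    constructor
    · rintro ⟨v, hv, rfl⟩; exact hidx v hv
    · rintro ⟨h1, h2⟩
      have h3 : 0 < (F.gnd.filter fun v => F.vIdx v = i).card := by
        rcases hsize i h1 h2 with h | h <;> omega
      obtain ⟨v, hv⟩ := card_pos.1 h3
      exact ⟨v, (mem_filter.1 hv).1, (mem_filter.1 hv).2⟩
  have hlab : ∀ J : Finset V, J ⊆ F.gnd → Set.InjOn F.vIdx J → ∀ M ⊆ J.image F.vIdx,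
      2 ≤ M.card → M.card ≤ k - 1 → 1 ≤ F.lab J M ∧ F.lab J M ≤ a M.card := by
    intro J hJg hJi M hM h2 hm
    obtain ⟨R, hR, rfl⟩ : ∃ R ⊆ J, R.image F.vIdx = M :=
      ⟨_, filter_subset _ _, exists_subset_image_eq hM⟩
    have hRi : Set.InjOn F.vIdx R := hJi.mono (by exact_mod_cast hR)
    rw [card_image_of_injOn hRi] at h2 hm ⊢
    rw [lab_image hJi hR]
    exact hlbl _ h2 hm _ (hF.mem_cross.2 ⟨hR.trans hJg, rfl, hRi⟩)
  refine ⟨isLabeled_of_std hF hka hcl himg hlbl fun j hj hjk J hJ b hb hba =>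
    exists_match_lbl_of_follows hF hγ0 hj hidx hlbl (hfol j j (by omega) hjk) hJ hb hba,
    ⟨?_, ?_, ?_⟩, ?_⟩
  · rw [one_div, inv_mul_cancel₀]
    exact_mod_cast (by omega : a 1 ≠ 0)
  · intro v hv
    rw [hF.vClass_eq v hv]
    exact hsize _ (hidx v hv).1 (hidx v hv).2
  · refine polyadReg_of_labSet hF hcl fun K hK j hj hjk J hJK hJc => ?_
    obtain ⟨hKg, -, hKi⟩ := hF.mem_cross.1 hK
    have hJg := hJK.trans hKg
    have hJi : Set.InjOn F.vIdx J := hKi.mono (by exact_mod_cast hJK)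
    obtain ⟨c, hc, hcX⟩ := exists_enum_finset ((card_image_of_injOn hJi).trans hJc)
    have hcr : ∀ i, 1 ≤ c i ∧ c i ≤ a 1 := fun i => by
      obtain ⟨v, hv, hvi⟩ := mem_image.1 (hcX ▸ mem_image_of_mem c (mem_univ i))
      rw [← hvi]
      exact hidx v (hJg hv)
    have hℓ : ∀ M ⊆ univ.image c, 2 ≤ M.card → M.card ≤ k - 1 →
      1 ≤ F.lab J M ∧ F.lab J M ≤ a M.card := hcX ▸ hlab J hJg hJi
    have hb := hlbl j hj hjk J (hF.mem_cross.2 ⟨hJg, hJc, hJi⟩)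
    rw [← hcX]
    refine regPairC_of_abs_expect_le hF hgn hj hc hε hηγ
      (hfol j (j - 1) (by omega) (by omega) c hc hcr _ hℓ) fun u hu hu1 => ?_
    simp only [patF_labSet hc]
    exact hcut j hj hjk c hc hcr _ (fun M hM h2 hm => hℓ M hM h2 (by omega)) _ hb.1 hb.2 u hu hu1
  · intro x hx
    obtain ⟨c, hc, hcX⟩ := exists_enum_finset hx.1
    rw [hF.polyAt_eq hk, ← hcX]
    refine regPairC_of_abs_expect_le hF hgn hk hc hε hηγ
      (hfol k (k - 1) le_rfl le_rfl c hc (fun i => hx.2.1 _ (hcX ▸ mem_image_of_mem c (mem_univ i)))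
        _ (hcX ▸ hx.2.2.1)) fun u hu hu1 => hcutH x hx c hc hcX u hu hu1

end LabFam
end FamilyOfCutSmall

section Pullback

variable {V : Type*} [DecidableEq V]

lemma exists_map_card_fiber (S : Finset ℕ) (s : ℕ → ℕ) :
    ∀ R : Finset V, R.card = ∑ i ∈ S, s i →
      ∃ f : V → ℕ, (∀ v ∈ R, f v ∈ S) ∧ ∀ i ∈ S, (R.filter fun v => f v = i).card = s i := by
  induction S using Finset.induction_on with
  | empty =>
    intro R hR
    rw [sum_empty, card_eq_zero] at hR
    exact ⟨fun _ => 0, by simp [hR], by simp⟩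
  | insert i S hi ih =>
    intro R hR
    rw [sum_insert hi] at hR
    obtain ⟨T, hTR, hTc⟩ := exists_subset_card_eq (show s i ≤ R.card by omega)
    obtain ⟨f, hf, hfc⟩ := ih (R \ T) (by rw [card_sdiff_of_subset hTR]; omega)
    refine ⟨fun v => if v ∈ T then i else f v, fun v hv => ?_, fun i' hi' => ?_⟩
    · dsimp only
      split_ifs with h
      · exact mem_insert_self _ _
      · exact mem_insert_of_mem (hf v (mem_sdiff.2 ⟨hv, h⟩))
    · rcases mem_insert.1 hi' with rfl | hi'
      · rw [← hTc]
        congr 1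
        ext v
        rw [mem_filter]
        constructor
        · rintro ⟨hv, h⟩
          by_contra hvT
          simp only [if_neg hvT] at h
          exact hi (h ▸ hf v (mem_sdiff.2 ⟨hv, hvT⟩))
        · exact fun hv => ⟨hTR hv, if_pos hv⟩
      · rw [← hfc i' hi']
        congr 1
        ext v
        rw [mem_filter, mem_filter, mem_sdiff]
        have hne : i ≠ i' := fun h => hi (h ▸ hi')
        by_cases hvT : v ∈ T <;> simp [hvT, hne]

/-- An almost balanced colouring can be made balanced by recolouring few points. -/
lemma exists_balanced (Q : Finset V) (f : V → ℕ) {m : ℕ} (hm : 1 ≤ m) {μ : ℝ} (hμ : 0 ≤ μ)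
    (hf : ∀ i, 1 ≤ i → i ≤ m →
      (Q.card : ℝ) / m - μ * Q.card ≤ ((Q.filter fun v => f v = i).card : ℝ)) :
    ∃ g : V → ℕ, (∀ v ∈ Q, 1 ≤ g v ∧ g v ≤ m) ∧
      (∀ i, 1 ≤ i → i ≤ m → (Q.filter fun v => g v = i).card = Q.card / m ∨
        (Q.filter fun v => g v = i).card = Q.card / m + 1) ∧
      ((Q.filter fun v => g v ≠ f v).card : ℝ) ≤ m * (μ * Q.card + 1) := by
  set s : ℕ → ℕ := fun i => Q.card / m + if i ≤ Q.card % m then 1 else 0 with hs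
  have hsum : ∑ i ∈ Icc 1 m, s i = Q.card := by
    have hmod : Q.card % m < m := Nat.mod_lt _ hm
    have : (Icc 1 m).filter (fun i => i ≤ Q.card % m) = Icc 1 (Q.card % m) := by
      ext i; simp only [mem_filter, mem_Icc]; omega
    simp only [hs]
    rw [sum_add_distrib, sum_const, Nat.card_Icc, smul_eq_mul, ← card_filter, this, Nat.card_Icc,
      Nat.add_sub_cancel, Nat.add_sub_cancel]
    exact Nat.div_add_mod _ _
  have hA : ∀ i, ∃ A ⊆ Q.filter fun v => f v = i,
      A.card = min (Q.filter fun v => f v = i).card (s i) := fun i =>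
    exists_subset_card_eq (min_le_left _ _)
  choose A hA hAc using hA
  have hdisj : Set.PairwiseDisjoint (Icc 1 m : Finset ℕ) A := by
    intro i _ i' _ hne
    refine disjoint_left.2 fun v hv hv' => hne ?_
    rw [← (mem_filter.1 (hA i hv)).2, (mem_filter.1 (hA i' hv')).2]
  set K := (Icc 1 m).biUnion A with hK
  have hKQ : K ⊆ Q := by
    intro v hv
    obtain ⟨i, -, hv⟩ := mem_biUnion.1 hv
    exact (mem_filter.1 (hA i hv)).1
  have hKc : K.card = ∑ i ∈ Icc 1 m, (A i).card := card_biUnion hdisj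
  have hR : (Q \ K).card = ∑ i ∈ Icc 1 m, (s i - (A i).card) := by
    have h1 : ∑ i ∈ Icc 1 m, (s i - (A i).card) + ∑ i ∈ Icc 1 m, (A i).card = Q.card := by
      rw [← sum_add_distrib, ← hsum]
      refine sum_congr rfl fun i _ => Nat.sub_add_cancel ?_
      rw [hAc]; exact min_le_right _ _
    rw [card_sdiff_of_subset hKQ]
    omega
  obtain ⟨g, hg, hgc⟩ := exists_map_card_fiber (Icc 1 m) _ (Q \ K) hR
  have hKf : ∀ v ∈ K, 1 ≤ f v ∧ f v ≤ m ∧ v ∈ A (f v) := by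
    intro v hv
    obtain ⟨i, hi, hv⟩ := mem_biUnion.1 hv
    obtain rfl := (mem_filter.1 (hA i hv)).2
    exact ⟨(mem_Icc.1 hi).1, (mem_Icc.1 hi).2, hv⟩
  refine ⟨fun v => if v ∈ K then f v else g v, fun v hv => ?_, fun i h1 h2 => ?_, ?_⟩
  · dsimp only
    split_ifs with h
    · exact ⟨(hKf v h).1, (hKf v h).2.1⟩
    · exact mem_Icc.1 (hg v (mem_sdiff.2 ⟨hv, h⟩))
  · have hi : i ∈ Icc 1 m := mem_Icc.2 ⟨h1, h2⟩
    have h3 : (Q.filter fun v => (if v ∈ K then f v else g v) = i) =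
        A i ∪ (Q \ K).filter fun v => g v = i := by
      ext v
      rw [mem_filter, mem_union, mem_filter, mem_sdiff]
      by_cases hv : v ∈ K
      · rw [if_pos hv]
        constructor
        · rintro ⟨-, rfl⟩; exact Or.inl (hKf v hv).2.2
        · rintro (h | h)
          · exact mem_filter.1 (hA i h)
          · exact absurd hv h.1.2
      · rw [if_neg hv]
        constructor
        · rintro ⟨h, rfl⟩; exact Or.inr ⟨⟨h, hv⟩, rfl⟩
        · rintro (h | h)
          · exact absurd (mem_biUnion.2 ⟨i, hi, h⟩) hv
          · exact ⟨h.1.1, h.2⟩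
    have h4 : (Q.filter fun v => (if v ∈ K then f v else g v) = i).card = s i := by
      rw [h3, card_union_of_disjoint, hgc i hi]
      · have := hAc i
        omega
      · refine disjoint_left.2 fun v hv hv' => ?_
        exact (mem_sdiff.1 (mem_filter.1 hv').1).2 (mem_biUnion.2 ⟨i, hi, hv⟩)
    rw [h4]
    simp only [hs]
    split_ifs
    · exact Or.inr rfl
    · exact Or.inl rfl
  · have h1 : (Q.filter fun v => (if v ∈ K then f v else g v) ≠ f v) ⊆ Q \ K := by
      intro v hv
      rw [mem_filter] at hv
      refine mem_sdiff.2 ⟨hv.1, fun hvK => hv.2 (if_pos hvK)⟩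
    calc _ ≤ (((Q \ K).card : ℕ) : ℝ) := by exact_mod_cast card_le_card h1
      _ = ∑ i ∈ Icc 1 m, (((s i - (A i).card : ℕ)) : ℝ) := by rw [hR]; push_cast; rfl
      _ ≤ ∑ i ∈ Icc 1 m, (μ * Q.card + 1) := by
        refine sum_le_sum fun i hi => ?_
        have hi := mem_Icc.1 hi
        have h2 := hf i hi.1 hi.2
        have h3 : ((Q.card / m : ℕ) : ℝ) ≤ (Q.card : ℝ) / m := Nat.cast_div_le
        have h4 : s i ≤ Q.card / m + 1 := by
          simp only [hs]; split_ifs <;> omega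
        have h4' : (s i : ℝ) ≤ ((Q.card / m : ℕ) : ℝ) + 1 := by exact_mod_cast h4
        have h6 : 0 ≤ μ * Q.card := by positivity
        rw [hAc]
        rcases le_total (Q.filter fun v => f v = i).card (s i) with h | h
        · rw [min_eq_left h, Nat.cast_sub h]; linarith
        · rw [min_eq_right h, Nat.sub_self]; push_cast; linarith
      _ = _ := by rw [sum_const, Nat.card_Icc, Nat.add_sub_cancel, nsmul_eq_mul]

namespace LabFam

/-- The family of partitions in standard form with the given vertex classes and labels. -/
noncomputable def std (Q : Finset V) (idx : V → ℕ) (l : ℕ → Finset V → ℕ) : LabFam V where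
  gnd := Q
  vClass v := Q.filter fun u => idx u = idx v
  cls j J :=
    matchSet ⟨⟨Q, fun _ => ∅, fun _ _ => ∅⟩, idx, l⟩ j j (J.image idx)
      (lab ⟨⟨Q, fun _ => ∅, fun _ _ => ∅⟩, idx, l⟩ J)
  vIdx := idx
  lbl := l

lemma std_vStd (Q : Finset V) (idx : V → ℕ) (l : ℕ → Finset V → ℕ) : (std Q idx l).VStd :=
  ⟨fun _ _ => rfl⟩

lemma std_clsStd (Q : Finset V) (idx : V → ℕ) (l : ℕ → Finset V → ℕ) (j : ℕ) :
    (std Q idx l).ClsStd j :=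
  fun _ _ => rfl

/-- The family of partitions on `Q` pulled back from `P` along `φ`. -/
noncomputable def pullback (P : LabFam V) (Q : Finset V) (φ : V → V) : LabFam V :=
  std Q (fun v => P.vIdx (φ v)) fun j I => P.lbl j (I.image φ)

variable {P : LabFam V} {Q : Finset V} {φ : V → V}

lemma pullback_follows (hφ : ∀ v ∈ Q, φ v ∈ P.gnd) {j : ℕ} {c : Fin j → ℕ} {ℓ : Finset ℕ → ℕ}
    {𝓛 : Finset (Finset (Fin j))} {y : Fin j → V} (hy : ∀ i, y i ∈ Q) :
    (P.pullback Q φ).Follows c ℓ 𝓛 y ↔ P.Follows c ℓ 𝓛 (φ ∘ y) := by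
  refine and_congr (forall_congr' fun i => ?_) (forall₂_congr fun L _ => ?_)
  · exact and_congr_left fun _ => iff_of_true (hy i) (hφ _ (hy i))
  · rw [← Finset.image_image]; rfl

lemma abs_pullback_patF_sub_le (hφ : ∀ v ∈ Q, φ v ∈ P.gnd) {j : ℕ} {c : Fin j → ℕ}
    {ℓ : Finset ℕ → ℕ} {A A' : Finset V → Prop} {d : ℝ} (hd : 0 ≤ d) (hd1 : d ≤ 1)
    {y : Fin j → V} (hy : ∀ i, y i ∈ Q)
    (hA : φ ∘ y = y → (A (univ.image y) ↔ A' (univ.image y))) :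
    |(P.pullback Q φ).patF c ℓ A d y - P.patF c ℓ A' d y| ≤
      2 * if ∃ i, y i ∈ Q.filter (fun v => φ v ≠ v) then 1 else 0 := by
  split_ifs with h
  · have h1 := abs_patF_le (F := P.pullback Q φ) c ℓ A hd hd1 y
    have h2 := abs_patF_le (F := P) c ℓ A' hd hd1 y
    rw [abs_le] at *
    constructor <;> linarith
  · have hφy : φ ∘ y = y := by
      funext i
      by_contra hi
      exact h ⟨i, mem_filter.2 ⟨hy i, hi⟩⟩
    have h1 := pullback_follows (P := P) hφ (c := c) (ℓ := ℓ) (𝓛 := midSets j (j - 1)) hy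
    rw [hφy] at h1
    have : (P.pullback Q φ).patF c ℓ A d y = P.patF c ℓ A' d y := by
      simp only [patF, h1, hA hφy]
    rw [this]; simp

lemma abs_expect_mul_prod_le_add {j : ℕ} {f g : (Fin j → V) → ℝ} {u : Fin j → (Fin j → V) → ℝ}
    (hu1 : ∀ i y, |u i y| ≤ 1) {A : Finset V}
    (h : ∀ y ∈ tuples (Fin j) Q, |f y - g y| ≤ 2 * if ∃ i, y i ∈ A then 1 else 0) :
    |𝔼 y ∈ tuples (Fin j) Q, f y * ∏ i, u i y| ≤
      |𝔼 y ∈ tuples (Fin j) Q, g y * ∏ i, u i y| + 2 * (j * (A.card / Q.card)) := by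
  have h1 : |𝔼 y ∈ tuples (Fin j) Q, f y * ∏ i, u i y - 𝔼 y ∈ tuples (Fin j) Q, g y * ∏ i, u i y|
      ≤ 2 * (j * (A.card / Q.card)) := by
    rw [← expect_sub_distrib]
    calc _ ≤ 𝔼 y ∈ tuples (Fin j) Q, |f y * ∏ i, u i y - g y * ∏ i, u i y| := abs_expect_le _ _
      _ ≤ 𝔼 y ∈ tuples (Fin j) Q, 2 * (if ∃ i, y i ∈ A then (1:ℝ) else 0) := by
        refine expect_le_expect fun y hy => ?_
        rw [← sub_mul, abs_mul]
        refine (mul_le_of_le_one_right (abs_nonneg _) ?_).trans (h y hy)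
        rw [abs_prod]
        exact prod_le_one (fun i _ => abs_nonneg _) fun i _ => hu1 i y
      _ ≤ _ := by
        rw [← mul_expect]
        refine mul_le_mul_of_nonneg_left ?_ zero_le_two
        refine le_trans (le_of_eq ?_)
          ((expect_hit_le (ι := Fin j) Q A).trans_eq (by rw [Fintype.card_fin]))
        congr!
  have := abs_sub_abs_le_abs_sub (𝔼 y ∈ tuples (Fin j) Q, f y * ∏ i, u i y)
    (𝔼 y ∈ tuples (Fin j) Q, g y * ∏ i, u i y)
  linarith

lemma exists_equitPartition_of_cutSmall {k t : ℕ} {a : ℕ → ℕ} (hP : P.IsLabeled k a)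
    (hQ : Q ⊆ P.gnd) {d : Addr → ℝ} (hd : DensityFun k a d) {H : Finset (Finset V)}
    {ε η μ γ : ℝ} (hk : 2 ≤ k) (ht : 1 ≤ t) (hat : ∀ i, 1 ≤ i → i ≤ k - 1 → 1 ≤ a i ∧ a i ≤ t)
    (hq : t ≤ Q.card) (hη : 0 ≤ η) (hμ : 0 ≤ μ)
    (hsize : ∀ i, 1 ≤ i → i ≤ a 1 →
      (Q.card : ℝ) / a 1 - μ * Q.card ≤ ((Q.filter fun v => P.vIdx v = i).card : ℝ))
    (hcut : ∀ s, 2 ≤ s → s ≤ k - 1 → ∀ c : Fin s → ℕ, Function.Injective c →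
      (∀ i, 1 ≤ c i ∧ c i ≤ a 1) → ∀ ℓ : Finset ℕ → ℕ,
      (∀ M ⊆ univ.image c, 2 ≤ M.card → M.card ≤ s - 1 → 1 ≤ ℓ M ∧ ℓ M ≤ a M.card) →
      ∀ b, 1 ≤ b → b ≤ a s →
      ∀ u : Fin s → (Fin s → V) → ℝ, (∀ i, DependsOn (u i) {i}ᶜ) → (∀ i y, |u i y| ≤ 1) →
        |𝔼 y ∈ tuples (Fin s) Q,
          P.patF c ℓ (fun I => P.lbl s I = b) (1 / (a s : ℝ)) y * ∏ i, u i y| ≤ η)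
    (hcutH : ∀ x, IsAddress k (k - 1) a x → ∀ c : Fin k → ℕ, Function.Injective c →
      univ.image c = x.1 →
      ∀ u : Fin k → (Fin k → V) → ℝ, (∀ i, DependsOn (u i) {i}ᶜ) → (∀ i y, |u i y| ≤ 1) →
      |𝔼 y ∈ tuples (Fin k) Q, P.patF c x.2 (· ∈ H) (d x) y * ∏ i, u i y| ≤ η)
    (hε : 0 < ε) (hγ0 : 0 < γ)
    (hηγ : η + 2 * (k * (t * (μ + 1 / Q.card))) ≤ ε ^ 2 * γ)
    (hγ : γ ≤ (1 / (2 * t : ℝ)) ^ k * (1 / (t : ℝ)) ^ 2 ^ k -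
      2 ^ k * (η + 2 * (k * (t * (μ + 1 / Q.card))))) :
    ∃ F : LabFam V, F.gnd = Q ∧ F.IsEquitPartition k a ε d (H.filter fun e => e ⊆ Q) := by
  obtain ⟨ha1, hat1⟩ := hat 1 le_rfl (by omega)
  have hgc : (0:ℝ) < Q.card := by exact_mod_cast (by omega : 0 < Q.card)
  obtain ⟨g, hg1, hgs, hgm⟩ := exists_balanced Q P.vIdx ha1 hμ hsize
  have himg := hP.image_vIdx
  have hφ : ∀ v, ∃ w, v ∈ Q → w ∈ P.gnd ∧ P.vIdx w = g v ∧ (g v = P.vIdx v → w = v) := by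
    intro v
    by_cases hv : v ∈ Q
    · by_cases h : g v = P.vIdx v
      · exact ⟨v, fun _ => ⟨hQ hv, h.symm, fun _ => rfl⟩⟩
      · obtain ⟨w, hw, hwv⟩ := mem_image.1 (himg ▸ mem_Icc.2 (hg1 v hv))
        exact ⟨w, fun _ => ⟨hw, hwv, fun h' => absurd h' h⟩⟩
    · exact ⟨v, fun h => absurd h hv⟩
  choose φ hφ using hφ
  have hφg : ∀ v ∈ Q, φ v ∈ P.gnd := fun v hv => (hφ v hv).1
  have hφi : ∀ v ∈ Q, P.vIdx (φ v) = g v := fun v hv => (hφ v hv).2.1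
  have hmoved : ((Q.filter fun v => φ v ≠ v).card : ℝ) / Q.card ≤ t * (μ + 1 / Q.card) := by
    have h1 : ((Q.filter fun v => φ v ≠ v).card : ℝ) ≤ (Q.filter fun v => g v ≠ P.vIdx v).card := by
      exact_mod_cast card_le_card fun v hv => by
        rw [mem_filter] at hv ⊢
        exact ⟨hv.1, fun h => hv.2 ((hφ v hv.1).2.2 h)⟩
    have h2 : (a 1 : ℝ) * (μ * Q.card + 1) ≤ t * (μ * Q.card + 1) :=
      mul_le_mul_of_nonneg_right (by exact_mod_cast hat1) (by positivity)
    rw [div_le_iff₀ hgc]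
    have h3 : (t : ℝ) * (μ + 1 / Q.card) * Q.card = t * (μ * Q.card + 1) := by
      field_simp
    linarith
  have hbound : ∀ s, s ≤ k → η + 2 * (s * (((Q.filter fun v => φ v ≠ v).card : ℝ) / Q.card)) ≤
      η + 2 * (k * (t * (μ + 1 / Q.card))) := by
    intro s hs
    have : (s : ℝ) ≤ k := by exact_mod_cast hs
    gcongr
  refine ⟨P.pullback Q φ, rfl, isEquitPartition_of_cutSmall (std_vStd _ _ _) hk ht
    hP.1.2.2.2.2.1 hat (fun j _ _ => std_clsStd _ _ _ j) ?_ ?_ ?_ hq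
    (η := η + 2 * (k * (t * (μ + 1 / Q.card)))) (by positivity) ?_ ?_ hε hγ0 hηγ hγ⟩
  · intro v hv
    change 1 ≤ P.vIdx (φ v) ∧ P.vIdx (φ v) ≤ a 1
    rw [hφi v hv]
    exact hg1 v hv
  · intro j hj hjk I hI
    obtain ⟨hIg, hIc, hIi⟩ := (std_vStd _ _ _).mem_cross.1 hI
    have hinj : Set.InjOn φ I := fun u hu v hv h => hIi hu hv (congrArg P.vIdx h)
    refine (hP.2.2.2 j hj hjk).1 _ (hP.vStd.mem_cross.2 ⟨?_, ?_, ?_⟩)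
    · intro w hw
      obtain ⟨v, hv, rfl⟩ := mem_image.1 hw
      exact hφg v (hIg hv)
    · rw [card_image_of_injOn hinj, hIc]
    · intro w hw w' hw' h
      obtain ⟨v, hv, rfl⟩ := mem_image.1 hw
      obtain ⟨v', hv', rfl⟩ := mem_image.1 hw'
      rw [hIi hv hv' h]
  · intro i h1 h2
    have : (Q.filter fun v => P.vIdx (φ v) = i) = Q.filter fun v => g v = i :=
      filter_congr fun v hv => by rw [hφi v hv]
    change (Q.filter fun v => P.vIdx (φ v) = i).card = _ ∨
      (Q.filter fun v => P.vIdx (φ v) = i).card = _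
    rw [this]
    exact hgs i h1 h2
  · intro s hs hsk c hc hcr ℓ hℓ b hb hba u hu hu1
    have has : (1:ℝ) ≤ a s := by exact_mod_cast hb.trans hba
    refine (abs_expect_mul_prod_le_add hu1 fun y hy => ?_).trans
      ((add_le_add_left (hcut s hs hsk c hc hcr ℓ hℓ b hb hba u hu hu1) _).trans
        (hbound s (by omega)))
    refine abs_pullback_patF_sub_le hφg (by positivity) (by rw [div_le_one (by linarith)]; exact has)
      (mem_tuples.1 hy) fun h => ?_
    change P.lbl s ((univ.image y).image φ) = b ↔ _
    rw [Finset.image_image, h]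
  · intro x hx c hc hcX u hu hu1
    refine (abs_expect_mul_prod_le_add hu1 fun y hy => ?_).trans
      ((add_le_add_left (hcutH x hx c hc hcX u hu hu1) _).trans (hbound k le_rfl))
    refine abs_pullback_patF_sub_le hφg (hd x hx).1 (hd x hx).2 (mem_tuples.1 hy) fun _ => ?_
    simp only [mem_filter]
    refine and_iff_left fun v hv => ?_
    obtain ⟨i, -, rfl⟩ := mem_image.1 hv
    exact mem_tuples.1 hy i

end LabFam
end Pullback

section Sampling

variable {V : Type*}

/-- On tuples from `U`, the function `f` has correlation at most `η` with products of functions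
each of which omits one variable. -/
def CutOn {j : ℕ} (f : (Fin j → V) → ℝ) (U : Finset V) (η : ℝ) : Prop :=
  ∀ u : Fin j → (Fin j → V) → ℝ, (∀ i, DependsOn (u i) {i}ᶜ) → (∀ i y, |u i y| ≤ 1) →
    |𝔼 y ∈ tuples (Fin j) U, f y * ∏ i, u i y| ≤ η

lemma cutOn_of_expect_boxF_le {Q : Finset V} {k j : ℕ} (hj : 1 ≤ j) (hjk : j ≤ k) {η : ℝ}
    (hη : 0 < η) (hη1 : η ≤ 1) {f : (Fin j → V) → ℝ}
    (h : 𝔼 x ∈ tuples (Fin j) Q, 𝔼 z ∈ tuples (Fin j) Q, boxF j f x z ≤ η ^ 2 ^ k) :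
    CutOn f Q η := by
  intro u hu hu1
  have h1 := (expect_mul_prod_pow_le Q f u hu hu1).trans h
  have h2 : η ^ 2 ^ k ≤ η ^ 2 ^ j :=
    pow_le_pow_of_le_one hη.le hη1 (Nat.pow_le_pow_right (by norm_num) hjk)
  have heven : Even (2 ^ j) := (Nat.even_pow.2 ⟨even_two, by omega⟩)
  rw [← heven.pow_abs] at h1
  exact le_of_pow_le_pow_left₀ (by positivity) hη.le (h1.trans h2)

lemma card_not_cutOn_le {W : Finset V} {q k j : ℕ} (hj : 1 ≤ j) (hjk : j ≤ k) {η ε : ℝ}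
    (hη : 0 < η) (hη1 : η ≤ 1) (hε : 0 ≤ ε) (hq : q ≤ W.card) (hW : W.Nonempty)
    {f : (Fin j → V) → ℝ}
    (hf : ∀ y, |f y| ≤ 1)
    (hcut : ∀ u : Fin j → (Fin j → V) → ℝ, (∀ i, DependsOn (u i) {i}ᶜ) →
      (∀ i y, u i y = 0 ∨ u i y = 1) → |𝔼 y ∈ tuples (Fin j) W, f y * ∏ i, u i y| ≤ ε)
    (hεη : 2 ^ k * ε ≤ η ^ 2 ^ k / 8)
    (hq0 : 16 * (2 * (k : ℝ) + 1) ^ 2 / η ^ 2 ^ k ≤ q) :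
    (((W.powersetCard q).filter fun Q => ¬ CutOn f Q η).card : ℝ) ≤
      Real.exp (-((η ^ 2 ^ k) ^ 2 / (128 * (2 * (k : ℝ) + 1) ^ 2)) * q) *
        ((W.powersetCard q).card : ℝ) := by
  have hjk' : (j : ℝ) ≤ k := by exact_mod_cast hjk
  have hcard : (Fintype.card (Fin j ⊕ Fin j) : ℝ) = 2 * j := by
    rw [Fintype.card_sum, Fintype.card_fin]; push_cast; ring
  have hV : 𝔼 w ∈ tuples (Fin j ⊕ Fin j) W, boxF j f (w ∘ Sum.inl) (w ∘ Sum.inr) ≤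
      η ^ 2 ^ k / 8 := by
    rw [expect_tuples_sum]
    have h2 : (2:ℝ) ^ j * ε ≤ 2 ^ k * ε :=
      mul_le_mul_of_nonneg_right (pow_le_pow_right₀ (by norm_num) hjk) hε
    refine le_trans (expect_boxF_le W hW f hf (2 ^ j * ε) fun u hu hu1 => ?_) (h2.trans hεη)
    have := abs_expect_mul_prod_le_of_indicator W f ε hcut u hu hu1
    rwa [Fintype.card_fin] at this
  have hmain := card_filter_lt_expect_le (ι := Fin j ⊕ Fin j) (W := W) (q := q)
    (δ := η ^ 2 ^ k) (by positivity) (pow_le_one₀ hη.le hη1) hq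
    (F := fun w => boxF j f (w ∘ Sum.inl) (w ∘ Sum.inr)) (fun w => abs_boxF_le hf _ _) hV
    (by
      rw [hcard]
      refine le_trans ?_ hq0
      gcongr)
  rw [hcard] at hmain
  calc _ ≤ (((W.powersetCard q).filter fun Q =>
        η ^ 2 ^ k < 𝔼 w ∈ tuples (Fin j ⊕ Fin j) Q,
          boxF j f (w ∘ Sum.inl) (w ∘ Sum.inr)).card : ℝ) := by
        refine Nat.cast_le.2 (card_le_card fun Q hQ => ?_)
        rw [mem_filter] at hQ ⊢
        refine ⟨hQ.1, ?_⟩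
        by_contra hcon
        rw [not_lt, expect_tuples_sum] at hcon
        exact hQ.2 (cutOn_of_expect_boxF_le hj hjk hη hη1 hcon)
    _ ≤ _ := hmain
    _ ≤ _ := by
      gcongr

lemma card_exists_not_cutOn_le {T : Type*} [Fintype T] {W : Finset V} {q k : ℕ} (p : T → Prop)
    (j : T → ℕ) (f : ∀ τ, (Fin (j τ) → V) → ℝ) (hj : ∀ τ, p τ → 1 ≤ j τ ∧ j τ ≤ k) {η ε : ℝ}
    (hη : 0 < η) (hη1 : η ≤ 1) (hε : 0 ≤ ε) (hq : q ≤ W.card) (hW : W.Nonempty)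
    (hf : ∀ τ, p τ → ∀ y, |f τ y| ≤ 1)
    (hcut : ∀ τ, p τ → ∀ u : Fin (j τ) → (Fin (j τ) → V) → ℝ, (∀ i, DependsOn (u i) {i}ᶜ) →
      (∀ i y, u i y = 0 ∨ u i y = 1) →
      |𝔼 y ∈ tuples (Fin (j τ)) W, f τ y * ∏ i, u i y| ≤ ε)
    (hεη : 2 ^ k * ε ≤ η ^ 2 ^ k / 8)
    (hq0 : 16 * (2 * (k : ℝ) + 1) ^ 2 / η ^ 2 ^ k ≤ q) :
    (((W.powersetCard q).filter fun Q => ∃ τ, p τ ∧ ¬ CutOn (f τ) Q η).card : ℝ) ≤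
      Fintype.card T * (Real.exp (-((η ^ 2 ^ k) ^ 2 / (128 * (2 * (k : ℝ) + 1) ^ 2)) * q) *
        ((W.powersetCard q).card : ℝ)) := by
  have hsub : ((W.powersetCard q).filter fun Q => ∃ τ, p τ ∧ ¬ CutOn (f τ) Q η) ⊆
      (univ.filter p).biUnion fun τ => (W.powersetCard q).filter fun Q => ¬ CutOn (f τ) Q η := by
    intro Q hQ
    obtain ⟨hQ, τ, hτ, h⟩ := mem_filter.1 hQ
    exact mem_biUnion.2 ⟨τ, mem_filter.2 ⟨mem_univ τ, hτ⟩, mem_filter.2 ⟨hQ, h⟩⟩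
  calc _ ≤ (((univ.filter p).biUnion fun τ =>
        (W.powersetCard q).filter fun Q => ¬ CutOn (f τ) Q η).card : ℝ) :=
        Nat.cast_le.2 (card_le_card hsub)
    _ ≤ ∑ τ ∈ univ.filter p, (((W.powersetCard q).filter fun Q => ¬ CutOn (f τ) Q η).card : ℝ) := by
        exact_mod_cast card_biUnion_le
    _ ≤ ∑ τ ∈ univ.filter p, (Real.exp (-((η ^ 2 ^ k) ^ 2 / (128 * (2 * (k : ℝ) + 1) ^ 2)) * q) *
        ((W.powersetCard q).card : ℝ)) := by
        refine sum_le_sum fun τ hτ => ?_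
        have hτ := (mem_filter.1 hτ).2
        exact card_not_cutOn_le (hj τ hτ).1 (hj τ hτ).2 hη hη1 hε hq hW (hf τ hτ) (hcut τ hτ)
          hεη hq0
    _ ≤ _ := by
        rw [sum_const, nsmul_eq_mul]
        gcongr
        exact card_le_univ _

lemma one_sub_mul_card_le {α : Type*} {S B : Finset α} {R : α → Prop} {θ : ℝ}
    (hR : ∀ Q ∈ S, Q ∉ B → R Q) (hB : (B.card : ℝ) ≤ θ * S.card) :
    (1 - θ) * S.card ≤ ((S.filter R).card : ℝ) := by
  have h1 : S ⊆ S.filter R ∪ B := by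
    intro Q hQ
    by_cases h : Q ∈ B
    · exact mem_union_right _ h
    · exact mem_union_left _ (mem_filter.2 ⟨hQ, hR Q hQ h⟩)
  have h2 : (S.card : ℝ) ≤ (S.filter R).card + B.card := by
    exact_mod_cast (card_le_card h1).trans (card_union_le _ _)
  linarith

end Sampling

section Encoding

variable {V : Type*} [DecidableEq V]

/-- The labelling of the subsets of `univ.image c` given by a labelling of the subsets of
`Fin j`. -/
def pushLabel {j t : ℕ} (c : Fin j → ℕ) (lam : Finset (Fin j) → Fin (t + 1)) (M : Finset ℕ) : ℕ :=
  lam (univ.filter fun i => c i ∈ M)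

lemma exists_pushLabel_eq {j : ℕ} (t : ℕ) {c : Fin j → ℕ} (hc : Function.Injective c)
    (ℓ : Finset ℕ → ℕ) :
    ∃ lam : Finset (Fin j) → Fin (t + 1), ∀ M ⊆ univ.image c, ℓ M ≤ t → pushLabel c lam M = ℓ M := by
  refine ⟨fun L => ⟨min (ℓ (L.image c)) t, by omega⟩, fun M hM hℓ => ?_⟩
  obtain ⟨L, -, rfl⟩ := subset_image_iff.1 hM
  have : (univ.filter fun i => c i ∈ L.image c) = L := by
    ext i
    simp [hc.eq_iff]
  rw [pushLabel, this]
  exact min_eq_left hℓ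

/-- The address with index set `univ.image c` and labels `lam`. -/
noncomputable def pushAddr {k t : ℕ} (c : Fin k → ℕ) (lam : Finset (Fin k) → Fin (t + 1)) : Addr :=
  (univ.image c, fun M =>
    if M ⊆ univ.image c ∧ 2 ≤ M.card ∧ M.card ≤ k - 1 then pushLabel c lam M else 0)

lemma exists_pushAddr_eq {k t : ℕ} {a : ℕ → ℕ} (hat : ∀ i, 1 ≤ i → i ≤ k - 1 → a i ≤ t)
    {x : Addr} (hx : IsAddress k (k - 1) a x) {c : Fin k → ℕ} (hc : Function.Injective c)
    (hcx : univ.image c = x.1) :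
    ∃ lam : Finset (Fin k) → Fin (t + 1), pushAddr c lam = x := by
  obtain ⟨lam, hlam⟩ := exists_pushLabel_eq t hc x.2
  refine ⟨lam, Prod.ext hcx (funext fun M => ?_)⟩
  rw [pushAddr, hcx]
  dsimp only
  split_ifs with h
  · exact hlam M (hcx ▸ h.1) ((hx.2.2.1 M h.1 h.2.1 h.2.2).2.trans
      (hat _ (by omega) h.2.2))
  · exact (hx.2.2.2 M h).symm

lemma exists_fin_lift {j t : ℕ} {c : Fin j → ℕ} (h : ∀ i, c i ≤ t) :
    ∃ c' : Fin j → Fin (t + 1), (fun i => (c' i : ℕ)) = c :=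
  ⟨fun i => ⟨c i, Nat.lt_succ_of_le (h i)⟩, rfl⟩

namespace LabFam

variable {F : LabFam V}

lemma patF_congr_label {j : ℕ} {c : Fin j → ℕ} {ℓ ℓ' : Finset ℕ → ℕ} {A : Finset V → Prop} {d : ℝ}
    (hc : Function.Injective c)
    (h : ∀ M ⊆ univ.image c, 2 ≤ M.card → M.card ≤ j - 1 → ℓ M = ℓ' M) :
    F.patF c ℓ A d = F.patF c ℓ' A d := by
  funext y
  have : F.Follows c ℓ (midSets j (j - 1)) y ↔ F.Follows c ℓ' (midSets j (j - 1)) y := by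
    refine and_congr_right fun _ => forall₂_congr fun L hL => ?_
    simp only [midSets, mem_filter, mem_univ, true_and] at hL
    have hLc : (L.image c).card = L.card := card_image_of_injective _ hc
    rw [h (L.image c) (image_subset_image (subset_univ L)) (by omega) (by omega)]
  rw [patF, patF]
  simp only [this]

variable (F)

/-- The indicator of the vertex class with index `b`, centred at `d`. -/
noncomputable def vertF (b : ℕ) (d : ℝ) (y : Fin 1 → V) : ℝ :=
  (if F.vIdx (y 0) = b then 1 else 0) - d

variable {F}

lemma abs_vertF_le (b : ℕ) {d : ℝ} (hd : 0 ≤ d) (hd1 : d ≤ 1) (y : Fin 1 → V) :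
    |F.vertF b d y| ≤ 1 := by
  rw [vertF]
  split_ifs <;> rw [abs_le] <;> constructor <;> linarith

lemma expect_vertF {U : Finset V} (hU : U.Nonempty) (b : ℕ) (d : ℝ) :
    𝔼 y ∈ tuples (Fin 1) U, F.vertF b d y =
      ((U.filter fun v => F.vIdx v = b).card : ℝ) / U.card - d := by
  have h0 : tuples (Fin 0) U = {Fin.elim0} := by
    ext y
    simp [mem_tuples, Subsingleton.elim y Fin.elim0]
  have h1 : ∀ x, 𝔼 y ∈ tuples (Fin 0) U, F.vertF b d (Fin.cons x y) =
      (if F.vIdx x = b then 1 else 0) - d := by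
    intro x
    rw [h0, expect_singleton, vertF, Fin.cons_zero]
  rw [expect_tuples_succ]
  simp only [h1]
  rw [expect_sub_distrib, expect_const hU, expect_eq_sum_div_card, sum_boole]

lemma abs_expect_vertF_mul_le {U : Finset V} (hU : U.Nonempty) {b : ℕ} {d ε : ℝ}
    (h : |((U.filter fun v => F.vIdx v = b).card : ℝ) / U.card - d| ≤ ε)
    (u : Fin 1 → (Fin 1 → V) → ℝ) (hu : ∀ i, DependsOn (u i) {i}ᶜ)
    (hu1 : ∀ i y, u i y = 0 ∨ u i y = 1) :
    |𝔼 y ∈ tuples (Fin 1) U, F.vertF b d y * ∏ i, u i y| ≤ ε := by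
  have ⟨v, _⟩ := hU
  have hc : ∀ y, ∏ i, u i y = u 0 fun _ => v := by
    intro y
    rw [Fin.prod_univ_one]
    exact hu 0 fun i hi => absurd (Subsingleton.elim i 0) hi
  simp only [hc]
  rw [← expect_mul, expect_vertF hU]
  rcases hu1 0 fun _ => v with h0 | h0
  · rw [h0, mul_zero, abs_zero]; exact (abs_nonneg _).trans h
  · rwa [h0, mul_one]

lemma IsLabeled.abs_card_vIdx_div_sub_le {k : ℕ} {a : ℕ → ℕ} {ε : ℝ} (hF : F.IsLabeled k a)
    (hreg : F.toPartFam.IsEquitableE k a (1 / (a 1 : ℝ)) ε) (hg : F.gnd.Nonempty) {b : ℕ}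
    (hb : 1 ≤ b) (hba : b ≤ a 1) :
    |((F.gnd.filter fun v => F.vIdx v = b).card : ℝ) / F.gnd.card - 1 / a 1| ≤
      1 / F.gnd.card := by
  obtain ⟨v, hv, rfl⟩ := mem_image.1 (hF.image_vIdx ▸ mem_Icc.2 ⟨hb, hba⟩)
  rw [← hF.vStd.vClass_eq v hv]
  have hn : (0:ℝ) < F.gnd.card := by exact_mod_cast hg.card_pos
  have ha : (0:ℝ) < a 1 := by exact_mod_cast hb.trans hba
  have h1 : ((F.gnd.card / a 1 : ℕ) : ℝ) ≤ F.gnd.card / a 1 := Nat.cast_div_le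
  have h2 : (F.gnd.card : ℝ) / a 1 < ((F.gnd.card / a 1 : ℕ) : ℝ) + 1 := by
    rw [div_lt_iff₀ ha]
    exact_mod_cast (Nat.div_lt_iff_lt_mul (hb.trans hba)).1 (Nat.lt_succ_self _)
  have e : ((F.vClass v).card : ℝ) / F.gnd.card - 1 / a 1 =
      ((F.vClass v).card - F.gnd.card / a 1) / F.gnd.card := by
    field_simp
  rw [e, abs_div, abs_of_pos hn]
  gcongr
  rcases hreg.2.1 v hv with h | h <;> rw [h, abs_le] <;> push_cast <;> constructor <;> linarith

end LabFam

end Encoding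

section Main

variable {V : Type*} [DecidableEq V]

/-- Codes for a level `s`, an index pattern, labels of smaller subsets and a label. -/
abbrev PartIdx (k t : ℕ) : Type :=
  Σ s : Fin (k + 1), (Fin s → Fin (t + 1)) × (Finset (Fin s) → Fin (t + 1)) × Fin (t + 1)

/-- Codes for an enumerated address of level `k`. -/
abbrev PolyadIdx (k t : ℕ) : Type :=
  (Fin k → Fin (t + 1)) × (Finset (Fin k) → Fin (t + 1))

namespace LabFam

variable {P : LabFam V} {k t q : ℕ} {a : ℕ → ℕ} {d : Addr → ℝ} {H : Finset (Finset V)} {ε η : ℝ}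

/-- The conditions on a sample `Q` which make `P` restrict to an equitable partition. -/
structure GoodSample (P : LabFam V) (k t : ℕ) (a : ℕ → ℕ) (d : Addr → ℝ) (H : Finset (Finset V))
    (η : ℝ) (Q : Finset V) : Prop where
  vert : ∀ b : Fin (t + 1), 1 ≤ (b : ℕ) ∧ (b : ℕ) ≤ a 1 → CutOn (P.vertF b (1 / (a 1 : ℝ))) Q η
  part : ∀ τ : PartIdx k t, ((2 ≤ (τ.1 : ℕ) ∧ (τ.1 : ℕ) ≤ k - 1) ∧
      Function.Injective (fun i => (τ.2.1 i : ℕ)) ∧ 1 ≤ (τ.2.2.2 : ℕ) ∧ (τ.2.2.2 : ℕ) ≤ a τ.1) →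
    CutOn (P.patF (fun i => (τ.2.1 i : ℕ)) (pushLabel (fun i => (τ.2.1 i : ℕ)) τ.2.2.1)
      (fun I => P.lbl τ.1 I = τ.2.2.2) (1 / (a τ.1 : ℝ))) Q η
  polyad : ∀ τ : PolyadIdx k t, (Function.Injective (fun i => (τ.1 i : ℕ)) ∧
      IsAddress k (k - 1) a (pushAddr (fun i => (τ.1 i : ℕ)) τ.2)) →
    CutOn (P.patF (fun i => (τ.1 i : ℕ)) (pushAddr (fun i => (τ.1 i : ℕ)) τ.2).2 (· ∈ H)
      (d (pushAddr (fun i => (τ.1 i : ℕ)) τ.2))) Q η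

lemma card_not_goodSample_le (hP : P.IsEquitPartition k a ε d H) (hd : DensityFun k a d)
    (hk : 2 ≤ k) (hη : 0 < η) (hη1 : η ≤ 1) (hε : 0 ≤ ε) (hq : q ≤ P.gnd.card)
    (hg : P.gnd.Nonempty) (hn : 1 / (P.gnd.card : ℝ) ≤ ε)
    (hεη : 2 ^ k * ε ≤ η ^ 2 ^ k / 8)
    (hq0 : 16 * (2 * (k : ℝ) + 1) ^ 2 / η ^ 2 ^ k ≤ q) :
    (((P.gnd.powersetCard q).filter fun Q => ¬ P.GoodSample k t a d H η Q).card : ℝ) ≤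
      ((t + 1 + Fintype.card (PartIdx k t) + Fintype.card (PolyadIdx k t) : ℕ) : ℝ) *
      (Real.exp (-((η ^ 2 ^ k) ^ 2 / (128 * (2 * (k : ℝ) + 1) ^ 2)) * q) *
        ((P.gnd.powersetCard q).card : ℝ)) := by
  obtain ⟨hL, hE, hD⟩ := hP
  have hinv : ∀ m : ℕ, 1 ≤ m → (0:ℝ) ≤ 1 / m ∧ (1:ℝ) / m ≤ 1 := fun m hm =>
    ⟨by positivity, by
      rw [div_le_one (by exact_mod_cast hm)]
      exact_mod_cast hm⟩
  have h1 := card_exists_not_cutOn_le (T := Fin (t + 1)) (W := P.gnd) (q := q) (k := k)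
    (fun b => 1 ≤ (b : ℕ) ∧ (b : ℕ) ≤ a 1) (fun _ => 1)
    (fun b => P.vertF b (1 / (a 1 : ℝ))) (fun _ _ => ⟨le_rfl, by omega⟩) hη hη1 hε hq hg
    (fun b hb y => abs_vertF_le _ (hinv _ (hb.1.trans hb.2)).1 (hinv _ (hb.1.trans hb.2)).2 y)
    (fun b hb => abs_expect_vertF_mul_le hg
      ((hL.abs_card_vIdx_div_sub_le hE hg hb.1 hb.2).trans hn))
    hεη hq0
  have h2 := card_exists_not_cutOn_le (T := PartIdx k t) (W := P.gnd) (q := q) (k := k)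
    (fun τ => (2 ≤ (τ.1 : ℕ) ∧ (τ.1 : ℕ) ≤ k - 1) ∧
      Function.Injective (fun i => (τ.2.1 i : ℕ)) ∧ 1 ≤ (τ.2.2.2 : ℕ) ∧ (τ.2.2.2 : ℕ) ≤ a τ.1)
    (fun τ => τ.1)
    (fun τ => P.patF (fun i => (τ.2.1 i : ℕ)) (pushLabel (fun i => (τ.2.1 i : ℕ)) τ.2.2.1)
      (fun I => P.lbl τ.1 I = τ.2.2.2) (1 / (a τ.1 : ℝ)))
    (fun τ hτ => ⟨by omega, by omega⟩) hη hη1 hε hq hg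
    (fun τ hτ y => abs_patF_le _ _ _ (hinv _ (hτ.2.2.1.trans hτ.2.2.2)).1
      (hinv _ (hτ.2.2.1.trans hτ.2.2.2)).2 y)
    (fun τ hτ u hu hu1 => by
      have := hL.abs_expect_patF_labSet_le hε hE.2.2 hg hτ.1.1 hτ.1.2 hτ.2.1
        (pushLabel (fun i => (τ.2.1 i : ℕ)) τ.2.2.1) hτ.2.2.1 hτ.2.2.2 u hu hu1
      simpa only [patF_labSet hτ.2.1] using this)
    hεη hq0
  have h3 := card_exists_not_cutOn_le (T := PolyadIdx k t) (W := P.gnd) (q := q) (k := k)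
    (fun τ => Function.Injective (fun i => (τ.1 i : ℕ)) ∧
      IsAddress k (k - 1) a (pushAddr (fun i => (τ.1 i : ℕ)) τ.2)) (fun _ => k)
    (fun τ => P.patF (fun i => (τ.1 i : ℕ)) (pushAddr (fun i => (τ.1 i : ℕ)) τ.2).2 (· ∈ H)
      (d (pushAddr (fun i => (τ.1 i : ℕ)) τ.2)))
    (fun _ _ => ⟨by omega, le_rfl⟩) hη hη1 hε hq hg
    (fun τ hτ y => abs_patF_le _ _ _ (hd _ hτ.2).1 (hd _ hτ.2).2 y)
    (fun τ hτ u hu hu1 => by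
      have hreg := hD _ hτ.2
      rw [hL.vStd.polyAt_eq hk] at hreg
      exact abs_expect_patF_le hL.vStd hg hk hτ.1 hε (hd _ hτ.2).1 (hd _ hτ.2).2 hreg u hu hu1)
    hεη hq0
  rw [Fintype.card_fin] at h1
  refine le_trans ?_ ((add_le_add (add_le_add h1 h2) h3).trans_eq ?_)
  · rw [← Nat.cast_add, ← Nat.cast_add]
    refine Nat.cast_le.2 (le_trans (card_le_card fun Q hQ => ?_)
      ((card_union_le _ _).trans (Nat.add_le_add_right (card_union_le _ _) _)))
    obtain ⟨hQ, hbad⟩ := mem_filter.1 hQ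
    simp only [mem_union, mem_filter, hQ, true_and]
    by_contra! hcon
    exact hbad ⟨hcon.1.1, hcon.1.2, hcon.2⟩
  · push_cast
    ring

lemma GoodSample.exists_equitPartition {Q : Finset V} (h : P.GoodSample k t a d H η Q)
    (hL : P.IsLabeled k a) (hQ : Q ⊆ P.gnd) (hd : DensityFun k a d) (hk : 2 ≤ k) (ht : 1 ≤ t)
    (hat : ∀ i, 1 ≤ i → i ≤ k - 1 → 1 ≤ a i ∧ a i ≤ t) (hq : t ≤ Q.card) (hη : 0 ≤ η)
    {γ : ℝ} (hε : 0 < ε) (hγ0 : 0 < γ)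
    (hηγ : η + 2 * (k * (t * (η + 1 / Q.card))) ≤ ε ^ 2 * γ)
    (hγ : γ ≤ (1 / (2 * t : ℝ)) ^ k * (1 / (t : ℝ)) ^ 2 ^ k -
      2 ^ k * (η + 2 * (k * (t * (η + 1 / Q.card))))) :
    ∃ F : LabFam V, F.gnd = Q ∧ F.IsEquitPartition k a ε d (H.filter fun e => e ⊆ Q) := by
  have hat1 := (hat 1 le_rfl (by omega)).2
  have hQ0 : (0:ℝ) < Q.card := by exact_mod_cast (by omega : 0 < Q.card)
  refine exists_equitPartition_of_cutSmall hL hQ hd hk ht hat hq hη hη ?_ ?_ ?_ hε hγ0 hηγ hγ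
  · intro i hi hia
    have h1 := h.vert ⟨i, by omega⟩ ⟨hi, hia⟩ (fun _ _ => 1) (fun _ _ _ _ => rfl)
      (fun _ _ => by simp)
    simp only [prod_const_one, mul_one] at h1
    rw [expect_vertF (card_pos.1 (by omega))] at h1
    have h2 := (abs_le.1 h1).1
    have h3 : 1 / (a 1 : ℝ) - η ≤ ((Q.filter fun v => P.vIdx v = i).card : ℝ) / Q.card := by
      linarith
    rw [le_div_iff₀ hQ0] at h3
    refine le_trans (le_of_eq ?_) h3
    ring
  · intro s hs hsk c hc hca ℓ hℓ b hb hba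
    obtain ⟨c', rfl⟩ := exists_fin_lift fun i => (hca i).2.trans hat1
    obtain ⟨lam, hlam⟩ := exists_pushLabel_eq t hc ℓ
    have h1 := h.part ⟨⟨s, by omega⟩, c', lam, ⟨b, Nat.lt_succ_of_le (hba.trans
      (hat s (by omega) hsk).2)⟩⟩ ⟨⟨hs, hsk⟩, hc, hb, hba⟩
    dsimp only at h1
    rw [patF_congr_label hc fun M hM h2 hMs => hlam M hM
      ((hℓ M hM h2 hMs).2.trans (hat _ (by omega) (by omega)).2)] at h1
    exact h1
  · intro x hx c hc hcx
    obtain ⟨lam, hlam⟩ := exists_pushAddr_eq (fun i h1 hi => (hat i h1 hi).2) hx hc hcx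
    obtain ⟨c', rfl⟩ := exists_fin_lift fun i => ((hx.2.1 (c i)
      (hcx ▸ mem_image_of_mem c (mem_univ i))).2.trans hat1)
    have h1 := h.polyad ⟨c', lam⟩
    dsimp only at h1
    rw [hlam] at h1
    exact h1 ⟨hc, hx⟩

end LabFam

end Main

end HypReg

namespace HypReg

open Finset

attribute [local instance 10] Classical.propDecidable

/-- Lemma: with high probability, a uniformly random q-subset of the vertex set of a
hypergraph admitting an (ε, a, d)-equitable partition admits an (ε', a, d)-equitable
partition of the induced hypergraph. -/
theorem random_sample_equitable_partition :
    ∀ k t : ℕ, 2 ≤ k → 1 ≤ t →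
    ∃ ε'₀ : ℝ, 0 < ε'₀ ∧ ∀ ε' : ℝ, 0 < ε' → ε' ≤ ε'₀ →
    ∃ ε₁ : ℝ, 0 < ε₁ ∧ ∀ ε : ℝ, 0 < ε → ε ≤ ε₁ →
    ∃ q₀ : ℕ, ∀ q n : ℕ, q₀ ≤ q → q < n →
    ∀ (V : Type) [DecidableEq V], ∀ W : Finset V, W.card = n →
    ∀ a : ℕ → ℕ, (∀ i, 1 ≤ i → i ≤ k - 1 → 1 ≤ a i ∧ a i ≤ t) →
    ∀ d : Addr → ℝ, DensityFun k a d →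
    ∀ H : Finset (Finset V), IsKGraph W k H →
    ∀ P : LabFam V, P.gnd = W → P.IsEquitPartition k a ε d H →
    (1 - Real.exp (-(ε ^ 3 * q))) * ((W.powersetCard q).card : ℝ) ≤
      (((W.powersetCard q).filter fun Q =>
        ∃ Ff : LabFam V, Ff.gnd = Q ∧
          Ff.IsEquitPartition k a ε' d (H.filter fun e => e ⊆ Q)).card : ℝ) := by
  intro k t hk ht
  refine ⟨1, one_pos, fun ε' hε' _ => ?_⟩
  have ht0 : (0:ℝ) < t := by exact_mod_cast ht
  obtain ⟨β, hβd⟩ : ∃ β : ℝ, β = (1 / (2 * t : ℝ)) ^ k * (1 / (t : ℝ)) ^ 2 ^ k := ⟨_, rfl⟩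
  have hβ : 0 < β := by rw [hβd]; positivity
  have hm : (0:ℝ) < min (ε' ^ 2 * (β / 2)) (min (β / 2 / 2 ^ k) 1) :=
    lt_min (by positivity) (lt_min (by positivity) one_pos)
  obtain ⟨η₂, hη₂0, hη₂ε, hη₂β, hη₂1⟩ : ∃ η₂ : ℝ, 0 < η₂ ∧ η₂ ≤ ε' ^ 2 * (β / 2) ∧
      2 ^ k * η₂ ≤ β / 2 ∧ η₂ ≤ 1 := by
    refine ⟨_, hm, min_le_left _ _, ?_, (min_le_right _ _).trans (min_le_right _ _)⟩
    rw [mul_comm, ← le_div_iff₀ (by positivity)]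
    exact (min_le_right _ _).trans (min_le_left _ _)
  obtain ⟨η, hη0, hη⟩ : ∃ η : ℝ, 0 < η ∧ η * (1 + 4 * (k * t)) = η₂ :=
    ⟨η₂ / (1 + 4 * (k * t)), by positivity, by field_simp⟩
  have hη1 : η ≤ 1 := by
    have : 0 ≤ η * (4 * (k * t)) := by positivity
    linarith
  obtain ⟨δ, hδd⟩ : ∃ δ : ℝ, δ = η ^ 2 ^ k := ⟨_, rfl⟩
  have hδ : 0 < δ := by rw [hδd]; positivity
  obtain ⟨c, hcd⟩ : ∃ c : ℝ, c = δ ^ 2 / (128 * (2 * (k : ℝ) + 1) ^ 2) := ⟨_, rfl⟩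
  have hc : 0 < c := by rw [hcd]; positivity
  obtain ⟨N, hNd⟩ : ∃ N : ℕ,
    N = t + 1 + Fintype.card (PartIdx k t) + Fintype.card (PolyadIdx k t) := ⟨_, rfl⟩
  refine ⟨min (δ / 8 / 2 ^ k) (min 1 (c / 2)), lt_min (by positivity) (lt_min one_pos
    (by positivity)), fun ε hε hε₁ => ?_⟩
  have hεδ : 2 ^ k * ε ≤ δ / 8 := by
    rw [mul_comm, ← le_div_iff₀ (by positivity)]
    exact hε₁.trans (min_le_left _ _)
  have hε1 : ε ≤ 1 := hε₁.trans ((min_le_right _ _).trans (min_le_left _ _))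
  have hεc : ε ≤ c / 2 := hε₁.trans ((min_le_right _ _).trans (min_le_right _ _))
  obtain ⟨q₀, hq₀⟩ := exists_nat_ge
    ((t : ℝ) + 1 / η + 16 * (2 * (k : ℝ) + 1) ^ 2 / δ + 1 / ε + 2 * N / c)
  refine ⟨q₀, fun q n hq hqn V _ W hW a hat d hd H _ P hPW hP => ?_⟩
  subst hPW
  have hqR : (t : ℝ) + 1 / η + 16 * (2 * (k : ℝ) + 1) ^ 2 / δ + 1 / ε + 2 * N / c ≤ q :=
    hq₀.trans (by exact_mod_cast hq)
  have p1 : 0 < 1 / η := by positivity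
  have p2 : 0 < 16 * (2 * (k : ℝ) + 1) ^ 2 / δ := by positivity
  have p3 : 0 < 1 / ε := by positivity
  have p4 : 0 ≤ 2 * N / c := by positivity
  have hqt : t ≤ q := by exact_mod_cast (by linarith : (t : ℝ) ≤ q)
  have hq0 : (0:ℝ) < q := by linarith
  have hn : (q : ℝ) ≤ P.gnd.card := by rw [hW]; exact_mod_cast hqn.le
  have hgn : P.gnd.Nonempty := card_pos.1 (by omega)
  have hqη : 1 / (q : ℝ) ≤ η := by
    rw [div_le_comm₀ hq0 hη0]; linarith
  have hbad := LabFam.card_not_goodSample_le (t := t) hP hd hk hη0 hη1 hε.le (by omega : q ≤ P.gnd.card)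
    hgn (by rw [div_le_comm₀ (hq0.trans_le hn) hε]; linarith) (hδd ▸ hεδ)
    (by rw [← hδd]; linarith)
  rw [← hNd, ← hδd, ← hcd, ← mul_assoc] at hbad
  refine one_sub_mul_card_le (fun Q hQ hQg => ?_) (hbad.trans
    (mul_le_mul_of_nonneg_right ?_ (Nat.cast_nonneg _)))
  · have hgood : P.GoodSample k t a d H η Q := by
      by_contra h
      exact hQg (mem_filter.2 ⟨hQ, h⟩)
    obtain ⟨hQs, hQc⟩ := mem_powersetCard.1 hQ
    have hle : η + 2 * (k * (t * (η + 1 / Q.card))) ≤ η₂ := by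
      rw [hQc, ← hη]
      have : (k : ℝ) * (t * (η + 1 / q)) ≤ k * (t * (η + η)) := by gcongr
      linarith
    refine hgood.exists_equitPartition hP.1 hQs hd hk ht hat (hQc ▸ hqt) hη0.le hε'
      (half_pos hβ) (hle.trans hη₂ε) ?_
    rw [← hβd]
    have : 2 ^ k * (η + 2 * (k * (t * (η + 1 / (Q.card : ℝ))))) ≤ 2 ^ k * η₂ := by gcongr
    linarith
  · have hN : (N : ℝ) ≤ Real.exp (c / 2 * q) := by
      have h1 : 2 * (N : ℝ) / c ≤ q := by linarith
      rw [div_le_iff₀ hc] at h1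
      linarith [Real.add_one_le_exp (c / 2 * q)]
    have hε3 : ε ^ 3 ≤ c / 2 := (pow_le_of_le_one hε.le hε1 (by norm_num)).trans hεc
    calc (N : ℝ) * Real.exp (-c * q) ≤ Real.exp (c / 2 * q) * Real.exp (-c * q) := by gcongr
      _ = Real.exp (-(c / 2 * q)) := by rw [← Real.exp_add]; congr 1; ring
      _ ≤ _ := Real.exp_le_exp.2 (neg_le_neg (by gcongr))

end HypReg
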